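/- Quantitative strong maximum principle with right-hand side, in the unit ball. For every integer n ≥ 2, reals 0 < λ ≤ Λ, exponents q > n and p with n ≤ p ≤ q, d₀ ∈ (0,1/4], and K > 0, there exist constants ε > 0, c > 0, C > 0 such that the following holds. Let b, f : B₁ → ℝ be continuous with b ≥ 0 and ‖b‖_{L^q(B₁)} ≤ K, and let u be a C² function on B₁ with u ≥ 0 and L⁻[u] ≤ f in B₁. Then c·(∫_{B₁} (f⁻(x))^ε dx)^{1/ε} ≤ inf_{x ∈ B₁} u(x)/(1−|x|) + C·‖f⁺‖_{L^{p,q}(B₁)}, where ‖f‖_{L^{p,q}(B₁)} = ‖f‖_{L^p(B₁)} + ‖f‖_{L^q({x ∈ B₁ : 1−|x| < d₀})} and the ε-integral is a Lebesgue integral with values in [0,+∞]. -/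

import Mathlib

open MeasureTheory
open scoped ENNReal

/-- The Pucci minimal extremal operator `𝓜⁻(M)` with ellipticity constants `lam ≤ Lam`:
the infimum of `tr(A*M)` over symmetric matrices `A` with `lam•I ≤ A ≤ Lam•I`. -/
noncomputable def pucciMinus (n : ℕ) (lam Lam : ℝ) (M : Matrix (Fin n) (Fin n) ℝ) : ℝ :=
  sInf { t : ℝ | ∃ A : Matrix (Fin n) (Fin n) ℝ, A.IsSymm ∧
    (A - lam • (1 : Matrix (Fin n) (Fin n) ℝ)).PosSemidef ∧
    (Lam • (1 : Matrix (Fin n) (Fin n) ℝ) - A).PosSemidef ∧ t = (A * M).trace }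

/-- The Pucci maximal extremal operator `𝓜⁺(M)`. -/
noncomputable def pucciPlus (n : ℕ) (lam Lam : ℝ) (M : Matrix (Fin n) (Fin n) ℝ) : ℝ :=
  sSup { t : ℝ | ∃ A : Matrix (Fin n) (Fin n) ℝ, A.IsSymm ∧
    (A - lam • (1 : Matrix (Fin n) (Fin n) ℝ)).PosSemidef ∧
    (Lam • (1 : Matrix (Fin n) (Fin n) ℝ) - A).PosSemidef ∧ t = (A * M).trace }

/-- The Hessian matrix `D²u(x)` of `u` at `x`. -/
noncomputable def hess (n : ℕ) (u : EuclideanSpace ℝ (Fin n) → ℝ)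
    (x : EuclideanSpace ℝ (Fin n)) : Matrix (Fin n) (Fin n) ℝ :=
  fun i j => fderiv ℝ (fun y => fderiv ℝ u y (EuclideanSpace.single j (1 : ℝ))) x
    (EuclideanSpace.single i (1 : ℝ))

/-- The euclidean norm `|Du(x)|` of the gradient of `u` at `x`. -/
noncomputable def gradNorm (n : ℕ) (u : EuclideanSpace ℝ (Fin n) → ℝ)
    (x : EuclideanSpace ℝ (Fin n)) : ℝ := ‖fderiv ℝ u x‖

/-- The `L^p` norm `(∫_E |g|^p)^(1/p)`, as a Lebesgue integral valued in `[0,∞]`. -/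
noncomputable def LpNormE (n : ℕ) (p : ℝ) (g : EuclideanSpace ℝ (Fin n) → ℝ)
    (E : Set (EuclideanSpace ℝ (Fin n))) : ℝ≥0∞ :=
  (∫⁻ x in E, ENNReal.ofReal (|g x| ^ p)) ^ (1 / p)

/-- The last (`n`-th) coordinate `x_n` of a point of `ℝⁿ`. -/
def lastC (n : ℕ) (hn : 1 ≤ n) (x : EuclideanSpace ℝ (Fin n)) : ℝ := x ⟨n - 1, by omega⟩

/-- The open half-ball `B_R⁺ = {|x| < R, x_n > 0}`. -/
def halfBall (n : ℕ) (hn : 1 ≤ n) (R : ℝ) : Set (EuclideanSpace ℝ (Fin n)) :=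
  {x | ‖x‖ < R ∧ 0 < lastC n hn x}

/-- The flat boundary part `B_R⁰ = {|x| ≤ R, x_n = 0}`. -/
def flatB (n : ℕ) (hn : 1 ≤ n) (R : ℝ) : Set (EuclideanSpace ℝ (Fin n)) :=
  {x | ‖x‖ ≤ R ∧ lastC n hn x = 0}

/-- The norm `‖g‖_{L^{p,q}(B_R⁺)} = ‖g‖_{L^p(B_R⁺)} + ‖g‖_{L^q(B_R⁺ ∩ {x_n < d0})}`. -/
noncomputable def LpqNormHB (n : ℕ) (hn : 1 ≤ n) (p q d0 R : ℝ)
    (g : EuclideanSpace ℝ (Fin n) → ℝ) : ℝ≥0∞ :=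
  LpNormE n p g (halfBall n hn R) +
    LpNormE n q g {x ∈ halfBall n hn R | lastC n hn x < d0}

/-- The open cube `Q_ρ` of side `ρ` centered at `(0,…,0,ρ/2)`. -/
def cubeQ (n : ℕ) (hn : 1 ≤ n) (ρ : ℝ) : Set (EuclideanSpace ℝ (Fin n)) :=
  {x | (∀ i : Fin n, i.1 ≠ n - 1 → |x i| < ρ / 2) ∧ 0 < lastC n hn x ∧ lastC n hn x < ρ}

/-- The norm `‖g‖_{L^{p,q}(Q₂)} = ‖g‖_{L^p(Q₂)} + ‖g‖_{L^q(Q₂ ∩ {x_n < d0})}`. -/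
noncomputable def LpqNormQ (n : ℕ) (hn : 1 ≤ n) (p q d0 : ℝ)
    (g : EuclideanSpace ℝ (Fin n) → ℝ) : ℝ≥0∞ :=
  LpNormE n p g (cubeQ n hn 2) +
    LpNormE n q g {x ∈ cubeQ n hn 2 | lastC n hn x < d0}

namespace QSMP

/-- admissible coefficient matrices -/
def Adm (n : ℕ) (lam Lam : ℝ) (A : Matrix (Fin n) (Fin n) ℝ) : Prop :=
  A.IsSymm ∧ (A - lam • (1 : Matrix (Fin n) (Fin n) ℝ)).PosSemidef ∧
    (Lam • (1 : Matrix (Fin n) (Fin n) ℝ) - A).PosSemidef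

/-- `𝓜⁻(M) ≤ t` in approximate form -/
def PL (n : ℕ) (lam Lam : ℝ) (M : Matrix (Fin n) (Fin n) ℝ) (t : ℝ) : Prop :=
  ∀ ε : ℝ, 0 < ε → ∃ A, Adm n lam Lam A ∧ (A * M).trace < t + ε

variable {n : ℕ} {lam Lam : ℝ}

lemma PL_of_pucci (hL : lam ≤ Lam) {M : Matrix (Fin n) (Fin n) ℝ} {t : ℝ}
    (h : pucciMinus n lam Lam M ≤ t) : PL n lam Lam M t := by
  intro ε hε
  have hne : { t : ℝ | ∃ A : Matrix (Fin n) (Fin n) ℝ, A.IsSymm ∧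
    (A - lam • (1 : Matrix (Fin n) (Fin n) ℝ)).PosSemidef ∧
    (Lam • (1 : Matrix (Fin n) (Fin n) ℝ) - A).PosSemidef ∧ t = (A * M).trace }.Nonempty := by
    refine ⟨_, lam • (1 : Matrix (Fin n) (Fin n) ℝ), ?_, ?_, ?_, rfl⟩
    · exact (Matrix.isSymm_one).smul lam
    · rw [sub_self]; exact Matrix.PosSemidef.zero
    · rw [← sub_smul]
      exact Matrix.PosSemidef.one.smul (sub_nonneg.2 hL)
  obtain ⟨s, ⟨A, h1, h2, h3, h4⟩, hs⟩ := exists_lt_of_csInf_lt hne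
    (show sInf _ < t + ε from lt_of_le_of_lt h (by linarith))
  exact ⟨A, ⟨h1, h2, h3⟩, h4 ▸ hs⟩

lemma trace_mul_nonneg' {A B : Matrix (Fin n) (Fin n) ℝ} (hA : A.PosSemidef)
    (hB : B.PosSemidef) : 0 ≤ (A * B).trace := by
  have h := (hA.hadamard hB.transpose).dotProduct_mulVec_nonneg (fun _ => (1 : ℝ))
  simpa [Matrix.trace, Matrix.mul_apply, dotProduct, Matrix.mulVec, Matrix.hadamard] using h

lemma Adm.trace_ge {A B : Matrix (Fin n) (Fin n) ℝ} (hA : Adm n lam Lam A) (hB : B.PosSemidef) :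
    lam * B.trace ≤ (A * B).trace := by
  have h := trace_mul_nonneg' hA.2.1 hB
  rw [sub_mul, Matrix.trace_sub] at h
  simp at h
  linarith

lemma Adm.trace_le {A : Matrix (Fin n) (Fin n) ℝ} (hA : Adm n lam Lam A) :
    A.trace ≤ n * Lam := by
  have h := hA.2.2.trace_nonneg
  rw [Matrix.trace_sub] at h
  simp at h
  linarith [mul_comm (n:ℝ) Lam]

lemma Adm.trace_nonneg {A : Matrix (Fin n) (Fin n) ℝ} (hlam : 0 ≤ lam) (hA : Adm n lam Lam A) :
    0 ≤ A.trace := by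
  have h := hA.2.1.trace_nonneg
  rw [Matrix.trace_sub] at h
  simp at h
  nlinarith [mul_nonneg hlam (Nat.cast_nonneg (α := ℝ) n)]

/-- lower bound for barrier matrices -/
lemma Adm.barrier {A : Matrix (Fin n) (Fin n) ℝ} (hlam : 0 ≤ lam) (hA : Adm n lam Lam A)
    (v : Fin n → ℝ) {α β : ℝ} (hα : 0 ≤ α) (hβ : 0 ≤ β) :
    lam * α * (∑ i, v i ^ 2) - β * (n * Lam) ≤
      (A * (α • Matrix.vecMulVec v v - β • (1 : Matrix (Fin n) (Fin n) ℝ))).trace := by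
  have h1 : (Matrix.vecMulVec v v).PosSemidef := by
    have := Matrix.posSemidef_vecMulVec_self_star v
    simpa using this
  have h2 := hA.trace_ge h1
  have h3 := hA.trace_le
  have h4 : (Matrix.vecMulVec v v).trace = ∑ i, v i ^ 2 := by
    simp [Matrix.trace, Matrix.vecMulVec, sq]
  rw [h4] at h2
  rw [mul_sub, Matrix.trace_sub]
  simp
  nlinarith

lemma PL.sub {M N : Matrix (Fin n) (Fin n) ℝ} {t c : ℝ} (h : PL n lam Lam M t)
    (hN : ∀ A, Adm n lam Lam A → c ≤ (A * N).trace) : PL n lam Lam (M - N) (t - c) := by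
  intro ε hε
  obtain ⟨A, hA, h1⟩ := h ε hε
  refine ⟨A, hA, ?_⟩
  rw [mul_sub, Matrix.trace_sub]
  linarith [hN A hA]

lemma PL.mono {M : Matrix (Fin n) (Fin n) ℝ} {t s : ℝ} (h : PL n lam Lam M t)
    (hs : t ≤ s) : PL n lam Lam M s := by
  intro ε hε
  obtain ⟨A, hA, h1⟩ := h ε hε
  exact ⟨A, hA, by linarith⟩

lemma PL.trace {M : Matrix (Fin n) (Fin n) ℝ} {t κ : ℝ} (h : PL n lam Lam M t)
    (hκ : 0 ≤ κ) (hM : (M + κ • (1 : Matrix (Fin n) (Fin n) ℝ)).PosSemidef) :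
    lam * (M + κ • (1 : Matrix (Fin n) (Fin n) ℝ)).trace ≤ t + n * Lam * κ := by
  refine le_of_forall_pos_le_add fun ε hε => ?_
  obtain ⟨A, hA, h1⟩ := h ε hε
  have h2 := hA.trace_ge hM
  have h3 : (A * (M + κ • (1 : Matrix (Fin n) (Fin n) ℝ))).trace = (A * M).trace + κ * A.trace := by
    rw [mul_add, Matrix.trace_add]; simp
  rw [h3] at h2
  nlinarith [hA.trace_le]

lemma det_le_trace_pow {M : Matrix (Fin n) (Fin n) ℝ} (hM : M.PosSemidef) :
    |M.det| ≤ M.trace ^ n := by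
  rw [abs_of_nonneg hM.det_nonneg, hM.1.det_eq_prod_eigenvalues, hM.1.trace_eq_sum_eigenvalues]
  simp only [RCLike.ofReal_real_eq_id, id]
  calc ∏ i, hM.1.eigenvalues i ≤ ∏ _i : Fin n, ∑ j, hM.1.eigenvalues j := by
        refine Finset.prod_le_prod (fun i _ => hM.eigenvalues_nonneg i) fun i _ => ?_
        exact Finset.single_le_sum (f := fun i => hM.1.eigenvalues i) (fun i _ => hM.eigenvalues_nonneg i) (Finset.mem_univ i)
    _ = _ := by simp

end QSMP

namespace QSMP

variable {n : ℕ} {lam Lam : ℝ}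

/-- shorthand -/
abbrev EE (n : ℕ) := EuclideanSpace ℝ (Fin n)

lemma hess_eq {u : EE n → ℝ} {x : EE n} (hu : ContDiffAt ℝ 2 u x) (i j : Fin n) :
    hess n u x i j = fderiv ℝ (fderiv ℝ u) x (EuclideanSpace.single i (1:ℝ))
      (EuclideanSpace.single j (1:ℝ)) := by
  unfold hess
  have h1 : DifferentiableAt ℝ (fderiv ℝ u) x :=
    (hu.fderiv_right (m := 1) (by norm_num)).differentiableAt (by norm_num)
  rw [fderiv_clm_apply h1 (by fun_prop)]
  simp

lemma sum_single (v : EE n) : v = ∑ i, v i • (EuclideanSpace.single i (1:ℝ)) := by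
  ext j
  simp [Finset.sum_apply, Pi.single_apply]

lemma hess_symm {u : EE n → ℝ} {x : EE n} (hu : ContDiffAt ℝ 2 u x) :
    (hess n u x).IsSymm := by
  ext i j
  rw [Matrix.transpose_apply, hess_eq hu, hess_eq hu]
  exact (hu.isSymmSndFDerivAt (by simp)) _ _

lemma hess_quad {u : EE n → ℝ} {x : EE n} (hu : ContDiffAt ℝ 2 u x) (v : EE n) :
    ∑ i, ∑ j, v i * hess n u x i j * v j = fderiv ℝ (fderiv ℝ u) x v v := by
  conv_rhs => rw [sum_single v]
  simp only [map_sum, map_smul, sum_apply, smul_apply, smul_eq_mul,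
    hess_eq hu, Finset.mul_sum]
  rw [Finset.sum_comm]
  refine Finset.sum_congr rfl fun i _ => Finset.sum_congr rfl fun j _ => by ring

lemma hess_add {u v : EE n → ℝ} {x : EE n} (hu : ContDiffAt ℝ 2 u x) (hv : ContDiffAt ℝ 2 v x) :
    hess n (fun y => u y + v y) x = hess n u x + hess n v x := by
  have h1 : DifferentiableAt ℝ (fderiv ℝ u) x :=
    (hu.fderiv_right (m := 1) (by norm_num)).differentiableAt (by norm_num)
  have h2 : DifferentiableAt ℝ (fderiv ℝ v) x :=
    (hv.fderiv_right (m := 1) (by norm_num)).differentiableAt (by norm_num)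
  have hev : fderiv ℝ (fun y => u y + v y) =ᶠ[nhds x] fun y => fderiv ℝ u y + fderiv ℝ v y := by
    filter_upwards [hu.eventually (by simp), hv.eventually (by simp)] with y h3 h4
    exact fderiv_fun_add (h3.differentiableAt (by norm_num)) (h4.differentiableAt (by norm_num))
  ext i j
  rw [Matrix.add_apply, hess_eq hu, hess_eq hv, hess_eq (hu.add hv), hev.fderiv_eq,
    fderiv_fun_add h1 h2]
  simp

lemma hess_const_mul {u : EE n → ℝ} {x : EE n} (hu : ContDiffAt ℝ 2 u x) (c : ℝ) :
    hess n (fun y => c * u y) x = c • hess n u x := by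
  have h1 : DifferentiableAt ℝ (fderiv ℝ u) x :=
    (hu.fderiv_right (m := 1) (by norm_num)).differentiableAt (by norm_num)
  have hev : fderiv ℝ (fun y => c * u y) =ᶠ[nhds x] fun y => c • fderiv ℝ u y := by
    filter_upwards [hu.eventually (by simp)] with y h3
    exact fderiv_const_mul (h3.differentiableAt (by norm_num)) c
  ext i j
  rw [Matrix.smul_apply, hess_eq hu, hess_eq (contDiffAt_const.mul hu), hev.fderiv_eq,
    fderiv_fun_const_smul h1]
  simp

/-- the radial functions -/
lemma radial_contDiffAt {g : ℝ → ℝ} {x0 x : EE n} (hg : ContDiffAt ℝ 2 g (‖x - x0‖ ^ 2)) :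
    ContDiffAt ℝ 2 (fun y => g (‖y - x0‖ ^ 2)) x := by
  have : ContDiffAt ℝ 2 (fun y : EE n => ‖y - x0‖ ^ 2) x :=
    (contDiffAt_id.sub contDiffAt_const).norm_sq ℝ
  exact ContDiffAt.comp (g := g) x hg this

lemma radial_fderiv {g : ℝ → ℝ} {x0 x : EE n} (hg : DifferentiableAt ℝ g (‖x - x0‖ ^ 2)) :
    fderiv ℝ (fun y => g (‖y - x0‖ ^ 2)) x
      = (2 * deriv g (‖x - x0‖ ^ 2)) • innerSL ℝ (x - x0) := by
  have h1 : HasFDerivAt (fun y : EE n => ‖y - x0‖ ^ 2) (2 • (innerSL ℝ (x - x0))) x := by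
    have := ((hasFDerivAt_id x).sub_const x0).norm_sq
    simpa using this
  have h2 : HasFDerivAt (fun y => g (‖y - x0‖ ^ 2)) _ x := hg.hasDerivAt.comp_hasFDerivAt x h1
  rw [h2.fderiv]
  ext v
  simp
  ring

lemma radial_hess {g : ℝ → ℝ} {x0 x : EE n} (hg : ContDiffAt ℝ 2 g (‖x - x0‖ ^ 2)) :
    hess n (fun y => g (‖y - x0‖ ^ 2)) x
      = (4 * deriv (deriv g) (‖x - x0‖ ^ 2)) • Matrix.vecMulVec (fun i => (x - x0) i) (fun i => (x - x0) i)
        + (2 * deriv g (‖x - x0‖ ^ 2)) • (1 : Matrix (Fin n) (Fin n) ℝ) := by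
  have hg' : DifferentiableAt ℝ (deriv g) (‖x - x0‖ ^ 2) := by
    have : ContDiffAt ℝ 1 (deriv g) (‖x - x0‖ ^ 2) := by
      have h0 := hg.fderiv_right (m := 1) (by norm_num)
      have : deriv g = fun s => fderiv ℝ g s 1 := by ext s; simp
      rw [this]
      exact h0.clm_apply contDiffAt_const
    exact this.differentiableAt (by norm_num)
  have hc : ContinuousAt (fun y : EE n => ‖y - x0‖ ^ 2) x := by fun_prop
  have hev : ∀ j : Fin n, (fun y => fderiv ℝ (fun y => g (‖y - x0‖ ^ 2)) y (EuclideanSpace.single j (1:ℝ)))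
      =ᶠ[nhds x] fun y => (2 * deriv g (‖y - x0‖ ^ 2)) * (y - x0) j := by
    intro j
    filter_upwards [hc.eventually (hg.eventually (by simp))] with y hy
    rw [radial_fderiv (hy.differentiableAt (by norm_num))]
    simp [EuclideanSpace.inner_single_right]
  have h1 : HasFDerivAt (fun y : EE n => ‖y - x0‖ ^ 2) (2 • (innerSL ℝ (x - x0))) x := by
    have := ((hasFDerivAt_id x).sub_const x0).norm_sq
    simpa using this
  have h2 := (hg'.hasDerivAt.comp_hasFDerivAt x h1).const_mul 2
  ext i j
  unfold hess
  rw [(hev j).fderiv_eq]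
  have h3 : HasFDerivAt (fun y : EE n => (y - x0) j) (EuclideanSpace.proj j : EE n →L[ℝ] ℝ) x := by
    have := (EuclideanSpace.proj j : EE n →L[ℝ] ℝ).hasFDerivAt (x := x)
    have h4 := this.sub_const (x0 j)
    exact h4
  have h5 := h2.mul h3
  have h6 : fderiv ℝ (fun y : EE n => (2 * deriv g (‖y - x0‖ ^ 2)) * (y - x0) j) x = _ := h5.fderiv
  rw [h6]
  have hp : (EuclideanSpace.proj j : EE n →L[ℝ] ℝ) (EuclideanSpace.single i (1:ℝ))
      = (1 : Matrix (Fin n) (Fin n) ℝ) i j := by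
    simp [Matrix.one_apply, Pi.single_apply, eq_comm]
  have hi : (innerSL ℝ (x - x0)) (EuclideanSpace.single i (1:ℝ)) = (x - x0) i := by
    simp [EuclideanSpace.inner_single_right]
  rw [Matrix.add_apply, Matrix.smul_apply, Matrix.smul_apply, Matrix.vecMulVec_apply]
  simp only [add_apply, smul_apply, smul_eq_mul, hp, Function.comp_apply, nsmul_eq_mul, Nat.cast_ofNat, hi]
  ring

/-- contact set from below with paraboloids of opening `κ` -/
def Tch (n : ℕ) (w : EE n → ℝ) (U : Set (EE n)) (κ : ℝ) : Set (EE n) :=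
  {x | x ∈ U ∧ ∀ z ∈ U, w x + fderiv ℝ w x (z - x) - κ / 2 * ‖z - x‖ ^ 2 ≤ w z}

lemma Tch_mono {w : EE n → ℝ} {U : Set (EE n)} {κ κ' : ℝ} (h : κ ≤ κ') :
    Tch n w U κ ⊆ Tch n w U κ' := by
  intro x hx
  refine ⟨hx.1, fun z hz => ?_⟩
  have := hx.2 z hz
  nlinarith [sq_nonneg ‖z - x‖]

lemma Tch_closed {w : EE n → ℝ} {U Ω : Set (EE n)} (hΩ : IsOpen Ω) (hU : IsClosed U) (hUΩ : U ⊆ Ω)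
    (hw : ContDiffOn ℝ 2 w Ω) (κ : ℝ) : IsClosed (Tch n w U κ) := by
  have hd : ContinuousOn (fderiv ℝ w) U :=
    (hw.continuousOn_fderiv_of_isOpen hΩ (by norm_num)).mono hUΩ
  have hc : ContinuousOn w U := hw.continuousOn.mono hUΩ
  have : Tch n w U κ = U ∩ ⋂ z ∈ U, {x | x ∈ U ∧ w x + fderiv ℝ w x (z - x) - κ / 2 * ‖z - x‖ ^ 2 ≤ w z} := by
    ext x
    simp only [Tch, Set.mem_ofPred_eq, Set.mem_inter_iff, Set.mem_iInter]
    constructor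
    · rintro ⟨h1, h2⟩; exact ⟨h1, fun z hz => ⟨h1, h2 z hz⟩⟩
    · rintro ⟨h1, h2⟩; exact ⟨h1, fun z hz => (h2 z hz).2⟩
  rw [this]
  refine hU.inter (isClosed_biInter fun z _ => ?_)
  have hco : ContinuousOn (fun x => w x + fderiv ℝ w x (z - x) - κ / 2 * ‖z - x‖ ^ 2) U := by
    have : ContinuousOn (fun x => fderiv ℝ w x (z - x)) U := hd.clm_apply (by fun_prop)
    exact (hc.add this).sub (by fun_prop)
  exact hco.preimage_isClosed_of_isClosed hU isClosed_Iic

lemma second_deriv_test {φ φ' : ℝ → ℝ} {c : ℝ} (h : ∀ᶠ t in nhds 0, HasDerivAt φ (φ' t) t)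
    (h2 : HasDerivAt φ' c 0) (h0 : φ' 0 = 0) (hmin : IsLocalMin φ 0) : 0 ≤ c := by
  by_contra hneg
  push Not at hneg
  have hdev : deriv φ =ᶠ[nhds 0] φ' := by
    filter_upwards [h] with t ht using ht.deriv
  have hdd : deriv (deriv φ) 0 = c := by rw [hdev.deriv_eq, h2.deriv]
  have hd0 : deriv φ 0 = 0 := by rw [hdev.eq_of_nhds]; exact h0
  have hmax : IsLocalMax φ 0 :=
    isLocalMax_of_deriv_deriv_neg (by rw [hdd]; exact hneg) hd0 h.self_of_nhds.continuousAt
  have hconst : φ =ᶠ[nhds 0] fun _ => φ 0 := by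
    filter_upwards [hmax, hmin] with t h1 h2 using le_antisymm h1 h2
  have h0 : deriv (deriv φ) 0 = 0 := by
    rw [(hconst.deriv).deriv_eq]; simp
  rw [hdd] at h0
  linarith

lemma Tch_psd {w : EE n → ℝ} {U : Set (EE n)} {κ : ℝ} {x : EE n} (hx : x ∈ Tch n w U κ)
    (hU : U ∈ nhds x) (hw : ContDiffAt ℝ 2 w x) :
    (hess n w x + κ • (1 : Matrix (Fin n) (Fin n) ℝ)).PosSemidef := by
  refine Matrix.PosSemidef.of_dotProduct_mulVec_nonneg ?_ fun v0 => ?_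
  · have h1 := hess_symm hw
    have h2 : (hess n w x + κ • (1 : Matrix (Fin n) (Fin n) ℝ)).IsSymm := h1.add (Matrix.isSymm_one.smul κ)
    rw [Matrix.IsHermitian, Matrix.conjTranspose_eq_transpose_of_trivial]
    exact h2
  set v : EE n := WithLp.toLp 2 v0 with hv
  have key : 0 ≤ fderiv ℝ (fderiv ℝ w) x v v + κ * ‖v‖ ^ 2 := by
    have hl : ∀ t : ℝ, HasDerivAt (fun t : ℝ => x + t • v) v t := by
      intro t
      simpa using ((hasDerivAt_id t).smul_const v).const_add x
    have hlc : Filter.Tendsto (fun t : ℝ => x + t • v) (nhds 0) (nhds x) := by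
      have := (hl 0).continuousAt.tendsto
      simpa using this
    have hx0 : x + (0:ℝ) • v = x := by simp
    have hev : ∀ᶠ t : ℝ in nhds 0, ContDiffAt ℝ 2 w (x + t • v) :=
      hlc.eventually (hw.eventually (by simp))
    refine second_deriv_test (φ := fun t => w (x + t • v) - t * fderiv ℝ w x v + κ / 2 * t ^ 2 * ‖v‖ ^ 2)
      (φ' := fun t => fderiv ℝ w (x + t • v) v - fderiv ℝ w x v + κ * t * ‖v‖ ^ 2) ?_ ?_ ?_ ?_
    · filter_upwards [hev] with t ht
      have h1 : HasDerivAt (fun t : ℝ => w (x + t • v)) (fderiv ℝ w (x + t • v) v) t :=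
        (ht.differentiableAt (by norm_num)).hasFDerivAt.comp_hasDerivAt t (hl t)
      have h2 := (hasDerivAt_id' t).mul_const (fderiv ℝ w x v)
      have h3 : HasDerivAt (fun t : ℝ => κ / 2 * t ^ 2 * ‖v‖ ^ 2) (κ * t * ‖v‖ ^ 2) t := by
        have := (((hasDerivAt_id' t).pow 2).const_mul (κ / 2)).mul_const (‖v‖ ^ 2)
        refine this.congr_deriv ?_
        norm_num
        left
        ring
      have h4 := (h1.sub h2).add h3
      rw [one_mul] at h4
      exact h4
    · have h1 : DifferentiableAt ℝ (fderiv ℝ w) (x + (0:ℝ) • v) := by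
        rw [hx0]
        exact (hw.fderiv_right (m := 1) (by norm_num)).differentiableAt (by norm_num)
      have h2 : HasDerivAt (fun t : ℝ => fderiv ℝ w (x + t • v)) (fderiv ℝ (fderiv ℝ w) x v) 0 := by
        have := h1.hasFDerivAt.comp_hasDerivAt 0 (hl 0)
        rw [hx0] at this
        exact this
      have h2' := h2.clm_apply (hasDerivAt_const (0:ℝ) v)
      have h3 := ((hasDerivAt_id' (0:ℝ)).const_mul κ).mul_const (‖v‖ ^ 2)
      refine ((h2'.sub_const (fderiv ℝ w x v)).add h3).congr_deriv ?_
      simp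
    · simp
    · have : ∀ᶠ t : ℝ in nhds 0, x + t • v ∈ U := hlc.eventually hU
      filter_upwards [this] with t ht
      have h := hx.2 _ ht
      simp only [add_sub_cancel_left, map_smul, smul_eq_mul, norm_smul, mul_pow,
        Real.norm_eq_abs, sq_abs] at h ⊢
      simp
      linarith
  rw [← hess_quad hw] at key
  have hnorm : ‖v‖ ^ 2 = ∑ i, v0 i ^ 2 := by
    rw [EuclideanSpace.norm_sq_eq]; simp [hv]
  rw [hnorm] at key
  have : star v0 ⬝ᵥ (hess n w x + κ • (1 : Matrix (Fin n) (Fin n) ℝ)).mulVec v0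
      = ∑ i, ∑ j, v i * hess n w x i j * v j + κ * ∑ i, v0 i ^ 2 := by
    rw [Matrix.add_mulVec, dotProduct_add, Matrix.smul_mulVec, Matrix.one_mulVec]
    simp [dotProduct, Matrix.mulVec, Finset.mul_sum, hv, sq, mul_assoc]
    refine Finset.sum_congr rfl fun i _ => by ring
  rw [this]; exact key

/-- the gradient map shifted by `κ` -/
noncomputable def Tmap (n : ℕ) (w : EE n → ℝ) (κ : ℝ) (z : EE n) : EE n :=
  κ • z + (InnerProductSpace.toDual ℝ (EE n)).symm (fderiv ℝ w z)

lemma Tmap_norm {w : EE n → ℝ} {κ : ℝ} {z : EE n} : ‖fderiv ℝ w z‖ = ‖Tmap n w κ z - κ • z‖ := by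
  simp [Tmap]

lemma Tmap_det {w : EE n → ℝ} {z : EE n} (hw : ContDiffAt ℝ 2 w z) (κ : ℝ) :
    ∃ L : EE n →L[ℝ] EE n, HasFDerivAt (Tmap n w κ) L z ∧
      L.det = (hess n w z + κ • (1 : Matrix (Fin n) (Fin n) ℝ)).det := by
  have h1 : HasFDerivAt (fderiv ℝ w) (fderiv ℝ (fderiv ℝ w) z) z :=
    ((hw.fderiv_right (m := 1) (by norm_num)).differentiableAt (by norm_num)).hasFDerivAt
  let D : (EE n →L[ℝ] ℝ) →L[ℝ] EE n :=
    ((InnerProductSpace.toDual ℝ (EE n)).symm : (EE n →L[ℝ] ℝ) ≃ₗᵢ⋆[ℝ] EE n).toLinearIsometry.toContinuousLinearMap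
  have h2 : HasFDerivAt (fun z => D (fderiv ℝ w z)) (D.comp (fderiv ℝ (fderiv ℝ w) z)) z :=
    D.hasFDerivAt.comp z h1
  refine ⟨κ • ContinuousLinearMap.id ℝ (EE n) + D.comp (fderiv ℝ (fderiv ℝ w) z), ?_, ?_⟩
  · exact ((hasFDerivAt_id z).const_smul κ).add h2
  · set L := κ • ContinuousLinearMap.id ℝ (EE n) + D.comp (fderiv ℝ (fderiv ℝ w) z)
    have : L.det = LinearMap.det (L : EE n →ₗ[ℝ] EE n) := rfl
    rw [this, ← LinearMap.det_toMatrix (EuclideanSpace.basisFun (Fin n) ℝ).toBasis,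
      ← Matrix.det_transpose]
    congr 1
    ext i j
    rw [Matrix.transpose_apply, LinearMap.toMatrix_apply, Matrix.add_apply, hess_eq hw]
    have hD : ∀ ℓ : EE n →L[ℝ] ℝ, (D ℓ) j = ℓ (EuclideanSpace.single j 1) := by
      intro ℓ
      have := InnerProductSpace.toDual_symm_apply (𝕜 := ℝ) (x := (EuclideanSpace.single j 1 : EE n)) (y := ℓ)
      rw [← this, EuclideanSpace.inner_single_right]
      simp [D]
    simp [L, hD, Matrix.one_apply, eq_comm]
    ring

lemma Tch_of_min {w : EE n → ℝ} {U : Set (EE n)} {κ : ℝ} {z ξ : EE n} (hzU : U ∈ nhds z)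
    (hw : ContDiffAt ℝ 2 w z)
    (hmin : ∀ z' ∈ U, w z + κ / 2 * ‖z‖ ^ 2 - inner ℝ ξ z ≤ w z' + κ / 2 * ‖z'‖ ^ 2 - inner ℝ ξ z') :
    z ∈ Tch n w U κ ∧ Tmap n w κ z = ξ := by
  have hd := (hw.differentiableAt (by norm_num)).hasFDerivAt
  have h1 : HasFDerivAt (fun y : EE n => ‖y‖ ^ 2) (2 • (innerSL ℝ z)) z := by
    have := (hasFDerivAt_id z).norm_sq
    simpa using this
  have h2 : HasFDerivAt (fun y : EE n => inner ℝ ξ y) (innerSL ℝ ξ) z := (innerSL ℝ ξ).hasFDerivAt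
  have h3 := (hd.add (h1.const_mul (κ / 2))).sub h2
  have hlm : IsLocalMin (fun y => w y + κ / 2 * ‖y‖ ^ 2 - inner ℝ ξ y) z := by
    filter_upwards [hzU] with y hy using hmin y hy
  have h0 := hlm.hasFDerivAt_eq_zero h3
  have hDw : ∀ v, fderiv ℝ w z v = inner ℝ ξ v - κ * inner ℝ z v := by
    intro v
    have := congrArg (fun L : EE n →L[ℝ] ℝ => L v) h0
    simp at this
    linarith
  refine ⟨⟨mem_of_mem_nhds hzU, fun z' hz' => ?_⟩, ?_⟩
  · have h4 := hmin z' hz'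
    rw [hDw, inner_sub_right, inner_sub_right, real_inner_self_eq_norm_sq, @norm_sub_sq_real]
    have := real_inner_comm z z'
    rw [this]
    ring_nf at h4 ⊢
    linarith
  · unfold Tmap
    refine ext_inner_right ℝ fun v => ?_
    rw [inner_add_left, InnerProductSpace.toDual_symm_apply, hDw, inner_smul_left]
    simp

end QSMP

namespace QSMP

variable {n : ℕ} {lam Lam : ℝ}

/-- `‖g⁺‖_{L^n(E)} ≤ H` -/
def NB (n : ℕ) (g : EE n → ℝ) (E : Set (EE n)) (H : ℝ) : Prop :=
  ∫⁻ x in E, ENNReal.ofReal (g x) ^ n ≤ ENNReal.ofReal H ^ n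

/-- `n`-th root of the volume of the unit ball -/
noncomputable def om (n : ℕ) : ℝ := (volume (Metric.ball (0 : EE n) 1)).toReal ^ (1 / (n:ℝ))

/-- supersolution at a point -/
def SS (n : ℕ) (lam Lam : ℝ) (b h u : EE n → ℝ) (x : EE n) : Prop :=
  PL n lam Lam (hess n u x) (b x * ‖fderiv ℝ u x‖ + h x)

lemma om_pos : 0 < om n := by
  unfold om
  refine Real.rpow_pos_of_pos (ENNReal.toReal_pos ?_ ?_) _
  · exact (Metric.measure_ball_pos volume _ one_pos).ne'
  · exact measure_ball_lt_top.ne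

lemma vol_ball (hn : 1 ≤ n) (x : EE n) {r : ℝ} (hr : 0 ≤ r) :
    volume (Metric.ball x r) = ENNReal.ofReal (om n * r) ^ n := by
  have : Nonempty (Fin n) := ⟨⟨0, hn⟩⟩
  rw [Measure.addHaar_ball volume x hr, ENNReal.ofReal_mul om_pos.le, mul_pow, mul_comm]
  congr 1
  · rw [← ENNReal.ofReal_pow om_pos.le]
    unfold om
    rw [← Real.rpow_natCast, ← Real.rpow_mul ENNReal.toReal_nonneg, one_div_mul_cancel (by positivity),
      Real.rpow_one, ENNReal.ofReal_toReal measure_ball_lt_top.ne]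
  · rw [finrank_euclideanSpace_fin, ENNReal.ofReal_pow hr]

lemma vol_closedBall (hn : 1 ≤ n) (x : EE n) {r : ℝ} (hr : 0 ≤ r) :
    volume (Metric.closedBall x r) = ENNReal.ofReal (om n * r) ^ n := by
  have : Nonempty (Fin n) := ⟨⟨0, hn⟩⟩
  rw [Measure.addHaar_closedBall volume x hr, ← vol_ball hn x hr, Measure.addHaar_ball volume x hr]

lemma NB.mono_set {g : EE n → ℝ} {E E' : Set (EE n)} {H : ℝ} (h : NB n g E H) (hE : E' ⊆ E) :
    NB n g E' H := le_trans (lintegral_mono_set hE) h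

lemma NB.mono {g : EE n → ℝ} {E : Set (EE n)} {H H' : ℝ} (h : NB n g E H) (hH : H ≤ H') :
    NB n g E H' := le_trans h (by gcongr)

lemma NB.mono_fun {g g' : EE n → ℝ} {E : Set (EE n)} {H : ℝ} (h : NB n g E H)
    (hE : MeasurableSet E) (hg : ∀ x ∈ E, g' x ≤ g x) :
    NB n g' E H := by
  refine le_trans (setLIntegral_mono' hE fun x hx => ?_) h
  have := hg x hx
  gcongr

lemma NB.add (hn : 1 ≤ n) {g g' : EE n → ℝ} {E : Set (EE n)} {H H' : ℝ} (h : NB n g E H)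
    (h' : NB n g' E H') (hg : Measurable g) (hg' : Measurable g') (hH : 0 ≤ H) (hH' : 0 ≤ H') :
    NB n (fun x => g x + g' x) E (H + H') := by
  unfold NB at *
  have hn' : (0:ℝ) < n := by exact_mod_cast hn
  have key := ENNReal.lintegral_Lp_add_le (μ := volume.restrict E) (p := (n:ℝ))
    (f := fun x => ENNReal.ofReal (g x)) (g := fun x => ENNReal.ofReal (g' x))
    (hg.ennreal_ofReal.aemeasurable) (hg'.ennreal_ofReal.aemeasurable) (by exact_mod_cast hn)
  have root : ∀ {a : ℝ≥0∞} {H : ℝ}, a ≤ ENNReal.ofReal H ^ n → a ^ (1 / (n:ℝ)) ≤ ENNReal.ofReal H := by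
    intro a H ha
    rw [one_div, ENNReal.rpow_inv_le_iff hn', ENNReal.rpow_natCast]
    exact ha
  simp only [ENNReal.rpow_natCast, Pi.add_apply] at key
  have h3 := key.trans (add_le_add (root h) (root h'))
  rw [one_div, ENNReal.rpow_inv_le_iff hn', ENNReal.rpow_natCast, ← ENNReal.ofReal_add hH hH'] at h3
  refine le_trans (lintegral_mono fun x => ?_) h3
  have := ENNReal.ofReal_add_le (p := g x) (q := g' x)
  gcongr

lemma NB.const_mul {g : EE n → ℝ} {E : Set (EE n)} {H c : ℝ} (h : NB n g E H)
    (hc : 0 ≤ c) : NB n (fun x => c * g x) E (c * H) := by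
  unfold NB at *
  simp only [ENNReal.ofReal_mul hc, mul_pow]
  rw [lintegral_const_mul' _ _ (by simp)]
  gcongr

lemma NB.const {E : Set (EE n)} {c m : ℝ} (hc : 0 ≤ c) (hm : volume E ≤ ENNReal.ofReal m ^ n) :
    NB n (fun _ => c) E (c * m) := by
  unfold NB
  rw [setLIntegral_const, ENNReal.ofReal_mul hc, mul_pow]
  gcongr

lemma area {w : EE n → ℝ} {Ω Z : Set (EE n)} {κ H t : ℝ} {F G : EE n → ℝ} {ξ : EE n} (hn : 1 ≤ n)
    (hlam : 0 < lam) (hΩ : IsOpen Ω) (hw : ContDiffOn ℝ 2 w Ω) (hZ : MeasurableSet Z) (hZΩ : Z ⊆ Ω)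
    (hκ : 0 ≤ κ)
    (hpsd : ∀ x ∈ Z, (hess n w x + κ • (1 : Matrix (Fin n) (Fin n) ℝ)).PosSemidef)
    (hPL : ∀ x ∈ Z, PL n lam Lam (hess n w x) (F x)) (hFG : ∀ x ∈ Z, F x + n * Lam * κ ≤ G x)
    (hG : NB n G Z H) (ht : 0 ≤ t) (hH : 0 ≤ H) (hV : Metric.ball ξ t ⊆ Tmap n w κ '' Z) :
    lam * om n * t ≤ H := by
  have hc : ∀ x ∈ Z, ContDiffAt ℝ 2 w x := fun x hx => hw.contDiffAt (hΩ.mem_nhds (hZΩ hx))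
  choose! L hL1 hL2 using fun x (hx : x ∈ Z) => Tmap_det (hc x hx) κ
  have h1 := addHaar_image_le_lintegral_abs_det_fderiv volume hZ
    (fun x hx => (hL1 x hx).hasFDerivWithinAt)
  have h2 : ∫⁻ x in Z, ENNReal.ofReal |(L x).det| ≤ ∫⁻ x in Z, ENNReal.ofReal (lam⁻¹ * G x) ^ n := by
    refine setLIntegral_mono' hZ fun x hx => ?_
    have h3 := (hPL x hx).trace hκ (hpsd x hx)
    have h4 := hFG x hx
    have h5 := (hpsd x hx).trace_nonneg
    have h6 : (hess n w x + κ • (1 : Matrix (Fin n) (Fin n) ℝ)).trace ≤ lam⁻¹ * G x := by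
      rw [le_inv_mul_iff₀ hlam]; linarith
    rw [hL2 x hx, ← ENNReal.ofReal_pow (h5.trans h6)]
    refine ENNReal.ofReal_le_ofReal ((det_le_trace_pow (hpsd x hx)).trans ?_)
    gcongr
  have h3 := (measure_mono hV).trans (h1.trans (h2.trans (hG.const_mul (inv_nonneg.2 hlam.le))))
  rw [vol_ball hn _ ht] at h3
  have h4 : ENNReal.ofReal (om n * t) ≤ ENNReal.ofReal (lam⁻¹ * H) :=
    le_of_not_gt fun hlt => absurd h3 (not_le.2 (ENNReal.pow_right_strictMono (by omega) hlt))
  rw [ENNReal.ofReal_le_ofReal_iff (by positivity), le_inv_mul_iff₀ hlam] at h4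
  linarith

/-- small drift ABP estimate -/
lemma ABP {w b h : EE n → ℝ} {Ω : Set (EE n)} {x0 : EE n} {r H : ℝ} (hn : 1 ≤ n)
    (hlam : 0 < lam) (hΩ : IsOpen Ω) (hw : ContDiffOn ℝ 2 w Ω) (hr : 0 < r)
    (hB : Metric.closedBall x0 r ⊆ Ω) (hbd : ∀ x ∈ Metric.sphere x0 r, 0 ≤ w x)
    (hSS : ∀ x ∈ Metric.ball x0 r, w x < 0 → SS n lam Lam b h w x)
    (hb0 : ∀ x, 0 ≤ b x) (hbm : Measurable b) (hhm : Measurable h)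
    (hb : NB n b (Metric.ball x0 r) (lam * om n / 2)) (hh : NB n h (Metric.ball x0 r) H)
    (hH : 0 ≤ H) : ∀ x ∈ Metric.closedBall x0 r, -(8 / (lam * om n) * r * H) ≤ w x := by
  intro y hy
  by_contra hlt
  push Not at hlt
  have hom := om_pos (n := n)
  have hC : 0 < lam * om n := by positivity
  set M := - w y with hM
  have hM1 : 8 / (lam * om n) * r * H < M := by linarith
  have hM0 : 0 < M := lt_of_le_of_lt (by positivity) hM1
  set t := M / (4 * r) with ht
  have ht0 : 0 < t := by positivity
  have htr : t * r = M / 4 := by rw [ht]; field_simp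
  set U := Metric.closedBall x0 r
  have hUc : IsCompact U := isCompact_closedBall x0 r
  have hwU : ContinuousOn w U := hw.continuousOn.mono hB
  have hDU : ContinuousOn (fderiv ℝ w) U :=
    (hw.continuousOn_fderiv_of_isOpen hΩ (by norm_num)).mono hB
  have hbU : Metric.ball x0 r ⊆ U := Metric.ball_subset_closedBall
  set Z := (Metric.ball x0 r ∩ w ⁻¹' Set.Iio 0) ∩ (Tch n w U 0 ∩ (U ∩ (fun x => ‖fderiv ℝ w x‖) ⁻¹' Set.Iic t))
  have hZm : MeasurableSet Z := by
    refine MeasurableSet.inter ?_ (MeasurableSet.inter ?_ ?_)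
    · exact ((hwU.mono hbU).isOpen_inter_preimage Metric.isOpen_ball isOpen_Iio).measurableSet
    · exact (Tch_closed hΩ Metric.isClosed_closedBall hB hw 0).measurableSet
    · exact ((hDU.norm).preimage_isClosed_of_isClosed Metric.isClosed_closedBall isClosed_Iic).measurableSet
  have hZb : Z ⊆ Metric.ball x0 r := fun x hx => hx.1.1
  have hnh : ∀ z ∈ Metric.ball x0 r, U ∈ nhds z := fun z hz =>
    Filter.mem_of_superset (Metric.isOpen_ball.mem_nhds hz) hbU
  have hV : Metric.ball (0 : EE n) t ⊆ Tmap n w 0 '' Z := by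
    intro ξ hξ
    have hξ' : ‖ξ‖ < t := by simpa using hξ
    have hcont : ContinuousOn (fun z => w z - inner ℝ ξ z) U :=
      hwU.sub (by fun_prop)
    obtain ⟨z, hzU, hz⟩ := hUc.exists_isMinOn ⟨y, hy⟩ hcont
    have hz' : ∀ z' ∈ U, w z - inner ℝ ξ z ≤ w z' - inner ℝ ξ z' := fun z' h => hz h
    have hin : ∀ z ∈ U, |inner ℝ ξ (z - x0)| ≤ t * r := by
      intro z hz
      refine (abs_real_inner_le_norm _ _).trans ?_
      have : ‖z - x0‖ ≤ r := by simpa [U, dist_eq_norm] using hz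
      gcongr
    have h1 := hz' y hy
    have h2 := abs_le.1 (hin y hy)
    have h3 := abs_le.1 (hin z hzU)
    rw [inner_sub_right] at h2 h3
    have hwz : w z < 0 := by
      have : w y = -M := by linarith
      linarith [h2.1, h2.2, h3.1, h3.2]
    have hzb : z ∈ Metric.ball x0 r := by
      have hd : dist z x0 ≤ r := hzU
      rcases hd.lt_or_eq with h | h
      · exact h
      · exact absurd (hbd z h) (not_le.2 hwz)
    have hT := Tch_of_min (κ := 0) (hnh z hzb)
      (hw.contDiffAt (hΩ.mem_nhds (hB hzU))) (ξ := ξ) (by simpa using hz')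
    refine ⟨z, ⟨⟨hzb, hwz⟩, hT.1, hzU, ?_⟩, hT.2⟩
    have := Tmap_norm (w := w) (κ := 0) (z := z)
    rw [hT.2] at this
    simp only [zero_smul, sub_zero] at this
    simp only [Set.mem_preimage, Set.mem_Iic]
    linarith
  have hNB : NB n (fun x => t * b x + h x) Z (t * (lam * om n / 2) + H) :=
    ((hb.const_mul ht0.le).add hn hh (by fun_prop) hhm (by positivity) hH).mono_set hZb
  have := area (Lam := Lam) hn hlam hΩ hw hZm (fun x hx => hB (hbU (hZb hx))) le_rfl
    (fun x hx => Tch_psd hx.2.1 (hnh x (hZb hx)) (hw.contDiffAt (hΩ.mem_nhds (hB (hbU (hZb hx))))))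
    (fun x hx => hSS x (hZb hx) hx.1.2)
    (fun x hx => by
      have h1 : ‖fderiv ℝ w x‖ ≤ t := hx.2.2.2
      have := mul_le_mul_of_nonneg_left h1 (hb0 x)
      show _ ≤ t * b x + h x
      linarith) hNB ht0.le (by positivity) hV
  have h5 : t ≤ 2 / (lam * om n) * H := by
    rw [div_mul_eq_mul_div, le_div_iff₀ hC]; linarith
  have h6 : M ≤ 4 * r * (2 / (lam * om n) * H) := by
    calc M = 4 * r * t := by linarith
      _ ≤ _ := by gcongr
  have : 4 * r * (2 / (lam * om n) * H) = 8 / (lam * om n) * r * H := by ring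
  linarith

end QSMP

namespace QSMP

variable {n : ℕ} {lam Lam : ℝ}

lemma hess_sub {u v : EE n → ℝ} {x : EE n} (hu : ContDiffAt ℝ 2 u x) (hv : ContDiffAt ℝ 2 v x) :
    hess n (fun y => u y - v y) x = hess n u x - hess n v x := by
  have h1 : (fun y => u y - v y) = fun y => u y + (-1) * v y := by ext y; ring
  rw [h1, hess_add hu (contDiffAt_const.mul hv), hess_const_mul hv]
  simp [sub_eq_add_neg]

lemma SS_sub {b h h' u v : EE n → ℝ} {x : EE n} {c : ℝ} (hu : ContDiffAt ℝ 2 u x)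
    (hv : ContDiffAt ℝ 2 v x) (hb : 0 ≤ b x) (hs : SS n lam Lam b h u x)
    (hc : ∀ A, Adm n lam Lam A → c ≤ (A * hess n v x).trace)
    (hh : h x + b x * ‖fderiv ℝ v x‖ - c ≤ h' x) :
    SS n lam Lam b h' (fun y => u y - v y) x := by
  unfold SS at *
  rw [hess_sub hu hv]
  refine (hs.sub hc).mono ?_
  have h1 : fderiv ℝ (fun y => u y - v y) x = fderiv ℝ u x - fderiv ℝ v x :=
    fderiv_fun_sub (hu.differentiableAt (by norm_num)) (hv.differentiableAt (by norm_num))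
  have h2 : ‖fderiv ℝ u x‖ ≤ ‖fderiv ℝ (fun y => u y - v y) x‖ + ‖fderiv ℝ v x‖ := by
    rw [h1]
    have := norm_add_le (fderiv ℝ u x - fderiv ℝ v x) (fderiv ℝ v x)
    simpa using this
  have := mul_le_mul_of_nonneg_left h2 hb
  rw [mul_add] at this
  linarith

lemma sum_sq_eq (v : EE n) : ∑ i, v i ^ 2 = ‖v‖ ^ 2 := by
  rw [EuclideanSpace.norm_sq_eq]; simp

/-- derivatives of the Gaussian profile -/
lemma gauss_deriv (k c m : ℝ) :
    deriv (fun s : ℝ => m * (Real.exp (-(k * s)) - c)) = fun s => -(m * k) * Real.exp (-(k * s)) := by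
  ext s
  have h1 : HasDerivAt (fun s : ℝ => -(k * s)) (-k) s := by
    exact (((hasDerivAt_id' s).const_mul k).congr_deriv (mul_one k)).fun_neg
  have h2 : HasDerivAt (fun s : ℝ => m * (Real.exp (-(k * s)) - c)) _ s :=
    ((h1.exp).sub_const c).const_mul m
  rw [h2.deriv]; ring

lemma gauss_deriv2 (k m : ℝ) :
    deriv (fun s : ℝ => m * Real.exp (-(k * s))) = fun s => -(m * k) * Real.exp (-(k * s)) := by
  have := gauss_deriv k 0 m
  simpa using this

/-- propagation of positivity -/
lemma propagation (hn : 1 ≤ n) (hlam : 0 < lam) (hL : lam ≤ Lam) :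
    ∃ δ c C : ℝ, 0 < δ ∧ 0 < c ∧ c ≤ 1 ∧ 0 < C ∧
      ∀ (u b h : EE n → ℝ) (Ω : Set (EE n)) (y : EE n) (ρ m H : ℝ), IsOpen Ω → ContDiffOn ℝ 2 u Ω →
        0 < ρ → Metric.closedBall y (40 * ρ) ⊆ Ω → (∀ x ∈ Metric.closedBall y (40 * ρ), 0 ≤ u x) →
        (∀ x ∈ Metric.ball y (40 * ρ), SS n lam Lam b h u x) →
        (∀ x, 0 ≤ b x) → Measurable b → Measurable h →
        NB n b (Metric.ball y (40 * ρ)) δ → NB n h (Metric.ball y (40 * ρ)) H → 0 ≤ H →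
        (∀ x ∈ Metric.ball y ρ, m ≤ u x) →
        ∀ x ∈ Metric.closedBall y (30 * ρ), c * m - C * ρ * H ≤ u x := by
  have hLam : 0 < Lam := hlam.trans_le hL
  have hn0 : (0:ℝ) < n := by exact_mod_cast hn
  have hom := om_pos (n := n)
  set C0 := 8 / (lam * om n) with hC0
  have hC0p : 0 < C0 := by positivity
  set A := n * Lam / (2 * lam) with hA
  have hAp : 0 < A := by positivity
  have hAl : 2 * lam * A = n * Lam := by rw [hA]; field_simp
  set c2 := Real.exp (-(900 * A)) - Real.exp (-(1600 * A)) with hc2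
  have hc2p : 0 < c2 := by
    rw [hc2, sub_pos, Real.exp_lt_exp]; linarith
  have hc21 : c2 ≤ 1 := by
    have h1 : Real.exp (-(900 * A)) ≤ 1 := Real.exp_le_one_iff.2 (by linarith)
    have := Real.exp_pos (-(1600 * A))
    linarith
  refine ⟨min (lam * om n / 2) (c2 / 2 / (3200 * C0 * A)), c2 / 2, 40 * C0, by positivity, by positivity,
    by linarith, by positivity, ?_⟩
  intro u b h Ω y ρ m H hΩ hu hρ hB hu0 hss hb0 hbm hhm hb hh hH hm x hx
  have hxB : x ∈ Metric.closedBall y (40 * ρ) :=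
    Metric.closedBall_subset_closedBall (by linarith) hx
  rcases le_or_gt m 0 with hm0 | hm0
  · have h1 := hu0 x hxB
    have h2 : 0 ≤ 40 * C0 * ρ * H := by positivity
    nlinarith
  set k := A / ρ ^ 2 with hk
  have hkp : 0 < k := by positivity
  have hkr : ∀ s : ℝ, k * (s * ρ) ^ 2 = s ^ 2 * A := by intro s; rw [hk]; field_simp
  set e := Real.exp (-(1600 * A)) with he
  set g : ℝ → ℝ := fun s => m * (Real.exp (-(k * s)) - e) with hg
  have hgc : ContDiff ℝ 2 g := by rw [hg]; fun_prop
  have hg1 : deriv g = fun s => -(m * k) * Real.exp (-(k * s)) := gauss_deriv k e m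
  have hg2 : deriv (deriv g) = fun s => m * k * k * Real.exp (-(k * s)) := by
    rw [hg1, gauss_deriv2]; ext s; ring
  set φ : EE n → ℝ := fun z => g (‖z - y‖ ^ 2) with hφ
  have hφc : ∀ z, ContDiffAt ℝ 2 φ z := fun z => radial_contDiffAt hgc.contDiffAt
  have hφ1 : ∀ z, fderiv ℝ φ z = (2 * deriv g (‖z - y‖ ^ 2)) • innerSL ℝ (z - y) := fun z =>
    radial_fderiv (hgc.differentiable (by norm_num) _)
  set δ := min (lam * om n / 2) (c2 / 2 / (3200 * C0 * A)) with hδ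
  have hδp : 0 < δ := by positivity
  set B := m * (80 * A / ρ) with hB'
  have hBp : 0 < B := by positivity
  have hw : ContDiffOn ℝ 2 (fun z => u z - φ z) Ω :=
    hu.sub fun z _ => (hφc z).contDiffWithinAt
  have hφle : ∀ z, φ z ≤ m := by
    intro z
    have h1 : Real.exp (-(k * ‖z - y‖ ^ 2)) ≤ 1 := Real.exp_le_one_iff.2 (by
      have : 0 ≤ k * ‖z - y‖ ^ 2 := by positivity
      linarith)
    have h2 : 0 < e := Real.exp_pos _
    have : m * (Real.exp (-(k * ‖z - y‖ ^ 2)) - e) ≤ m * 1 := by gcongr; linarith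
    simpa [hφ, hg] using this
  have key := ABP (Lam := Lam) (h := fun z => h z + B * b z) (H := H + B * δ) hn hlam hΩ hw
    (by linarith : 0 < 40 * ρ) hB ?_ ?_ hb0 hbm
    (by fun_prop) (hb.mono (min_le_left _ _)) (hh.add hn (hb.const_mul hBp.le) hhm (by fun_prop) hH (by positivity))
    (by positivity) x hxB
  · have hφx : m * c2 ≤ φ x := by
      have h1 : ‖x - y‖ ≤ 30 * ρ := by simpa [dist_eq_norm] using hx
      have h2 : k * ‖x - y‖ ^ 2 ≤ 900 * A := by
        calc k * ‖x - y‖ ^ 2 ≤ k * (30 * ρ) ^ 2 := by gcongr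
          _ = 900 * A := by rw [hkr]; norm_num
      have h3 : Real.exp (-(900 * A)) ≤ Real.exp (-(k * ‖x - y‖ ^ 2)) := Real.exp_le_exp.2 (by linarith)
      have : m * c2 ≤ m * (Real.exp (-(k * ‖x - y‖ ^ 2)) - e) := by gcongr; linarith
      simpa [hφ, hg] using this
    have h4 : C0 * (40 * ρ) * (B * δ) ≤ m * (c2 / 2) := by
      have : δ ≤ c2 / 2 / (3200 * C0 * A) := min_le_right _ _
      calc C0 * (40 * ρ) * (B * δ) = m * (3200 * C0 * A * δ) := by rw [hB']; field_simp; ring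
        _ ≤ m * (3200 * C0 * A * (c2 / 2 / (3200 * C0 * A))) := by gcongr
        _ = m * (c2 / 2) := by congr 1; field_simp
    have h5 : C0 * (40 * ρ) * (H + B * δ) = C0 * (40 * ρ) * H + C0 * (40 * ρ) * (B * δ) := by ring
    have h6 : 40 * C0 * ρ * H = C0 * (40 * ρ) * H := by ring
    rw [← hC0, h5] at key
    rw [h6]
    linarith
  · intro z hz
    have h1 : ‖z - y‖ = 40 * ρ := by simpa [dist_eq_norm] using hz
    have h2 : φ z = 0 := by
      simp only [hφ, hg, h1, hkr, he]; norm_num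
    have := hu0 z (Metric.sphere_subset_closedBall hz)
    simp only [h2]; linarith
  · intro z hz hneg
    have hzn : z ∉ Metric.ball y ρ := fun h1 => by
      have := hm z h1
      have := hφle z
      linarith
    have hz1 : ρ ≤ ‖z - y‖ := by
      rw [Metric.mem_ball, dist_eq_norm] at hzn; linarith
    have hz2 : ‖z - y‖ < 40 * ρ := by rwa [Metric.mem_ball, dist_eq_norm] at hz
    set G := Real.exp (-(k * ‖z - y‖ ^ 2)) with hG
    have hGp : 0 < G := Real.exp_pos _
    have hG1 : G ≤ 1 := Real.exp_le_one_iff.2 (by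
      have : 0 ≤ k * ‖z - y‖ ^ 2 := by positivity
      linarith)
    refine SS_sub (c := 0) (hu.contDiffAt (hΩ.mem_nhds (hB (Metric.ball_subset_closedBall hz)))) (hφc z)
      (hb0 z) (hss z hz) ?_ ?_
    · intro M hM
      rw [hφ, radial_hess hgc.contDiffAt, hg2, hg1]
      have h1 := hM.barrier hlam.le (fun i => (z - y) i) (α := 4 * (m * k * k * G)) (β := 2 * (m * k * G))
        (by positivity) (by positivity)
      have h2 : (4 * (m * k * k * G)) • Matrix.vecMulVec (fun i => (z - y) i) (fun i => (z - y) i) -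
            (2 * (m * k * G)) • (1 : Matrix (Fin n) (Fin n) ℝ)
          = (4 * (m * k * k * G)) • Matrix.vecMulVec (fun i => (z - y) i) (fun i => (z - y) i) +
            (2 * (-(m * k) * G)) • (1 : Matrix (Fin n) (Fin n) ℝ) := by
        rw [sub_eq_add_neg, ← neg_smul]; congr 2; ring
      rw [h2] at h1
      refine le_trans ?_ h1
      rw [sum_sq_eq, ← hAl]
      have h3 : A ≤ k * ‖z - y‖ ^ 2 := by
        have := hkr 1
        calc A = k * ρ ^ 2 := by rw [one_mul] at this; linarith
          _ ≤ _ := by gcongr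
      have : lam * (4 * (m * k * k * G)) * ‖z - y‖ ^ 2 - 2 * (m * k * G) * (2 * lam * A)
          = 4 * (lam * m * k * G) * (k * ‖z - y‖ ^ 2 - A) := by ring
      rw [this]
      have : 0 ≤ k * ‖z - y‖ ^ 2 - A := by linarith
      positivity
    · have h1 : ‖fderiv ℝ φ z‖ ≤ B := by
        rw [hφ1, norm_smul, innerSL_apply_norm, hg1, Real.norm_eq_abs]
        simp only
        rw [← hG, show 2 * (-(m * k) * G) = -(2 * (m * k * G)) by ring, abs_neg, abs_of_pos (by positivity)]
        calc 2 * (m * k * G) * ‖z - y‖ ≤ 2 * (m * k * 1) * (40 * ρ) := by gcongr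
          _ = B := by rw [hB', hk]; field_simp; ring
      have := mul_le_mul_of_nonneg_left h1 (hb0 z)
      show _ ≤ h z + B * b z
      linarith

end QSMP

namespace QSMP

variable {n : ℕ} {lam Lam : ℝ}

/-- the standing assumptions in the unit ball -/
structure Sup (n : ℕ) (lam Lam K1 α : ℝ) (b h u : EE n → ℝ) : Prop where
  bm : Measurable b
  hm : Measurable h
  b0 : ∀ x, 0 ≤ b x
  h0 : ∀ x, 0 ≤ h x
  bN : ∀ (x : EE n) (r : ℝ), 0 < r → NB n b (Metric.ball x r) (K1 * r ^ α)
  uC : ContDiffOn ℝ 2 u (Metric.ball 0 1)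
  u0 : ∀ x ∈ Metric.ball (0 : EE n) 1, 0 ≤ u x
  ss : ∀ x ∈ Metric.ball (0 : EE n) 1, SS n lam Lam b h u x

lemma cB_sub {y : EE n} {r : ℝ} (h : ‖y‖ + r < 1) : Metric.closedBall y r ⊆ Metric.ball 0 1 := by
  intro x hx
  have h1 : ‖x - y‖ ≤ r := by simpa [dist_eq_norm] using hx
  have h2 := norm_add_le (x - y) y
  simp at h2 ⊢
  linarith

lemma Sup.bNr {K1 α : ℝ} {b h u : EE n → ℝ} (hS : Sup n lam Lam K1 α b h u) (hα : 0 < α) (hK : 0 ≤ K1)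
    {x : EE n} {r r' δ : ℝ} (hr : 0 < r) (hr' : r ≤ r') (hδ : K1 * r' ^ α ≤ δ) :
    NB n b (Metric.ball x r) δ := by
  refine (hS.bN x r hr).mono (le_trans ?_ hδ)
  gcongr

/-- one propagation step for `Sup` -/
def Step (n : ℕ) (lam Lam δ c1 C1 : ℝ) : Prop :=
  ∀ (K1 α r0 : ℝ) (b h u : EE n → ℝ), 0 < α → 0 ≤ K1 → Sup n lam Lam K1 α b h u →
    K1 * (40 * r0) ^ α ≤ δ → ∀ (y : EE n) (ρ m H : ℝ), 0 < ρ → ρ ≤ r0 → ‖y‖ + 40 * ρ < 1 →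
    NB n h (Metric.ball 0 1) H → 0 ≤ H → (∀ x ∈ Metric.ball y ρ, m ≤ u x) →
    ∀ x ∈ Metric.closedBall y (30 * ρ), c1 * m - C1 * ρ * H ≤ u x

lemma exists_step (hn : 1 ≤ n) (hlam : 0 < lam) (hL : lam ≤ Lam) :
    ∃ δ c1 C1 : ℝ, 0 < δ ∧ 0 < c1 ∧ c1 ≤ 1 ∧ 0 < C1 ∧ Step n lam Lam δ c1 C1 := by
  obtain ⟨δ, c, C, h1, h2, h3, h4, h5⟩ := propagation (n := n) hn hlam hL
  refine ⟨δ, c, C, h1, h2, h3, h4, ?_⟩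
  intro K1 α r0 b h u hα hK hS hδ y ρ m H hρ hρ0 hy hH hH0 hm
  have hsub := cB_sub hy
  have hsub' := Metric.ball_subset_closedBall.trans hsub
  exact h5 u b h (Metric.ball 0 1) y ρ m H Metric.isOpen_ball hS.uC hρ hsub
    (fun x hx => hS.u0 x (hsub hx)) (fun x hx => hS.ss x (hsub' hx))
    hS.b0 hS.bm hS.hm (hS.bNr hα hK (by linarith) (by linarith) hδ) (hH.mono_set hsub') hH0 hm

section chain
variable {δ c1 C1 K1 α r0 H : ℝ} {b h u : EE n → ℝ}

lemma chain_grow (hst : Step n lam Lam δ c1 C1) (hc1 : 0 < c1) (hc1' : c1 ≤ 1) (hC1 : 0 < C1)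
    (hα : 0 < α) (hK : 0 ≤ K1) (hS : Sup n lam Lam K1 α b h u) (hδ : K1 * (40 * r0) ^ α ≤ δ)
    (hr0 : r0 ≤ 1 / 140) (hH : NB n h (Metric.ball 0 1) H) (hH0 : 0 ≤ H) (k : ℕ) :
    ∀ (y : EE n) (ρ m : ℝ), 0 < ρ → ρ ≤ r0 → (2 / 3) ^ (k + 1) * r0 < ρ → ‖y‖ + 40 * ρ < 1 → 0 ≤ m →
      (∀ x ∈ Metric.ball y ρ, m ≤ u x) →
      ∃ (y' : EE n) (ρ' : ℝ), ρ ≤ ρ' ∧ 2 / 3 * r0 < ρ' ∧ ρ' ≤ r0 ∧ ‖y'‖ + 40 * ρ' < 1 ∧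
        ∀ x ∈ Metric.ball y' ρ', c1 ^ k * m - 2 * C1 * H * (ρ' - ρ) ≤ u x := by
  induction k with
  | zero =>
    intro y ρ m hρ hρ0 hk hy hm hu
    exact ⟨y, ρ, le_rfl, by simpa using hk, hρ0, hy, fun x hx => by simpa using hu x hx⟩
  | succ k ih =>
    intro y ρ m hρ hρ0 hk hy hm hu
    rcases lt_or_ge (2 / 3 * r0) ρ with hbig | hsmall
    · refine ⟨y, ρ, le_rfl, hbig, hρ0, hy, fun x hx => ?_⟩
      have h1 : c1 ^ (k + 1) * m ≤ 1 * m := by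
        gcongr
        exact pow_le_one₀ hc1.le hc1'
      have := hu x hx
      simp only [sub_self, mul_zero, sub_zero]
      linarith
    · set y' : EE n := (1 - 28 * ρ) • y with hy'
      have hρ140 : ρ ≤ 1 / 140 := hρ0.trans hr0
      have hny' : ‖y'‖ = (1 - 28 * ρ) * ‖y‖ := by
        rw [hy', norm_smul, Real.norm_eq_abs, abs_of_nonneg (by linarith)]
      have hdy : ‖y' - y‖ ≤ 28 * ρ := by
        have : y' - y = (-(28 * ρ)) • y := by rw [hy']; module
        rw [this, norm_smul, Real.norm_eq_abs, abs_neg, abs_of_pos (by linarith)]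
        have : ‖y‖ ≤ 1 := by linarith
        nlinarith
      have hst' := hst K1 α r0 b h u hα hK hS hδ y ρ m H hρ hρ0 hy hH hH0 hu
      have hsub : Metric.ball y' (3 / 2 * ρ) ⊆ Metric.closedBall y (30 * ρ) := by
        intro x hx
        rw [Metric.mem_ball, dist_eq_norm] at hx
        rw [Metric.mem_closedBall, dist_eq_norm]
        have := norm_add_le (x - y') (y' - y)
        rw [sub_add_sub_cancel] at this
        linarith
      have hn' : ‖y'‖ + 40 * (3 / 2 * ρ) < 1 := by
        rw [hny']
        have h1 : (1 - 28 * ρ) * ‖y‖ ≤ (1 - 28 * ρ) * (1 - 40 * ρ) := by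
          apply mul_le_mul_of_nonneg_left <;> linarith
        rcases eq_or_lt_of_le hρ140 with h2 | h2
        · have h3 : (1 - 28 * ρ) * ‖y‖ < (1 - 28 * ρ) * (1 - 40 * ρ) := by
            apply mul_lt_mul_of_pos_left <;> linarith
          nlinarith
        · nlinarith
      obtain ⟨y2, ρ2, h1, h2, h3, h4, h5⟩ := ih y' (3 / 2 * ρ) (max (c1 * m - C1 * ρ * H) 0)
        (by linarith) (by linarith) (by rw [pow_succ] at hk; linarith) hn' (le_max_right _ _)
        (fun x hx => by
          have hx' := hsub hx
          refine max_le (hst' x hx') (hS.u0 x ?_)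
          exact cB_sub (by linarith : ‖y‖ + 30 * ρ < 1) hx')
      refine ⟨y2, ρ2, by linarith, h2, h3, h4, fun x hx => le_trans ?_ (h5 x hx)⟩
      have h6 : c1 ^ k * (c1 * m - C1 * ρ * H) ≤ c1 ^ k * max (c1 * m - C1 * ρ * H) 0 := by
        gcongr
        exact le_max_left _ _
      have h7 : c1 ^ k * (C1 * ρ * H) ≤ 1 * (C1 * ρ * H) := by
        gcongr
        exact pow_le_one₀ hc1.le hc1'
      have h8 : c1 ^ (k + 1) * m = c1 ^ k * (c1 * m) := by ring
      rw [h8]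
      linarith

lemma chain_line (hst : Step n lam Lam δ c1 C1) (hc1 : 0 < c1) (hc1' : c1 ≤ 1) (hC1 : 0 < C1)
    (hα : 0 < α) (hK : 0 ≤ K1) (hS : Sup n lam Lam K1 α b h u) (hδ : K1 * (40 * r0) ^ α ≤ δ)
    (hr0 : r0 ≤ 1 / 140) (hH : NB n h (Metric.ball 0 1) H) (hH0 : 0 ≤ H) {v : EE n} {ρ : ℝ} (k : ℕ)
    (hρ : 0 < ρ) (hρ0 : ρ ≤ r0) (hv : ‖v‖ ≤ 28 * ρ) :
    ∀ (y : EE n) (m : ℝ), ‖y‖ + 40 * ρ < 1 → ‖y + (k:ℝ) • v‖ + 40 * ρ < 1 →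
      (∀ x ∈ Metric.ball y ρ, m ≤ u x) →
      ∀ x ∈ Metric.ball (y + (k:ℝ) • v) ρ, c1 ^ k * m - k * (C1 * H) ≤ u x := by
  induction k with
  | zero =>
    intro y m hy _ hu x hx
    simpa using hu x (by simpa using hx)
  | succ k ih =>
    intro y m hy hy' hu x hx
    have hseg : ‖y + v‖ + 40 * ρ < 1 := by
      have hk0 : (0:ℝ) < k + 1 := by positivity
      have h1 : y + v = ((k:ℝ) / (k + 1)) • y + ((1:ℝ) / (k + 1)) • (y + ((k + 1 : ℕ) : ℝ) • v) := by
        push_cast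
        rw [smul_add, smul_smul, ← add_assoc, ← add_smul, div_mul_cancel₀ _ hk0.ne', one_smul,
          ← add_div, div_self hk0.ne', one_smul]
      have h2 : ‖y + v‖ ≤ ((k:ℝ) / (k + 1)) * ‖y‖ + ((1:ℝ) / (k + 1)) * ‖y + ((k + 1 : ℕ) : ℝ) • v‖ := by
        conv_lhs => rw [h1]
        refine (norm_add_le _ _).trans ?_
        rw [norm_smul, norm_smul, Real.norm_of_nonneg (by positivity), Real.norm_of_nonneg (by positivity)]
      have h3 : ((k:ℝ) / (k + 1)) * ‖y‖ ≤ ((k:ℝ) / (k + 1)) * (1 - 40 * ρ) := by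
        gcongr; linarith
      have h4 : ((1:ℝ) / (k + 1)) * ‖y + ((k + 1 : ℕ) : ℝ) • v‖ < ((1:ℝ) / (k + 1)) * (1 - 40 * ρ) := by
        gcongr; linarith
      have h5 : ((k:ℝ) / (k + 1)) * (1 - 40 * ρ) + ((1:ℝ) / (k + 1)) * (1 - 40 * ρ) = 1 - 40 * ρ := by
        rw [← add_mul, ← add_div, div_self hk0.ne', one_mul]
      linarith
    have hst' := hst K1 α r0 b h u hα hK hS hδ y ρ m H hρ hρ0 hy hH hH0 hu
    have hsub : Metric.ball (y + v) ρ ⊆ Metric.closedBall y (30 * ρ) := by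
      intro x hx
      rw [Metric.mem_ball, dist_eq_norm] at hx
      rw [Metric.mem_closedBall, dist_eq_norm]
      have := norm_add_le (x - (y + v)) v
      rw [show x - (y + v) + v = x - y by abel] at this
      linarith
    have heq : y + ((k + 1 : ℕ) : ℝ) • v = (y + v) + (k : ℝ) • v := by push_cast; module
    rw [heq] at hx hy'
    have h6 := ih (y + v) (c1 * m - C1 * ρ * H) hseg hy' (fun z hz => hst' z (hsub hz)) x hx
    have h7 : c1 ^ k * (C1 * ρ * H) ≤ 1 * (C1 * 1 * H) := by
      have : ρ ≤ 1 := by linarith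
      gcongr
      exact pow_le_one₀ hc1.le hc1'
    have h8 : c1 ^ (k + 1) * m = c1 ^ k * (c1 * m) := by ring
    rw [h8]
    push_cast
    linarith

end chain

/-- polynomial lower bound propagated from a small ball -/
lemma chain (hn : 1 ≤ n) (hlam : 0 < lam) (hL : lam ≤ Lam) :
    ∃ δ : ℝ, 0 < δ ∧ ∃ γ : ℕ, ∀ r0 : ℝ, 0 < r0 → r0 ≤ 1 / 140 → ∃ c C : ℝ, 0 < c ∧ 0 < C ∧
      ∀ (K1 α : ℝ) (b h u : EE n → ℝ), 0 < α → 0 ≤ K1 → Sup n lam Lam K1 α b h u →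
        K1 * (40 * r0) ^ α ≤ δ → ∀ (y : EE n) (ρ m H : ℝ), 0 < ρ → ρ ≤ r0 → ‖y‖ + 40 * ρ < 1 →
        NB n h (Metric.ball 0 1) H → 0 ≤ H → 0 ≤ m → (∀ x ∈ Metric.ball y ρ, m ≤ u x) →
        ∀ x : EE n, ‖x‖ + 40 * r0 < 1 → c * ρ ^ γ * m - C * H ≤ u x := by
  obtain ⟨δ, c1, C1, hδ, hc1, hc1', hC1, hst⟩ := exists_step (n := n) hn hlam hL
  obtain ⟨γ, hγ⟩ := exists_pow_lt_of_lt_one hc1 (by norm_num : (2 / 3 : ℝ) < 1)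
  refine ⟨δ, hδ, γ, fun r0 hr0 hr0' => ?_⟩
  obtain ⟨N, hN⟩ := exists_nat_gt (1 / (9 * r0))
  have hN0 : 0 < N := by
    have : (0:ℝ) < N := lt_of_le_of_lt (by positivity) hN
    exact_mod_cast this
  have hN0' : (0:ℝ) < N := by exact_mod_cast hN0
  refine ⟨c1 ^ N, 2 * C1 + N * C1, by positivity, by positivity, ?_⟩
  intro K1 α b h u hα hK hS hδ' y ρ m H hρ hρ0 hy hH hH0 hm hu x hx
  obtain ⟨k, hk1, hk2⟩ := exists_nat_pow_near_of_lt_one (x := ρ / r0) (y := 2 / 3) (by positivity)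
    (by rw [div_le_one hr0]; exact hρ0) (by norm_num) (by norm_num)
  rw [lt_div_iff₀ hr0] at hk1
  obtain ⟨y', ρ', h1, h2, h3, h4, h5⟩ := chain_grow hst hc1 hc1' hC1 hα hK hS hδ' hr0' hH hH0 k y ρ m
    hρ hρ0 hk1 hy hm hu
  set v : EE n := (1 / (N:ℝ)) • (x - y') with hv
  have hNv : y' + (N:ℝ) • v = x := by
    rw [hv, smul_smul, mul_one_div_cancel hN0'.ne', one_smul]; abel
  have hvn : ‖v‖ ≤ 28 * ρ' := by
    rw [hv, norm_smul, Real.norm_of_nonneg (by positivity), one_div_mul_eq_div, div_le_iff₀ hN0']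
    have h6 : ‖x - y'‖ ≤ 2 := by
      have := norm_sub_le x y'
      linarith
    rw [div_lt_iff₀ (by positivity)] at hN
    have h7 : 28 * (2 / 3 * r0) * N ≤ 28 * ρ' * N := by gcongr
    nlinarith
  have h6 := chain_line hst hc1 hc1' hC1 hα hK hS hδ' hr0' hH hH0 N (by linarith) h3 hvn y' _ h4
    (by rw [hNv]; linarith) h5 x (by rw [hNv]; exact Metric.mem_ball_self (by linarith))
  refine le_trans ?_ h6
  have h7 : ρ ^ γ ≤ c1 ^ k := by
    have hr1 : ρ ≤ ρ / r0 := by rw [le_div_iff₀ hr0]; nlinarith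
    calc ρ ^ γ ≤ (ρ / r0) ^ γ := by gcongr
      _ ≤ ((2 / 3) ^ k) ^ γ := by gcongr
      _ = ((2 / 3) ^ γ) ^ k := by rw [← pow_mul, ← pow_mul, mul_comm]
      _ ≤ c1 ^ k := by gcongr
  have h8 : c1 ^ N * ρ ^ γ * m ≤ c1 ^ N * (c1 ^ k * m) := by
    rw [mul_assoc]; gcongr
  have h9 : c1 ^ N * (2 * C1 * H * (ρ' - ρ)) ≤ 1 * (2 * C1 * H * 1) := by
    have : ρ' - ρ ≤ 1 := by linarith
    have : 0 ≤ ρ' - ρ := by linarith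
    gcongr
    exact pow_le_one₀ hc1.le hc1'
  linarith

/-- smallness somewhere in every ball -/
lemma smallpt (hn : 1 ≤ n) (hlam : 0 < lam) (hL : lam ≤ Lam) :
    ∃ δ : ℝ, 0 < δ ∧ ∃ γ : ℕ, ∀ r0 CH Ch : ℝ, 0 < r0 → r0 ≤ 1 / 140 → 0 < CH → 0 < Ch → ∃ CP : ℝ, 0 < CP ∧
      ∀ (K1 α τ : ℝ) (b h u : EE n → ℝ), 0 < α → 0 ≤ K1 → Sup n lam Lam K1 α b h u →
        K1 * (40 * r0) ^ α ≤ δ → 0 < τ → NB n h (Metric.ball 0 1) (Ch * τ) →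
        (∃ x : EE n, ‖x‖ + 40 * r0 < 1 ∧ u x ≤ CH * τ) →
        ∀ (y : EE n) (ρ : ℝ), 0 < ρ → ρ ≤ r0 → ‖y‖ + 40 * ρ < 1 →
        ∃ x ∈ Metric.ball y ρ, u x ≤ CP * τ / ρ ^ γ := by
  obtain ⟨δ, hδ, γ, h⟩ := chain (n := n) hn hlam hL
  refine ⟨δ, hδ, γ, fun r0 CH Ch hr0 hr0' hCH hCh => ?_⟩
  obtain ⟨c, C, hc, hC, h1⟩ := h r0 hr0 hr0'
  refine ⟨(CH + C * Ch + 1) / c, by positivity, ?_⟩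
  intro K1 α τ b h u hα hK hS hδ' hτ hH ⟨x, hx, hux⟩ y ρ hρ hρ0 hy
  by_contra hcon
  push Not at hcon
  have h2 := h1 K1 α b h u hα hK hS hδ' y ρ ((CH + C * Ch + 1) / c * τ / ρ ^ γ) (Ch * τ) hρ hρ0 hy hH
    (by positivity) (by positivity) (fun z hz => (hcon z hz).le) x hx
  have h3 : c * ρ ^ γ * ((CH + C * Ch + 1) / c * τ / ρ ^ γ) = (CH + C * Ch + 1) * τ := by
    field_simp
  rw [h3] at h2
  nlinarith

end QSMP

namespace QSMP

variable {n : ℕ} {lam Lam : ℝ}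

lemma sliding (hn : 1 ≤ n) (hlam : 0 < lam) (hL : lam ≤ Lam) (C1 C3 N : ℝ) (hC1 : 0 < C1) (hC3 : 0 ≤ C3)
    (hN : 52 * C1 ≤ N) :
    ∃ η c : ℝ, 0 < η ∧ 0 < c ∧ ∀ (v b g0 : EE n → ℝ) (Ω U : Set (EE n)) (x' x2 : EE n) (a d : ℝ),
      IsOpen Ω → ContDiffOn ℝ 2 v Ω → IsCompact U → U ⊆ Ω → (∀ z ∈ U, 0 ≤ v z) → 0 < a → 0 < d →
      Metric.closedBall x' (d / 4) ⊆ U → x2 ∈ Metric.closedBall x' (d / 16) → v x2 ≤ C1 * a * d ^ 2 →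
      (∀ z ∈ Metric.ball x' (d / 4), SS n lam Lam b (fun z => g0 z + C3 * a) v z) →
      (∀ z, 0 ≤ b z) → Measurable b → Measurable g0 →
      NB n b (Metric.ball x' (d / 4)) η → NB n g0 (Metric.ball x' (d / 4)) (η * a * d) →
      ENNReal.ofReal (c * d) ^ n < volume (Tch n v U (N * a) ∩ Metric.ball x' (d / 4)) := by
  have hN0 : 0 < N := by linarith
  have hLam : 0 < Lam := hlam.trans_le hL
  have hn0 : (0:ℝ) < n := by exact_mod_cast hn
  have hom := om_pos (n := n)
  set η := lam * om n * N / (128 * (N / 2 + 1)) with hη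
  have hηp : 0 < η := by positivity
  set c := lam * om n * N / (128 * (C3 + n * Lam * N)) with hc
  have hcp : 0 < c := by positivity
  refine ⟨η, c, hηp, hcp, ?_⟩
  intro v b g0 Ω U x' x2 a d hΩ hv hU hUΩ hv0 ha hd hBU hx2 hvx2 hss hb0 hbm hg0m hb hg0
  by_contra hcon
  push Not at hcon
  set κ := N * a with hκ
  have hκ0 : 0 < κ := by positivity
  have hvU : ContinuousOn v U := hv.continuousOn.mono hUΩ
  have hDU : ContinuousOn (fderiv ℝ v) U :=
    (hv.continuousOn_fderiv_of_isOpen hΩ (by norm_num)).mono hUΩ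
  have hbU : Metric.ball x' (d / 4) ⊆ U := Metric.ball_subset_closedBall.trans hBU
  have hnh : ∀ z ∈ Metric.ball x' (d / 4), U ∈ nhds z := fun z hz =>
    Filter.mem_of_superset (Metric.isOpen_ball.mem_nhds hz) hbU
  have hx2U : x2 ∈ U := hBU (Metric.closedBall_subset_closedBall (by linarith) hx2)
  set Z := (Tch n v U κ ∩ Metric.ball x' (d / 4)) ∩ (U ∩ (fun x => ‖fderiv ℝ v x‖) ⁻¹' Set.Iic (κ * d / 2))
  have hZm : MeasurableSet Z := by
    refine MeasurableSet.inter (MeasurableSet.inter ?_ Metric.isOpen_ball.measurableSet) ?_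
    · exact (Tch_closed hΩ hU.isClosed hUΩ hv κ).measurableSet
    · exact ((hDU.norm).preimage_isClosed_of_isClosed hU.isClosed isClosed_Iic).measurableSet
  have hZb : Z ⊆ Metric.ball x' (d / 4) := fun x hx => hx.1.2
  have hV : Metric.ball (κ • x') (κ * d / 32) ⊆ Tmap n v κ '' Z := by
    intro ξ hξ
    set y : EE n := κ⁻¹ • ξ with hy
    have hξy : ξ = κ • y := by rw [hy, smul_smul, mul_inv_cancel₀ hκ0.ne', one_smul]
    have hyx : ‖y - x'‖ < d / 32 := by
      rw [Metric.mem_ball, dist_eq_norm, hξy, ← smul_sub, norm_smul, Real.norm_of_nonneg hκ0.le,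
        mul_div_assoc] at hξ
      exact lt_of_mul_lt_mul_left hξ hκ0.le
    have hcont : ContinuousOn (fun z => v z + κ / 2 * ‖z‖ ^ 2 - inner ℝ ξ z) U :=
      (hvU.add (by fun_prop)).sub (by fun_prop)
    obtain ⟨z, hzU, hz⟩ := hU.exists_isMinOn ⟨x2, hx2U⟩ hcont
    have hz' : ∀ z' ∈ U, v z + κ / 2 * ‖z‖ ^ 2 - inner ℝ ξ z ≤ v z' + κ / 2 * ‖z'‖ ^ 2 - inner ℝ ξ z' :=
      fun z' h => hz h
    have hsq : ∀ z : EE n, κ / 2 * ‖z‖ ^ 2 - inner ℝ ξ z = κ / 2 * ‖z - y‖ ^ 2 - κ / 2 * ‖y‖ ^ 2 := by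
      intro z
      rw [@norm_sub_sq_real, hξy, real_inner_smul_left, real_inner_comm]; ring
    have h1 := hz' x2 hx2U
    have h2 : v z + κ / 2 * ‖z - y‖ ^ 2 ≤ v x2 + κ / 2 * ‖x2 - y‖ ^ 2 := by
      linarith [hsq z, hsq x2]
    have h3 : ‖x2 - y‖ ≤ 3 * d / 32 := by
      rw [Metric.mem_closedBall, dist_eq_norm] at hx2
      have h4 := norm_add_le (x2 - x') (x' - y)
      rw [sub_add_sub_cancel, norm_sub_rev x' y] at h4
      linarith
    have h4 : κ / 2 * ‖z - y‖ ^ 2 ≤ C1 * a * d ^ 2 + κ / 2 * (3 * d / 32) ^ 2 := by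
      have : κ / 2 * ‖x2 - y‖ ^ 2 ≤ κ / 2 * (3 * d / 32) ^ 2 := by gcongr
      linarith [hv0 z hzU]
    have h5 : ‖z - y‖ < 7 * d / 32 := by
      by_contra h6
      push Not at h6
      have h7 : κ / 2 * (7 * d / 32) ^ 2 ≤ κ / 2 * ‖z - y‖ ^ 2 := by gcongr
      have h8 : κ * (5 / 256) * d ^ 2 ≤ C1 * a * d ^ 2 := by nlinarith
      have h9 : κ * (5 / 256) ≤ C1 * a := le_of_mul_le_mul_right h8 (by positivity)
      have h10 : N * (5 / 256) ≤ C1 := by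
        refine le_of_mul_le_mul_right ?_ ha
        rw [hκ] at h9; linarith
      linarith
    have hzb : z ∈ Metric.ball x' (d / 4) := by
      rw [Metric.mem_ball, dist_eq_norm]
      have h6 := norm_add_le (z - y) (y - x')
      rw [sub_add_sub_cancel] at h6
      linarith
    have hT := Tch_of_min (hnh z hzb) (hv.contDiffAt (hΩ.mem_nhds (hUΩ hzU))) hz'
    refine ⟨z, ⟨⟨hT.1, hzb⟩, hzU, ?_⟩, hT.2⟩
    have := Tmap_norm (w := v) (κ := κ) (z := z)
    rw [hT.2, hξy, ← smul_sub, norm_smul, Real.norm_of_nonneg hκ0.le, norm_sub_rev] at this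
    simp only [Set.mem_preimage, Set.mem_Iic]
    rw [this, mul_div_assoc]
    gcongr
    linarith
  have hZv : volume Z ≤ ENNReal.ofReal (c * d) ^ n := (measure_mono Set.inter_subset_left).trans hcon
  have hNB : NB n (fun x => (κ * d / 2 * b x + g0 x) + (C3 * a + n * Lam * κ)) Z
      ((κ * d / 2 * η + η * a * d) + (C3 * a + n * Lam * κ) * (c * d)) := by
    refine NB.add hn (((hb.const_mul (by positivity)).add hn hg0 (by fun_prop) hg0m (by positivity)
      (by positivity)).mono_set hZb) (NB.const (by positivity) hZv) (by fun_prop) (by fun_prop)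
      (by positivity) (by positivity)
  have := area (Lam := Lam) hn hlam hΩ hv hZm (fun x hx => hUΩ (hbU (hZb hx))) hκ0.le
    (fun x hx => Tch_psd hx.1.1 (hnh x (hZb hx)) (hv.contDiffAt (hΩ.mem_nhds (hUΩ (hbU (hZb hx))))))
    (fun x hx => hss x (hZb hx))
    (fun x hx => by
      have h1 : ‖fderiv ℝ v x‖ ≤ κ * d / 2 := hx.2.2
      have := mul_le_mul_of_nonneg_left h1 (hb0 x)
      show _ ≤ (κ * d / 2 * b x + g0 x) + (C3 * a + n * Lam * κ)
      linarith) hNB (by positivity) (by positivity) hV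
  have e1 : κ * d / 2 * η + η * a * d = a * d * (η * (N / 2 + 1)) := by rw [hκ]; ring
  have e2 : (C3 * a + n * Lam * κ) * (c * d) = a * d * (c * (C3 + n * Lam * N)) := by rw [hκ]; ring
  have e3 : η * (N / 2 + 1) = lam * om n * N / 128 := by rw [hη]; field_simp
  have e4 : c * (C3 + n * Lam * N) = lam * om n * N / 128 := by rw [hc]; field_simp
  have e5 : lam * om n * (κ * d / 32) = a * d * (lam * om n * N / 32) := by rw [hκ]; ring
  rw [e1, e2, e3, e4, e5, ← mul_add] at this
  have h6 := le_of_mul_le_mul_left this (by positivity)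
  have : 0 < lam * om n * N := by positivity
  linarith

/-- downward paraboloid -/
noncomputable def Pb (n : ℕ) (s : ℝ) (p : EE n →L[ℝ] ℝ) (a : ℝ) (x1 z : EE n) : ℝ :=
  s + p (z - x1) - a / 2 * ‖z - x1‖ ^ 2

lemma aff_fderiv (s : ℝ) (p : EE n →L[ℝ] ℝ) (x1 : EE n) :
    fderiv ℝ (fun z => s + p (z - x1)) = fun _ => p := by
  ext1 z
  have : HasFDerivAt (fun z => s + p (z - x1)) p z := by
    have h1 : HasFDerivAt (fun z : EE n => z - x1) (ContinuousLinearMap.id ℝ (EE n)) z :=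
      (hasFDerivAt_id z).sub_const x1
    have h2 := (p.hasFDerivAt.comp z h1).const_add s
    simpa using h2
  exact this.fderiv

lemma aff_contDiff (s : ℝ) (p : EE n →L[ℝ] ℝ) (x1 : EE n) :
    ContDiff ℝ 2 (fun z => s + p (z - x1)) := by fun_prop

lemma aff_hess (s : ℝ) (p : EE n →L[ℝ] ℝ) (x1 z : EE n) :
    hess n (fun z => s + p (z - x1)) z = 0 := by
  ext i j
  rw [hess_eq (aff_contDiff s p x1).contDiffAt, aff_fderiv]
  simp

lemma quad_contDiff (a : ℝ) (x1 z : EE n) : ContDiffAt ℝ 2 (fun z : EE n => a * ‖z - x1‖ ^ 2) z :=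
  radial_contDiffAt (g := fun s => a * s) (by fun_prop)

lemma quad_deriv (a : ℝ) : deriv (fun s : ℝ => a * s) = fun _ => a := by
  ext s; simp

lemma quad_fderiv (a : ℝ) (x1 z : EE n) :
    fderiv ℝ (fun z : EE n => a * ‖z - x1‖ ^ 2) z = (2 * a) • innerSL ℝ (z - x1) := by
  have := radial_fderiv (g := fun s : ℝ => a * s) (x0 := x1) (x := z) (by fun_prop)
  rw [quad_deriv] at this
  exact this

lemma quad_hess (a : ℝ) (x1 z : EE n) :
    hess n (fun z : EE n => a * ‖z - x1‖ ^ 2) z = (2 * a) • (1 : Matrix (Fin n) (Fin n) ℝ) := by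
  have := radial_hess (g := fun s : ℝ => a * s) (x0 := x1) (x := z) (by fun_prop)
  rw [quad_deriv] at this
  simpa using this

lemma Pb_contDiff (s : ℝ) (p : EE n →L[ℝ] ℝ) (a : ℝ) (x1 z : EE n) : ContDiffAt ℝ 2 (Pb n s p a x1) z :=
  (aff_contDiff s p x1).contDiffAt.sub (quad_contDiff (a / 2) x1 z)

lemma Pb_fderiv (s : ℝ) (p : EE n →L[ℝ] ℝ) (a : ℝ) (x1 z : EE n) :
    fderiv ℝ (Pb n s p a x1) z = p - a • innerSL ℝ (z - x1) := by
  have h1 : fderiv ℝ (Pb n s p a x1) z = fderiv ℝ (fun z => s + p (z - x1)) z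
      - fderiv ℝ (fun z : EE n => a / 2 * ‖z - x1‖ ^ 2) z :=
    fderiv_fun_sub ((aff_contDiff s p x1).differentiable (by norm_num) z)
      ((quad_contDiff (a / 2) x1 z).differentiableAt (by norm_num))
  rw [h1, aff_fderiv, quad_fderiv]
  congr 2; ring

lemma Pb_hess (s : ℝ) (p : EE n →L[ℝ] ℝ) (a : ℝ) (x1 z : EE n) :
    hess n (Pb n s p a x1) z = -(a • (1 : Matrix (Fin n) (Fin n) ℝ)) := by
  have h1 : hess n (Pb n s p a x1) z = hess n (fun z => s + p (z - x1)) z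
      - hess n (fun z : EE n => a / 2 * ‖z - x1‖ ^ 2) z :=
    hess_sub (aff_contDiff s p x1).contDiffAt (quad_contDiff (a / 2) x1 z)
  rw [h1, aff_hess, quad_hess, zero_sub]
  congr 2; ring

lemma Pb_taylor (s : ℝ) (p : EE n →L[ℝ] ℝ) (a : ℝ) (x1 x z : EE n) :
    Pb n s p a x1 z = Pb n s p a x1 x + fderiv ℝ (Pb n s p a x1) x (z - x) - a / 2 * ‖z - x‖ ^ 2 := by
  rw [Pb_fderiv]
  unfold Pb
  have h1 : z - x1 = (z - x) + (x - x1) := by abel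
  rw [h1, map_add, @norm_add_sq_real, real_inner_comm]
  simp only [sub_apply, smul_apply, innerSL_apply_apply, smul_eq_mul]
  ring

lemma Tch_shift {u : EE n → ℝ} {U : Set (EE n)} (hu : ∀ x ∈ U, ContDiffAt ℝ 2 u x) (s : ℝ)
    (p : EE n →L[ℝ] ℝ) (a κ : ℝ) (x1 : EE n) :
    Tch n (fun z => u z - Pb n s p a x1 z) U κ ⊆ Tch n u U (κ + a) := by
  intro x hx
  refine ⟨hx.1, fun z hz => ?_⟩
  have h1 := hx.2 z hz
  have h2 : fderiv ℝ (fun z => u z - Pb n s p a x1 z) x = fderiv ℝ u x - fderiv ℝ (Pb n s p a x1) x :=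
    fderiv_fun_sub ((hu x hx.1).differentiableAt (by norm_num))
      ((Pb_contDiff s p a x1 x).differentiableAt (by norm_num))
  rw [h2] at h1
  have h3 := Pb_taylor s p a x1 x z
  simp only [sub_apply] at h1
  linarith

/-- measure of new contact points near an old one -/
lemma contact (hn : 1 ≤ n) (hlam : 0 < lam) (hL : lam ≤ Lam) :
    ∃ M0 : ℝ, 0 < M0 ∧ ∀ M, M0 ≤ M → ∃ η c : ℝ, 0 < η ∧ 0 < c ∧
    ∀ (u b h : EE n → ℝ) (Ω U : Set (EE n)) (x x1 x' : EE n) (a d : ℝ),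
      IsOpen Ω → ContDiffOn ℝ 2 u Ω → IsCompact U → U ⊆ Ω → 0 < a → 0 < d →
      x1 ∈ Tch n u U a → ‖x1 - x‖ ≤ d → ‖x' - x‖ ≤ d / 4 → Metric.closedBall x (3 * d) ⊆ U →
      (∀ z ∈ U, SS n lam Lam b h u z) →
      (∀ z, 0 ≤ b z) → Measurable b → Measurable h →
      NB n b (Metric.ball x (3 * d)) η →
      NB n (fun z => h z + ‖fderiv ℝ u x1‖ * b z) (Metric.ball x (3 * d)) (η * a * d) →
      ENNReal.ofReal (c * d) ^ n < volume (Tch n u U (M * a) ∩ Metric.ball x' (d / 4)) := by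
  obtain ⟨δ, c1, C1, hδ, hc1, hc1', hC1, hprop⟩ := propagation (n := n) hn hlam hL
  have hLam : 0 < Lam := hlam.trans_le hL
  have hn0 : (0:ℝ) < n := by exact_mod_cast hn
  have hom := om_pos (n := n)
  set C' := 5 + 3 * (n * Lam) * om n with hC'
  have hC'p : 0 < C' := by positivity
  set C2 := C1 * C' / c1 with hC2
  have hC2p : 0 < C2 := by positivity
  refine ⟨52 * C2 + 1, by positivity, fun M hM => ?_⟩
  obtain ⟨η8, c, hη8, hc, hsl⟩ := sliding (n := n) hn hlam hL C2 (n * Lam) (M - 1) hC2p (by positivity)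
    (by linarith)
  set η := min (min δ 1) (η8 / 5) with hη
  have hηp : 0 < η := by positivity
  have hη1 : η ≤ 1 := (min_le_left _ _).trans (min_le_right _ _)
  have hηδ : η ≤ δ := (min_le_left _ _).trans (min_le_left _ _)
  have hη5 : 5 * η ≤ η8 := by
    have : η ≤ η8 / 5 := min_le_right _ _
    linarith
  refine ⟨η, c, hηp, hc, ?_⟩
  intro u b h Ω U x x1 x' a d hΩ hu hU hUΩ ha hd hx1 hxd hx' hBU hss hb0 hbm hhm hb hh
  set p := fderiv ℝ u x1 with hp
  set P := Pb n (u x1) p a x1 with hP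
  set v : EE n → ℝ := fun z => u z - P z with hv
  have huA : ∀ z ∈ U, ContDiffAt ℝ 2 u z := fun z hz => hu.contDiffAt (hΩ.mem_nhds (hUΩ hz))
  have hvC : ContDiffOn ℝ 2 v Ω := hu.sub fun z _ => (Pb_contDiff _ _ _ _ z).contDiffWithinAt
  have hv0 : ∀ z ∈ U, 0 ≤ v z := by
    intro z hz
    have := hx1.2 z hz
    simp only [hv, hP, Pb]; linarith
  have hv1 : v x1 = 0 := by simp [hv, hP, Pb]
  set g0 : EE n → ℝ := fun z => (h z + ‖p‖ * b z) + 4 * a * d * b z with hg0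
  have hg0m : Measurable g0 := by fun_prop
  have hg0N : NB n g0 (Metric.ball x (3 * d)) (5 * η * a * d) := by
    refine (NB.add hn hh (hb.const_mul (c := 4 * a * d) (by positivity)) (by fun_prop) (by fun_prop)
      (by positivity) (by positivity)).mono (by linarith)
  have hbB : Metric.ball x (3 * d) ⊆ U := Metric.ball_subset_closedBall.trans hBU
  have hvs : ∀ z ∈ Metric.ball x (3 * d), SS n lam Lam b (fun z => g0 z + n * Lam * a) v z := by
    intro z hz
    have hzd : ‖z - x‖ < 3 * d := by rwa [Metric.mem_ball, dist_eq_norm] at hz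
    refine SS_sub (c := -(n * Lam * a)) (huA z (hbB hz)) (Pb_contDiff _ _ _ _ z) (hb0 z) (hss z (hbB hz)) ?_ ?_
    · intro A hA
      rw [Pb_hess]
      simp only [mul_neg, Matrix.mul_smul, mul_one, Matrix.trace_neg, Matrix.trace_smul, smul_eq_mul]
      have := mul_le_mul_of_nonneg_left hA.trace_le ha.le
      linarith
    · rw [Pb_fderiv]
      have h1 : ‖p - a • innerSL ℝ (z - x1)‖ ≤ ‖p‖ + 4 * a * d := by
        refine (norm_sub_le _ _).trans ?_
        rw [norm_smul, innerSL_apply_norm, Real.norm_of_nonneg ha.le]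
        have h2 : ‖z - x1‖ ≤ 4 * d := by
          have h3 := norm_add_le (z - x) (x - x1)
          rw [sub_add_sub_cancel, norm_sub_rev x x1] at h3
          linarith
        have := mul_le_mul_of_nonneg_left h2 ha.le
        linarith
      have := mul_le_mul_of_nonneg_left h1 (hb0 z)
      simp only [hg0]
      linarith
  have hsub : Metric.closedBall x' (40 * (d / 16)) ⊆ Metric.ball x (3 * d) := by
    intro z hz
    rw [Metric.mem_closedBall, dist_eq_norm] at hz
    rw [Metric.mem_ball, dist_eq_norm]
    have h3 := norm_add_le (z - x') (x' - x)
    rw [sub_add_sub_cancel] at h3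
    linarith
  have hsub' := Metric.ball_subset_closedBall.trans hsub
  have hex : ∃ x2 ∈ Metric.ball x' (d / 16), v x2 ≤ C2 * a * d ^ 2 := by
    by_contra hcon
    push Not at hcon
    have hNt : NB n (fun z => g0 z + n * Lam * a) (Metric.ball x (3 * d)) (C' * a * d) := by
      refine (NB.add hn hg0N (NB.const (c := n * Lam * a) (m := om n * (3 * d)) (by positivity)
        (vol_ball hn x (by positivity)).le) hg0m
        (by fun_prop) (by positivity) (by positivity)).mono ?_
      have : 5 * η * a * d ≤ 5 * 1 * a * d := by gcongr
      rw [hC']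
      linarith
    have h1 := hprop v b (fun z => g0 z + n * Lam * a) Ω x' (d / 16) (C2 * a * d ^ 2) (C' * a * d) hΩ hvC
      (by positivity) (hsub.trans (hbB.trans hUΩ)) (fun z hz => hv0 z (hbB (hsub hz)))
      (fun z hz => hvs z (hsub' hz)) hb0 hbm (by fun_prop) ((hb.mono hηδ).mono_set hsub')
      (hNt.mono_set hsub') (by positivity) (fun z hz => (hcon z hz).le) x1 (by
        rw [Metric.mem_closedBall, dist_eq_norm]
        have h3 := norm_add_le (x1 - x) (x - x')
        rw [sub_add_sub_cancel, norm_sub_rev x x'] at h3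
        linarith)
    rw [hv1] at h1
    have h2 : c1 * (C2 * a * d ^ 2) = C1 * C' * a * d ^ 2 := by rw [hC2]; field_simp
    have h3 : 0 < C1 * C' * a * d ^ 2 := by positivity
    rw [h2] at h1
    nlinarith
  obtain ⟨x2, hx2, hvx2⟩ := hex
  have hsub4 : Metric.ball x' (d / 4) ⊆ Metric.ball x (3 * d) :=
    (Metric.ball_subset_ball (by linarith)).trans hsub'
  have h1 := hsl v b g0 Ω U x' x2 a d hΩ hvC hU hUΩ hv0 ha hd
    ((Metric.closedBall_subset_closedBall (by linarith)).trans (hsub.trans hbB))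
    (Metric.ball_subset_closedBall hx2) hvx2 (fun z hz => hvs z (hsub4 hz)) hb0 hbm hg0m
    ((hb.mono (by linarith)).mono_set hsub4) ((hg0N.mono (by gcongr)).mono_set hsub4)
  refine h1.trans_le (measure_mono (Set.inter_subset_inter_left _ ?_))
  have h2 := Tch_shift huA (u x1) p a ((M - 1) * a) x1
  rwa [show (M - 1) * a + a = M * a by ring] at h2

end QSMP

namespace QSMP

variable {n : ℕ} {lam Lam : ℝ}

lemma cover (hn : 1 ≤ n) {D : Set (EE n)} {r : EE n → ℝ} {R : ℝ} (hr0 : ∀ x ∈ D, 0 < r x)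
    (hrR : ∀ x ∈ D, r x ≤ R) (ν : Measure (EE n))
    (hν : ∀ x ∈ D, ENNReal.ofReal (r x) ^ n ≤ ν (Metric.closedBall x (r x))) :
    volume D ≤ ENNReal.ofReal (5 * om n) ^ n * ν Set.univ := by
  obtain ⟨t, htD, hdis, hcov⟩ := Vitali.exists_disjoint_subfamily_covering_enlargement_closedBall
    D (fun x => x) r R hrR 5 (by norm_num)
  have hcount : t.Countable := by
    refine hdis.countable_of_nonempty_interior fun x hx => ?_
    refine ⟨x, ?_⟩
    have := Metric.ball_subset_interior_closedBall (x := x) (ε := r x)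
    exact this (Metric.mem_ball_self (hr0 x (htD hx)))
  have := hcount.to_subtype
  have hsub : D ⊆ ⋃ x ∈ t, Metric.closedBall x (5 * r x) := by
    intro x hx
    obtain ⟨y, hy, hxy⟩ := hcov x hx
    exact Set.mem_biUnion hy (hxy (Metric.mem_closedBall_self (hr0 x hx).le))
  calc volume D ≤ volume (⋃ x ∈ t, Metric.closedBall x (5 * r x)) := measure_mono hsub
    _ ≤ ∑' x : t, volume (Metric.closedBall (x : EE n) (5 * r x)) := measure_biUnion_le _ hcount _
    _ ≤ ∑' x : t, ENNReal.ofReal (5 * om n) ^ n * ν (Metric.closedBall (x : EE n) (r x)) := by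
        refine ENNReal.tsum_le_tsum fun x => ?_
        have hx := htD x.2
        have h0 := hr0 _ hx
        have hom := om_pos (n := n)
        rw [vol_closedBall hn _ (by positivity), show om n * (5 * r x) = (5 * om n) * r x by ring,
          ENNReal.ofReal_mul (by positivity), mul_pow]
        gcongr
        exact hν _ hx
    _ = ENNReal.ofReal (5 * om n) ^ n * ∑' x : t, ν (Metric.closedBall (x : EE n) (r x)) :=
        ENNReal.tsum_mul_left
    _ = ENNReal.ofReal (5 * om n) ^ n * ν (⋃ x ∈ t, Metric.closedBall x (r x)) := by
        rw [measure_biUnion hcount hdis fun x _ => Metric.isClosed_closedBall.measurableSet]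
    _ ≤ _ := by gcongr; exact Set.subset_univ _

/-- gradient bound on contact points -/
lemma grad_bound {u : EE n → ℝ} {U : Set (EE n)} {x : EE n} {a s CP τ r0 : ℝ} {γ : ℕ}
    (hx : x ∈ Tch n u U a) (hux : 0 ≤ u x) (hs : 0 < s) (ha : 0 < a) (hsr : s / 8 ≤ r0)
    (hBU : Metric.closedBall x (9 / 8 * s) ⊆ U) (hx6 : ‖x‖ + 6 * s < 1)
    (hP : ∀ (y : EE n) (ρ : ℝ), 0 < ρ → ρ ≤ r0 → ‖y‖ + 40 * ρ < 1 →
        ∃ x ∈ Metric.ball y ρ, u x ≤ CP * τ / ρ ^ γ) (hCP : 0 < CP) (hτ : 0 < τ) :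
    ‖fderiv ℝ u x‖ ≤ max (a * s) (5 * 8 ^ γ * CP * τ / s ^ (γ + 1)) := by
  set p := fderiv ℝ u x with hp
  by_contra hcon
  push Not at hcon
  have h1 : a * s < ‖p‖ := lt_of_le_of_lt (le_max_left _ _) hcon
  have h2 : 5 * 8 ^ γ * CP * τ / s ^ (γ + 1) < ‖p‖ := lt_of_le_of_lt (le_max_right _ _) hcon
  have hp0 : 0 < ‖p‖ := lt_trans (by positivity) h1
  set e0 : EE n := (InnerProductSpace.toDual ℝ (EE n)).symm p with he0
  have he0n : ‖e0‖ = ‖p‖ := by simp [he0]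
  set e : EE n := ‖p‖⁻¹ • e0 with he
  have hen : ‖e‖ = 1 := by
    rw [he, norm_smul, he0n, norm_inv, norm_norm, inv_mul_cancel₀ hp0.ne']
  have hpe0 : p e0 = ‖p‖ ^ 2 := by
    have := InnerProductSpace.toDual_symm_apply (𝕜 := ℝ) (x := e0) (y := p)
    rw [← this, ← he0, real_inner_self_eq_norm_sq, he0n]
  have hpe : p e = ‖p‖ := by
    rw [he, map_smul, hpe0, smul_eq_mul]; field_simp
  obtain ⟨z, hz, huz⟩ := hP (x + s • e) (s / 8) (by positivity) hsr (by
    have := norm_add_le x (s • e)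
    rw [norm_smul, hen, Real.norm_of_nonneg hs.le] at this
    linarith)
  set v := z - (x + s • e) with hv
  have hvn : ‖v‖ < s / 8 := by rwa [Metric.mem_ball, dist_eq_norm] at hz
  have hzx : z - x = s • e + v := by rw [hv]; abel
  have hzn : ‖z - x‖ ≤ 9 / 8 * s := by
    rw [hzx]
    have := norm_add_le (s • e) v
    rw [norm_smul, hen, Real.norm_of_nonneg hs.le] at this
    linarith
  have hzU : z ∈ U := hBU (by rw [Metric.mem_closedBall, dist_eq_norm]; exact hzn)
  have h3 := hx.2 z hzU
  have h4 : ‖p‖ * (s - s / 8) ≤ p (z - x) := by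
    rw [hzx, map_add, map_smul, hpe, smul_eq_mul]
    have h5 := p.le_opNorm v
    have h6 : ‖p‖ * ‖v‖ ≤ ‖p‖ * (s / 8) := by gcongr
    have h7 := neg_abs_le (p v)
    rw [Real.norm_eq_abs] at h5
    linarith
  have h5 : a / 2 * ‖z - x‖ ^ 2 ≤ a / 2 * (9 / 8 * s) ^ 2 := by gcongr
  have h6 : ‖p‖ * s / 5 ≤ u z := by
    have h7 : a * s * s ≤ ‖p‖ * s := by gcongr
    have h8 : 0 < ‖p‖ * s := by positivity
    nlinarith
  have h7 : ‖p‖ * s / 5 ≤ CP * τ / (s / 8) ^ γ := h6.trans huz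
  have h8 : 5 * 8 ^ γ * CP * τ / s ^ (γ + 1) = 5 * (CP * τ / (s / 8) ^ γ) / s := by
    rw [div_pow, pow_succ]; field_simp
  rw [h8, div_lt_iff₀ hs] at h2
  linarith

/-- conclusion of `contact` -/
def ContactP (n : ℕ) (lam Lam M η c : ℝ) : Prop :=
    ∀ (u b h : EE n → ℝ) (Ω U : Set (EE n)) (x x1 x' : EE n) (a d : ℝ),
      IsOpen Ω → ContDiffOn ℝ 2 u Ω → IsCompact U → U ⊆ Ω → 0 < a → 0 < d →
      x1 ∈ Tch n u U a → ‖x1 - x‖ ≤ d → ‖x' - x‖ ≤ d / 4 → Metric.closedBall x (3 * d) ⊆ U →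
      (∀ z ∈ U, SS n lam Lam b h u z) →
      (∀ z, 0 ≤ b z) → Measurable b → Measurable h →
      NB n b (Metric.ball x (3 * d)) η →
      NB n (fun z => h z + ‖fderiv ℝ u x1‖ * b z) (Metric.ball x (3 * d)) (η * a * d) →
      ENNReal.ofReal (c * d) ^ n < volume (Tch n u U (M * a) ∩ Metric.ball x' (d / 4))

lemma one_step {M η c K1 α δ a Pk G : ℝ} {u b h : EE n → ℝ} (hn : 1 ≤ n) (hη : 0 < η) (hc : 0 < c)
    (hC : ContactP n lam Lam M η c) (hS : Sup n lam Lam K1 α b h u) (hδ : 0 < δ) (hδ1 : δ ≤ 1 / 2)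
    (ha : 0 < a)
    (hne : ∀ x ∈ Metric.closedBall (0 : EE n) (1 - δ),
      ∃ x1 ∈ Tch n u (Metric.closedBall 0 (1 - δ / 2)) a, ‖x1 - x‖ ≤ δ / 16)
    (hgrad : ∀ x1 ∈ Tch n u (Metric.closedBall 0 (1 - δ / 2)) a, ‖x1‖ ≤ 1 - 15 / 16 * δ →
      ‖fderiv ℝ u x1‖ ≤ Pk)
    (hbs : ∀ (x : EE n) (d : ℝ), 0 < d → d ≤ δ → NB n b (Metric.ball x d) η)
    (hF : NB n (fun z => h z + Pk * b z) (Metric.ball 0 1) (G * a)) (hG : 0 ≤ G) :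
    volume (Metric.closedBall 0 (1 - δ) \ Tch n u (Metric.closedBall 0 (1 - δ / 2)) a)
      ≤ ENNReal.ofReal (15 * om n) ^ n * ((ENNReal.ofReal c ^ n)⁻¹ *
        volume ((Metric.closedBall 0 (1 - δ) \ Tch n u (Metric.closedBall 0 (1 - δ / 2)) a) \
          (Metric.closedBall 0 (1 - δ) \ Tch n u (Metric.closedBall 0 (1 - δ / 2)) (M * a)))
        + ENNReal.ofReal (G / η) ^ n) := by
  set U := Metric.closedBall (0 : EE n) (1 - δ / 2) with hU
  set B := Metric.closedBall (0 : EE n) (1 - δ) with hB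
  set T := Tch n u U a with hT
  set T' := Tch n u U (M * a) with hT'
  have hUb : U ⊆ Metric.ball (0 : EE n) 1 := by
    intro z hz
    simp [hU] at hz ⊢
    linarith
  have hTc : IsClosed T := Tch_closed Metric.isOpen_ball Metric.isClosed_closedBall hUb hS.uC a
  have hTc' : IsClosed T' := Tch_closed Metric.isOpen_ball Metric.isClosed_closedBall hUb hS.uC (M * a)
  have hBm : MeasurableSet B := Metric.isClosed_closedBall.measurableSet
  have hDm : MeasurableSet ((B \ T) \ (B \ T')) :=
    (hBm.diff hTc.measurableSet).diff (hBm.diff hTc'.measurableSet)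
  have hhm := hS.hm
  have hbm := hS.bm
  set F : EE n → ℝ := fun z => h z + Pk * b z with hFd
  have hFm : Measurable fun z => ENNReal.ofReal (F z) ^ n := by fun_prop
  have hηa : 0 < η * a := by positivity
  have ec0 : ENNReal.ofReal c ^ n ≠ 0 := pow_ne_zero _ (by simpa using hc)
  have ect : ENNReal.ofReal c ^ n ≠ ⊤ := ENNReal.pow_ne_top (by simp)
  have ee0 : ENNReal.ofReal (η * a) ^ n ≠ 0 := pow_ne_zero _ (by simpa using hηa)
  have eet : ENNReal.ofReal (η * a) ^ n ≠ ⊤ := ENNReal.pow_ne_top (by simp)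
  set ν : Measure (EE n) := (ENNReal.ofReal c ^ n)⁻¹ • volume.restrict ((B \ T) \ (B \ T'))
    + (ENNReal.ofReal (η * a) ^ n)⁻¹ • (volume.restrict (Metric.ball 0 1)).withDensity
        (fun z => ENNReal.ofReal (F z) ^ n) with hν
  have h0B : (0 : EE n) ∈ B := by simp [hB]; linarith
  have hTne : T.Nonempty := by
    obtain ⟨x1, h1, -⟩ := hne 0 h0B
    exact ⟨x1, h1⟩
  have hd0 : ∀ x ∈ B \ T, 0 < Metric.infDist x T := fun x hx =>
    (hTc.notMem_iff_infDist_pos hTne).1 hx.2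
  have hd1 : ∀ x ∈ B \ T, Metric.infDist x T ≤ δ / 16 := by
    intro x hx
    obtain ⟨x1, h1, h2⟩ := hne x hx.1
    refine (Metric.infDist_le_dist_of_mem h1).trans ?_
    rw [dist_comm, dist_eq_norm]; exact h2
  have hpt : ∀ x ∈ B \ T, ENNReal.ofReal (Metric.infDist x T) ^ n
      ≤ ν (Metric.closedBall x (3 * Metric.infDist x T)) := by
    intro x hx
    have hd := hd0 x hx
    have hdδ := hd1 x hx
    obtain ⟨x1, hx1, hx1d⟩ := hTc.exists_infDist_eq_dist hTne x
    set d := Metric.infDist x T with hdd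
    have hxR : ‖x‖ ≤ 1 - δ := by simpa [hB] using hx.1
    have hx1x : ‖x1 - x‖ ≤ d := by rw [hx1d, dist_comm, dist_eq_norm]
    have hx1n : ‖x1‖ ≤ 1 - 15 / 16 * δ := by
      have := norm_add_le (x1 - x) x
      rw [sub_add_cancel] at this
      linarith
    have hpb := hgrad x1 hx1 hx1n
    have hcB : Metric.closedBall x (3 * d) ⊆ U := by
      intro z hz
      rw [Metric.mem_closedBall, dist_eq_norm] at hz
      have := norm_add_le (z - x) x
      rw [sub_add_cancel] at this
      simp only [hU, Metric.mem_closedBall, dist_zero_right]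
      linarith
    rcases le_or_gt (∫⁻ z in Metric.ball x (3 * d), ENNReal.ofReal (F z) ^ n)
      (ENNReal.ofReal (η * a * d) ^ n) with hgood | hbad
    · have hR : 0 < 1 - δ := by linarith
      set x' : EE n := (1 - d / (4 * (1 - δ))) • x with hx'
      have hθ0 : 0 ≤ d / (4 * (1 - δ)) := by positivity
      have hθ1 : d / (4 * (1 - δ)) ≤ 1 := by
        rw [div_le_one (by linarith)]; linarith
      have hx'x : ‖x' - x‖ ≤ d / 4 := by
        have : x' - x = (-(d / (4 * (1 - δ)))) • x := by rw [hx']; module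
        rw [this, norm_smul, norm_neg, Real.norm_of_nonneg hθ0]
        calc d / (4 * (1 - δ)) * ‖x‖ ≤ d / (4 * (1 - δ)) * (1 - δ) := by gcongr
          _ = d / 4 := by field_simp
      have hx'n : ‖x'‖ + d / 4 ≤ 1 - δ := by
        rw [hx', norm_smul, Real.norm_of_nonneg (by linarith)]
        have : (1 - d / (4 * (1 - δ))) * ‖x‖ ≤ (1 - d / (4 * (1 - δ))) * (1 - δ) := by
          apply mul_le_mul_of_nonneg_left hxR; linarith
        have h2 : (1 - d / (4 * (1 - δ))) * (1 - δ) = 1 - δ - d / 4 := by field_simp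
        linarith
      have hNB : NB n (fun z => h z + ‖fderiv ℝ u x1‖ * b z) (Metric.ball x (3 * d)) (η * a * d) := by
        have : NB n F (Metric.ball x (3 * d)) (η * a * d) := hgood
        refine this.mono_fun Metric.isOpen_ball.measurableSet fun z _ => ?_
        have := mul_le_mul_of_nonneg_right hpb (hS.b0 z)
        simp only [hFd]; linarith
      have hlow := hC u b h (Metric.ball 0 1) U x x1 x' a d Metric.isOpen_ball hS.uC
        (isCompact_closedBall _ _) hUb ha hd hx1 hx1x hx'x hcB (fun z hz => hS.ss z (hUb hz))
        hS.b0 hS.bm hS.hm (hbs x (3 * d) (by linarith) (by linarith)) hNB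
      have hsub : T' ∩ Metric.ball x' (d / 4) ⊆
          Metric.closedBall x (3 * d) ∩ ((B \ T) \ (B \ T')) := by
        rintro z ⟨hz1, hz2⟩
        rw [Metric.mem_ball, dist_eq_norm] at hz2
        have hzx : ‖z - x‖ < d := by
          have := norm_add_le (z - x') (x' - x)
          rw [sub_add_sub_cancel] at this
          linarith
        have hzB : z ∈ B := by
          have := norm_add_le (z - x') x'
          rw [sub_add_cancel] at this
          simp only [hB, Metric.mem_closedBall, dist_zero_right]
          linarith
        have hzT : z ∉ T := fun hzT => by
          have := Metric.infDist_le_dist_of_mem (x := x) hzT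
          rw [dist_comm, dist_eq_norm] at this
          linarith
        refine ⟨?_, ⟨hzB, hzT⟩, fun h1 => h1.2 hz1⟩
        rw [Metric.mem_closedBall, dist_eq_norm]; linarith
      have h1 : ENNReal.ofReal c ^ n * ENNReal.ofReal d ^ n ≤
          volume.restrict ((B \ T) \ (B \ T')) (Metric.closedBall x (3 * d)) := by
        rw [← mul_pow, ← ENNReal.ofReal_mul hc.le, Measure.restrict_apply Metric.isClosed_closedBall.measurableSet]
        exact hlow.le.trans (measure_mono hsub)
      rw [ENNReal.mul_le_iff_le_inv ec0 ect] at h1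
      refine h1.trans ?_
      rw [hν, Measure.add_apply, Measure.smul_apply, smul_eq_mul]
      exact le_self_add
    · have h1 : ENNReal.ofReal (η * a) ^ n * ENNReal.ofReal d ^ n ≤
          (volume.restrict (Metric.ball 0 1)).withDensity (fun z => ENNReal.ofReal (F z) ^ n)
            (Metric.closedBall x (3 * d)) := by
        rw [← mul_pow, ← ENNReal.ofReal_mul hηa.le, withDensity_apply _ Metric.isClosed_closedBall.measurableSet,
          Measure.restrict_restrict Metric.isClosed_closedBall.measurableSet]
        refine hbad.le.trans (lintegral_mono_set ?_)
        exact Set.subset_inter Metric.ball_subset_closedBall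
          (Metric.ball_subset_closedBall.trans (hcB.trans hUb))
      rw [ENNReal.mul_le_iff_le_inv ee0 eet] at h1
      refine h1.trans ?_
      rw [hν, Measure.add_apply, Measure.smul_apply, Measure.smul_apply, smul_eq_mul, smul_eq_mul]
      exact le_add_self
  have h3 : ENNReal.ofReal (3:ℝ) ^ n ≠ 0 := pow_ne_zero _ (by simp)
  have hcov := cover hn (D := B \ T) (r := fun x => 3 * Metric.infDist x T) (R := δ)
    (fun x hx => by have := hd0 x hx; positivity) (fun x hx => by have := hd1 x hx; linarith)
    (ENNReal.ofReal 3 ^ n • ν) (fun x hx => by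
      rw [ENNReal.ofReal_mul (by norm_num), mul_pow, Measure.smul_apply, smul_eq_mul]
      gcongr
      exact hpt x hx)
  refine hcov.trans ?_
  have h15 : ENNReal.ofReal (15 * om n) ^ n = ENNReal.ofReal (5 * om n) ^ n * ENNReal.ofReal 3 ^ n := by
    rw [← mul_pow, ← ENNReal.ofReal_mul (by have := om_pos (n := n); positivity)]
    congr 2; ring
  rw [h15, Measure.smul_apply, smul_eq_mul, ← mul_assoc]
  gcongr
  rw [hν, Measure.add_apply, Measure.smul_apply, Measure.smul_apply, smul_eq_mul, smul_eq_mul,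
    Measure.restrict_apply_univ]
  gcongr
  rw [ENNReal.inv_mul_le_iff ee0 eet, ← mul_pow, ← ENNReal.ofReal_mul hηa.le,
    withDensity_apply _ MeasurableSet.univ, Measure.restrict_univ]
  refine le_trans hF (le_of_eq ?_)
  congr 2
  field_simp

lemma decay {y : ℕ → ℝ} {A1 A2 V : ℝ} (hA1 : 1 ≤ A1) (hA2 : 0 ≤ A2) (hV : 0 ≤ V) (hy0 : y 0 ≤ V)
    (h : ∀ k, y k ≤ A1 * (y k - y (k + 1)) + A2 * (1 / 2) ^ k) (k : ℕ) :
    y k ≤ (V + 2 * A2) * (1 - 1 / (2 * A1)) ^ k := by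
  set μ := 1 - 1 / (2 * A1) with hμ
  have hA0 : 0 < A1 := by linarith
  have hμ2 : 1 / 2 ≤ μ := by
    have : 1 / (2 * A1) ≤ 1 / 2 := by
      apply one_div_le_one_div_of_le <;> linarith
    linarith
  have hAμ : A1 * μ = A1 - 1 / 2 := by rw [hμ]; field_simp
  induction k with
  | zero => simp; linarith
  | succ k ih =>
    have h1 := h k
    have h2 : (1 / 2 : ℝ) ^ k ≤ μ ^ k := by gcongr
    have h3 : A2 * (1 / 2) ^ k ≤ A2 * μ ^ k := by gcongr
    have h4 : 0 ≤ μ ^ k := by positivity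
    have h5 : A1 * y (k + 1) ≤ A1 * ((V + 2 * A2) * μ ^ (k + 1)) := by
      have e : A1 * ((V + 2 * A2) * μ ^ (k + 1)) = (V + 2 * A2) * μ ^ k * (A1 * μ) := by ring
      rw [e, hAμ]
      have h6 : (A1 - 1) * y k ≤ (A1 - 1) * ((V + 2 * A2) * μ ^ k) := by
        apply mul_le_mul_of_nonneg_left ih; linarith
      have h7 : 0 ≤ V * μ ^ k := by positivity
      nlinarith
    exact le_of_mul_le_mul_left h5 hA0

end QSMP

namespace QSMP

variable {n : ℕ} {lam Lam : ℝ}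

/-- small values of `u` at small scales -/
def PP (n : ℕ) (u : EE n → ℝ) (r0 CP τ : ℝ) (γ : ℕ) : Prop :=
  ∀ (y : EE n) (ρ : ℝ), 0 < ρ → ρ ≤ r0 → ‖y‖ + 40 * ρ < 1 →
    ∃ x ∈ Metric.ball y ρ, u x ≤ CP * τ / ρ ^ γ

lemma cb_sub {x : EE n} {r R : ℝ} (h : ‖x‖ + r ≤ R) : Metric.closedBall x r ⊆ Metric.closedBall 0 R := by
  intro z hz
  rw [mem_closedBall_iff_norm] at hz
  rw [mem_closedBall_zero_iff]
  have := norm_sub_norm_le z x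
  linarith

lemma base_contact (hn : 1 ≤ n) (hlam : 0 < lam) (hL : lam ≤ Lam) :
    ∃ η : ℝ, 0 < η ∧ ∀ (K1 α τ δ r0 CP Ch A0 : ℝ) (γ : ℕ) (b h u : EE n → ℝ),
      0 < α → 0 ≤ K1 → Sup n lam Lam K1 α b h u → 0 < τ → 0 < CP → 0 < Ch →
      NB n h (Metric.ball 0 1) (Ch * τ) → PP n u r0 CP τ γ → 0 < δ → δ ≤ 1 / 2 → δ ≤ r0 →
      K1 * δ ^ α ≤ η → 52 * (16 * 64 ^ γ * CP + 4 * Ch / η) ≤ A0 →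
      ∀ x ∈ Metric.closedBall (0 : EE n) (1 - δ),
        ∃ x1 ∈ Tch n u (Metric.closedBall 0 (1 - δ / 2)) (A0 * τ / δ ^ (γ + 2)), ‖x1 - x‖ ≤ δ / 16 := by
  obtain ⟨η, c, hη, hc, H⟩ := sliding hn hlam hL 1 0 52 one_pos le_rfl (by norm_num)
  refine ⟨η, hη, ?_⟩
  intro K1 α τ δ r0 CP Ch A0 γ b h u hα hK hS hτ hCP hCh hh hP hδ hδ1 hδr hδη hA0 x hx
  rw [mem_closedBall_zero_iff] at hx
  obtain ⟨x2, hx2, hu2⟩ := hP x (δ / 64) (by positivity) (by linarith) (by linarith)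
  set A' := 16 * 64 ^ γ * CP + 4 * Ch / η with hA'
  have hA'0 : 0 < A' := by positivity
  set a := A' * τ / δ ^ (γ + 2) with ha
  have ha0 : 0 < a := by positivity
  have hU : Metric.closedBall (0 : EE n) (1 - δ / 2) ⊆ Metric.ball 0 1 :=
    Metric.closedBall_subset_ball (by linarith)
  have hxU : Metric.closedBall x (δ / 4 / 4) ⊆ Metric.closedBall 0 (1 - δ / 2) :=
    cb_sub (by linarith)
  have hbU : Metric.ball x (δ / 4 / 4) ⊆ Metric.ball 0 1 :=
    Metric.ball_subset_closedBall.trans (hxU.trans hU)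
  have h1 : u x2 ≤ 1 * a * (δ / 4) ^ 2 := by
    refine hu2.trans ?_
    have e1 : CP * τ / (δ / 64) ^ γ = (16 * 64 ^ γ * CP) * τ / δ ^ (γ + 2) * (δ / 4) ^ 2 := by
      rw [div_pow]; field_simp; ring
    rw [e1, one_mul, ha]
    gcongr
    rw [hA']
    have : 0 ≤ 4 * Ch / η := by positivity
    linarith
  have h2 : Ch * τ ≤ η * a * (δ / 4) := by
    have e2 : Ch * τ = η * ((4 * Ch / η) * τ / δ) * (δ / 4) := by field_simp
    rw [e2, ha]
    have h3 : δ ^ (γ + 2) ≤ δ := by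
      calc δ ^ (γ + 2) ≤ δ ^ 1 := pow_le_pow_of_le_one hδ.le (by linarith) (by omega)
        _ = δ := pow_one _
    gcongr
    rw [hA']
    have : 0 ≤ 16 * 64 ^ γ * CP := by positivity
    linarith
  have h4 := H u b h (Metric.ball 0 1) (Metric.closedBall 0 (1 - δ / 2)) x x2 a (δ / 4)
    Metric.isOpen_ball hS.uC (isCompact_closedBall _ _) hU (fun z hz => hS.u0 z (hU hz)) ha0
    (by positivity) hxU (by
      have := Metric.ball_subset_closedBall hx2
      convert this using 2; ring) h1 (by
      intro z hz
      have := hS.ss z (hbU hz)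
      simpa [SS] using this) hS.b0 hS.bm hS.hm
    (hS.bNr hα hK (by positivity) (by linarith) hδη) ((hh.mono_set hbU).mono h2)
  have h5 : (Tch n u (Metric.closedBall 0 (1 - δ / 2)) (52 * a) ∩ Metric.ball x (δ / 4 / 4)).Nonempty :=
    nonempty_of_measure_ne_zero (ne_bot_of_gt h4)
  obtain ⟨x1, hx1, hx1'⟩ := h5
  refine ⟨x1, Tch_mono ?_ hx1, ?_⟩
  · have : 52 * a = (52 * A') * τ / δ ^ (γ + 2) := by rw [ha]; ring
    rw [this]
    gcongr
  · rw [mem_ball_iff_norm] at hx1'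
    linarith

/-- the set of points not touched by paraboloids of opening `a` -/
def DD (n : ℕ) (u : EE n → ℝ) (δ a : ℝ) : Set (EE n) :=
  Metric.closedBall (0 : EE n) (1 - δ) \ Tch n u (Metric.closedBall 0 (1 - δ / 2)) a

lemma small_rpow {K1 α m : ℝ} (hα : 0 < α) (hK : 0 ≤ K1) (hm : 0 < m) :
    ∃ δ1 : ℝ, 0 < δ1 ∧ ∀ δ, 0 < δ → δ ≤ δ1 → K1 * δ ^ α ≤ m := by
  refine ⟨(m / (K1 + 1)) ^ (1 / α), by positivity, ?_⟩
  intro δ h0 h1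
  have h2 : δ ^ α ≤ m / (K1 + 1) := by
    calc δ ^ α ≤ ((m / (K1 + 1)) ^ (1 / α)) ^ α := by gcongr
      _ = _ := by rw [← Real.rpow_mul (by positivity), one_div_mul_cancel hα.ne', Real.rpow_one]
  have h3 : (K1 + 1) * (m / (K1 + 1)) = m := mul_div_cancel₀ _ (by linarith)
  have h4 : K1 * δ ^ α ≤ (K1 + 1) * (m / (K1 + 1)) :=
    mul_le_mul (by linarith) h2 (by positivity) (by linarith)
  linarith

set_option maxHeartbeats 1000000 in
theorem iteration (hn : 1 ≤ n) (hlam : 0 < lam) (hL : lam ≤ Lam) (K1 α r0 CP Ch : ℝ) (γ : ℕ)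
    (hα : 0 < α) (hK : 0 ≤ K1) (hr0 : 0 < r0) (hCP : 0 < CP) (hCh : 0 < Ch) :
    ∃ M A μ C δs : ℝ, 1 ≤ M ∧ 1 ≤ A ∧ 0 < μ ∧ μ < 1 ∧ 0 < C ∧ 0 < δs ∧ δs ≤ 1 / 2 ∧
    ∀ (b h u : EE n → ℝ) (τ : ℝ), Sup n lam Lam K1 α b h u → 0 < τ →
      NB n h (Metric.ball 0 1) (Ch * τ) → PP n u r0 CP τ γ → ∀ δ, 0 < δ → δ ≤ δs → ∀ k : ℕ,
      volume (DD n u δ (A * τ * M ^ k / δ ^ (γ + 2))) ≤ ENNReal.ofReal (C * μ ^ k) ∧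
      ∀ x ∈ Tch n u (Metric.closedBall 0 (1 - δ / 2)) (A * τ * M ^ k / δ ^ (γ + 2)),
        ‖x‖ ≤ 1 - 15 / 16 * δ → ‖fderiv ℝ u x‖ ≤ A * τ * M ^ k / δ ^ (γ + 2) / 2 ^ k := by
  obtain ⟨η8, hη8, hbase⟩ := base_contact (n := n) hn hlam hL
  obtain ⟨M0, hM0, hcon⟩ := contact (n := n) hn hlam hL
  set M := max M0 (2 ^ (γ + 2)) with hM
  obtain ⟨η, c, hη, hc, hC⟩ := hcon M (le_max_left _ _)
  have hom : 0 < om n := om_pos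
  set A := 52 * (16 * 64 ^ γ * CP + 4 * Ch / η8) + 5 * 8 ^ γ * CP * 8 ^ (γ + 1) + 1 with hA
  set A1 := max 1 ((15 * om n / c) ^ n) with hA1
  set A2 := (15 * om n * (Ch + K1) / η) ^ n with hA2
  have hA11 : 1 ≤ A1 := le_max_left _ _
  have hA20 : 0 ≤ A2 := by positivity
  have hMM : (2:ℝ) ^ (γ + 2) ≤ M := le_max_right _ _
  have hM2 : 2 ≤ M := by
    refine le_trans ?_ hMM
    calc (2:ℝ) = 2 ^ 1 := (pow_one _).symm
      _ ≤ 2 ^ (γ + 2) := pow_le_pow_right₀ (by norm_num) (by omega)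
  have hAbase : 52 * (16 * 64 ^ γ * CP + 4 * Ch / η8) ≤ A := by
    have : 0 ≤ 5 * 8 ^ γ * CP * 8 ^ (γ + 1) := by positivity
    rw [hA]; linarith
  have hAgrad : 5 * 8 ^ γ * CP * 8 ^ (γ + 1) ≤ A := by
    have : 0 ≤ 52 * (16 * 64 ^ γ * CP + 4 * Ch / η8) := by positivity
    rw [hA]; linarith
  have hAone : 1 ≤ A := by
    have : 0 ≤ 52 * (16 * 64 ^ γ * CP + 4 * Ch / η8) := by positivity
    have : 0 ≤ 5 * 8 ^ γ * CP * 8 ^ (γ + 1) := by positivity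
    rw [hA]; linarith
  -- smallness of δ
  obtain ⟨δ1, hδ10, hδ1⟩ : ∃ δ1 : ℝ, 0 < δ1 ∧ ∀ δ, 0 < δ → δ ≤ δ1 → K1 * δ ^ α ≤ min η η8 := by
    exact small_rpow hα hK (lt_min hη hη8)
  clear_value M A A1 A2
  refine ⟨M, A, 1 - 1 / (2 * A1), (om n) ^ n + 2 * A2, min δ1 (min r0 (1 / 2)), by linarith, hAone,
    ?_, ?_, by positivity, by positivity, (min_le_right _ _).trans (min_le_right _ _), ?_⟩
  · have : 1 / (2 * A1) ≤ 1 / 2 := by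
      apply one_div_le_one_div_of_le <;> linarith
    linarith
  · have : 0 < 1 / (2 * A1) := by positivity
    linarith
  intro b h u τ hS hτ hh hP δ hδ hδs
  have hδδ1 : δ ≤ δ1 := hδs.trans (min_le_left _ _)
  have hδr0 : δ ≤ r0 := hδs.trans ((min_le_right _ _).trans (min_le_left _ _))
  have hδh : δ ≤ 1 / 2 := hδs.trans ((min_le_right _ _).trans (min_le_right _ _))
  have hsm := hδ1 δ hδ hδδ1
  have hδp : δ ^ (γ + 2) ≤ 1 := pow_le_one₀ hδ.le (by linarith)
  have hbase' := hbase K1 α τ δ r0 CP Ch A γ b h u hα hK hS hτ hCP hCh hh hP hδ hδh hδr0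
    (hsm.trans (min_le_right _ _)) hAbase
  set a : ℕ → ℝ := fun k => A * τ * M ^ k / δ ^ (γ + 2) with ha
  have ha0 : ∀ k, 0 < a k := fun k => by
    have : 0 < M ^ k := by positivity
    have : 0 < A := by linarith
    simp only [ha]; positivity
  have hUb : Metric.closedBall (0 : EE n) (1 - δ / 2) ⊆ Metric.ball 0 1 :=
    Metric.closedBall_subset_ball (by linarith)
  -- gradient
  have hgrad : ∀ k, ∀ x ∈ Tch n u (Metric.closedBall 0 (1 - δ / 2)) (a k),
        ‖x‖ ≤ 1 - 15 / 16 * δ → ‖fderiv ℝ u x‖ ≤ a k / 2 ^ k := by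
    intro k x hx hxn
    have hk1 : (1:ℝ) ≤ 2 ^ k := one_le_pow₀ (by norm_num)
    have hs8 : δ / 8 / 2 ^ k ≤ δ / 8 := div_le_self (by positivity) hk1
    have hs0 : 0 < δ / 8 / 2 ^ k := by positivity
    have := grad_bound (s := δ / 8 / 2 ^ k) hx (hS.u0 x (hUb hx.1)) hs0 (ha0 k) (by linarith)
      (cb_sub (by linarith)) (by linarith) hP hCP hτ
    refine this.trans (max_le ?_ ?_)
    · rw [← mul_div_assoc]
      gcongr
      have := ha0 k
      nlinarith
    · have e1 : 5 * 8 ^ γ * CP * τ / (δ / 8 / 2 ^ k) ^ (γ + 1)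
          = (5 * 8 ^ γ * CP * 8 ^ (γ + 1)) * τ * (2 ^ (γ + 2)) ^ k / δ ^ (γ + 1) / 2 ^ k := by
        rw [div_pow, div_pow]
        have : ((2:ℝ) ^ (γ + 2)) ^ k = (2 ^ k) ^ (γ + 1) * 2 ^ k := by
          rw [← pow_mul, ← pow_mul, ← pow_add]; congr 1; ring
        rw [this]
        field_simp
      rw [e1]
      have h3 : δ ^ (γ + 2) ≤ δ ^ (γ + 1) :=
        pow_le_pow_of_le_one hδ.le (by linarith) (by omega)
      simp only [ha]
      gcongr
  have hvol0 : volume (Metric.closedBall (0 : EE n) (1 - δ)) ≤ ENNReal.ofReal (om n ^ n) := by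
    rw [vol_closedBall hn _ (by linarith), ENNReal.ofReal_pow hom.le]
    gcongr
    nlinarith
  have hDfin : ∀ k, volume (DD n u δ (a k)) ≠ ∞ := fun k =>
    ne_top_of_le_ne_top ENNReal.ofReal_ne_top ((measure_mono Set.sdiff_subset).trans hvol0)
  have hDm : ∀ k, MeasurableSet (DD n u δ (a k)) := fun k =>
    Metric.isClosed_closedBall.measurableSet.diff
      (Tch_closed Metric.isOpen_ball Metric.isClosed_closedBall hUb hS.uC _).measurableSet
  have haM : ∀ k, a (k + 1) = M * a k := fun k => by simp only [ha]; ring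
  have hamono : ∀ k, a 0 ≤ a k := fun k => by
    simp only [ha]; gcongr
    · linarith
    · exact Nat.zero_le k
  have hanti : ∀ k, DD n u δ (a (k + 1)) ⊆ DD n u δ (a k) := fun k => by
    refine Set.sdiff_subset_sdiff_right (Tch_mono ?_)
    rw [haM]; have := ha0 k; nlinarith
  have hstep : ∀ k, (volume (DD n u δ (a k))).toReal ≤
      A1 * ((volume (DD n u δ (a k))).toReal - (volume (DD n u δ (a (k + 1)))).toReal)
        + A2 * (1 / 2) ^ k := by
    intro k
    have hak := ha0 k
    have hkey : τ ≤ a k / 2 ^ k := by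
      have e : a k / 2 ^ k = (A * τ / δ ^ (γ + 2)) * (M / 2) ^ k := by
        simp only [ha]; rw [div_pow]; ring
      rw [e]
      have h1 : 1 ≤ (M / 2) ^ k := one_le_pow₀ (by linarith)
      have h2 : τ ≤ A * τ / δ ^ (γ + 2) := by
        rw [le_div_iff₀ (by positivity)]
        nlinarith
      nlinarith
    have hNB : NB n (fun z => h z + a k / 2 ^ k * b z) (Metric.ball 0 1)
        ((Ch + K1) * (1 / 2) ^ k * a k) := by
      have hb1 := (hS.bN 0 1 one_pos).const_mul (c := a k / 2 ^ k) (by positivity)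
      rw [Real.one_rpow, mul_one] at hb1
      refine (NB.add hn hh hb1 hS.hm (hS.bm.const_mul _) (by positivity) (by positivity)).mono ?_
      have e : (Ch + K1) * (1 / 2) ^ k * a k = Ch * (a k / 2 ^ k) + a k / 2 ^ k * K1 := by
        rw [div_pow, one_pow]; ring
      rw [e]; gcongr
    have h1 := one_step (G := (Ch + K1) * (1 / 2) ^ k) hn hη hc hC hS hδ hδh hak
      (fun x hx => by
        obtain ⟨x1, hx1, hx1'⟩ := hbase' x hx
        refine ⟨x1, Tch_mono ?_ hx1, hx1'⟩
        simpa [ha] using hamono k)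
      (hgrad k) (fun x d hd hdδ => hS.bNr hα hK hd hdδ (hsm.trans (min_le_left _ _))) hNB
      (by positivity)
    rw [← haM] at h1
    change volume (DD n u δ (a k)) ≤ _ * (_ * volume (DD n u δ (a k) \ DD n u δ (a (k+1))) + _) at h1
    rw [measure_sdiff (hanti k) (hDm _).nullMeasurableSet (hDfin _)] at h1
    have hle := measure_mono (μ := volume) (hanti k)
    have hcn : ENNReal.ofReal c ^ n ≠ 0 := by
      apply pow_ne_zero; simpa using hc
    have h2 := ENNReal.toReal_mono (by
      refine ENNReal.mul_ne_top (by finiteness) (ENNReal.add_ne_top.2 ⟨ENNReal.mul_ne_top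
        (ENNReal.inv_ne_top.2 hcn) (ENNReal.sub_ne_top (hDfin k)), by finiteness⟩)) h1
    rw [ENNReal.toReal_mul, ENNReal.toReal_add (ENNReal.mul_ne_top
        (ENNReal.inv_ne_top.2 hcn) (ENNReal.sub_ne_top (hDfin k))) (by finiteness),
      ENNReal.toReal_mul, ENNReal.toReal_sub_of_le hle (hDfin k), ENNReal.toReal_inv,
      ENNReal.toReal_pow, ENNReal.toReal_pow, ENNReal.toReal_pow, ENNReal.toReal_ofReal (by positivity),
      ENNReal.toReal_ofReal hc.le, ENNReal.toReal_ofReal (by positivity)] at h2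
    have hy : 0 ≤ (volume (DD n u δ (a k))).toReal - (volume (DD n u δ (a (k + 1)))).toReal :=
      sub_nonneg.2 (ENNReal.toReal_mono (hDfin k) hle)
    refine h2.trans ?_
    rw [mul_add]
    refine add_le_add ?_ ?_
    · rw [← mul_assoc, ← div_eq_mul_inv, ← div_pow]
      rw [hA1]; gcongr
      exact le_max_right _ _
    · rw [← mul_pow]
      have e : 15 * om n * ((Ch + K1) * (1 / 2) ^ k / η)
          = (15 * om n * (Ch + K1) / η) * (1 / 2) ^ k := by ring
      rw [e, mul_pow, hA2]
      gcongr
      exact pow_le_of_le_one (by positivity) (pow_le_one₀ (by norm_num) (by norm_num)) (by omega)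
  intro k
  refine ⟨?_, hgrad k⟩
  have := decay (y := fun k => (volume (DD n u δ (a k))).toReal) hA11 hA20
    (V := om n ^ n) (by positivity)
    (ENNReal.toReal_le_of_le_ofReal (by positivity) ((measure_mono Set.sdiff_subset).trans hvol0))
    hstep k
  exact (ENNReal.le_ofReal_iff_toReal_le (hDfin k) (by
    have : 1 / (2 * A1) ≤ 1 / 2 := by
      apply one_div_le_one_div_of_le <;> linarith
    have : 0 ≤ 1 - 1 / (2 * A1) := by linarith
    positivity)).2 this

end QSMP

namespace QSMP

variable {n : ℕ} {lam Lam : ℝ}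

/-- profile of the Hopf barrier -/
noncomputable def gs (s β e : ℝ) (ρ : ℝ) : ℝ := s * ((1 - ρ) + (1 - ρ) ^ (1 + β)) + e

lemma gs_contDiffAt (s β e : ℝ) {ρ : ℝ} (hρ : ρ < 1) : ContDiffAt ℝ 2 (gs s β e) ρ := by
  unfold gs
  have h1 : ContDiffAt ℝ 2 (fun ρ : ℝ => 1 - ρ) ρ := by fun_prop
  have h2 : ContDiffAt ℝ 2 (fun ρ : ℝ => (1 - ρ) ^ (1 + β)) ρ :=
    h1.rpow_const_of_ne (by linarith)
  exact (contDiffAt_const.mul (h1.add h2)).add contDiffAt_const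

lemma gs_deriv (s β e : ℝ) {ρ : ℝ} (hρ : ρ < 1) :
    HasDerivAt (gs s β e) (-(s * (1 + (1 + β) * (1 - ρ) ^ β))) ρ := by
  unfold gs
  have h1 : HasDerivAt (fun ρ : ℝ => 1 - ρ) (-1) ρ := by
    simpa using (hasDerivAt_id ρ).const_sub 1
  have h2 := h1.rpow_const (p := 1 + β) (Or.inl (by linarith))
  have h3 := ((h1.add h2).const_mul s).add_const e
  refine HasDerivAt.congr_deriv h3 ?_
  rw [show 1 + β - 1 = β by ring]; ring

lemma gs_deriv2 (s β e : ℝ) {ρ : ℝ} (hρ : ρ < 1) :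
    deriv (deriv (gs s β e)) ρ = s * ((1 + β) * β * (1 - ρ) ^ (β - 1)) := by
  have h0 : deriv (gs s β e) =ᶠ[nhds ρ] fun ρ => (-(s * (1 + (1 + β) * (1 - ρ) ^ β))) := by
    filter_upwards [Iio_mem_nhds hρ] with z hz
    exact (gs_deriv s β e hz).deriv
  rw [h0.deriv_eq]
  have h1 : HasDerivAt (fun ρ : ℝ => 1 - ρ) (-1) ρ := by
    simpa using (hasDerivAt_id ρ).const_sub 1
  have h2 := h1.rpow_const (p := β) (Or.inl (by linarith))
  have h3 := (((h2.const_mul (1 + β)).const_add 1).const_mul s).neg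
  refine HasDerivAt.deriv ?_
  refine HasDerivAt.congr_deriv h3 ?_
  ring

set_option maxHeartbeats 1000000 in
lemma barrier_bounds (hn : 1 ≤ n) (hlam : 0 < lam) (hL : lam ≤ Lam) {β s t κ e : ℝ} {x xs : EE n}
    (hβ : 0 < β) (hβ1 : β ≤ 1 / 2) (hs : 0 < s) (ht : 0 < t) (ht1 : t ≤ 1 / 8)
    (hx1 : t / 2 ≤ 1 - ‖x‖) (hx2 : 1 - ‖x‖ ≤ 3 / 2 * t) (hxs : ‖x - xs‖ ≤ t / 2)
    (hκ : κ = lam * β / (6 * n * Lam) * s * t ^ (β - 1))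
    (htb : 18 * n * Lam ≤ lam * β * t ^ (β - 1)) :
    ContDiffAt ℝ 2 (fun y => gs s β e (‖y - 0‖ ^ 2) + (-κ) * ‖y - xs‖ ^ 2) x ∧
    (∀ A, Adm n lam Lam A →
      0 ≤ (A * hess n (fun y => gs s β e (‖y - 0‖ ^ 2) + (-κ) * ‖y - xs‖ ^ 2) x).trace) ∧
    ‖fderiv ℝ (fun y => gs s β e (‖y - 0‖ ^ 2) + (-κ) * ‖y - xs‖ ^ 2) x‖ ≤ 7 * s := by
  have hLam : 0 < Lam := by linarith
  have hn' : (1:ℝ) ≤ n := by exact_mod_cast hn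
  have hn0 : (0:ℝ) < n := by linarith
  have hxn : 0 ≤ ‖x‖ := norm_nonneg x
  have hx34 : 3 / 4 ≤ ‖x‖ := by linarith
  have hxlt : ‖x‖ < 1 := by linarith
  have hρ : ‖x - 0‖ ^ 2 < 1 := by rw [sub_zero]; nlinarith
  have hgc := gs_contDiffAt s β e hρ
  have hc1 := radial_contDiffAt hgc
  have hc2 := quad_contDiff (-κ) xs x
  have hκ0 : 0 < κ := by rw [hκ]; positivity
  set σ := 1 - ‖x - 0‖ ^ 2 with hσ
  have hσ0 : 0 < σ := by linarith
  have hσ1 : σ ≤ 1 := by have := sq_nonneg ‖x - 0‖; linarith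
  have hσt : σ ≤ 3 * t := by rw [hσ, sub_zero]; nlinarith
  have hσb : σ ^ β ≤ 1 := Real.rpow_le_one hσ0.le hσ1 hβ.le
  have hσb0 : 0 ≤ σ ^ β := by positivity
  refine ⟨hc1.add hc2, ?_, ?_⟩
  · intro A hA
    rw [hess_add hc1 hc2, radial_hess hgc, quad_hess, gs_deriv2 _ _ _ hρ, (gs_deriv s β e hρ).deriv]
    have hb := Adm.barrier hlam.le hA (fun i => (x - 0).ofLp i)
      (α := 4 * (s * ((1 + β) * β * σ ^ (β - 1)))) (β := 2 * (s * (1 + (1 + β) * σ ^ β)) + 2 * κ)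
      (by positivity) (by positivity)
    have e1 : (4 * (s * ((1 + β) * β * σ ^ (β - 1)))) • Matrix.vecMulVec (fun i => (x - 0).ofLp i)
        (fun i => (x - 0).ofLp i) + (2 * -(s * (1 + (1 + β) * σ ^ β))) • (1 : Matrix (Fin n) (Fin n) ℝ)
        + (2 * -κ) • (1 : Matrix (Fin n) (Fin n) ℝ)
        = (4 * (s * ((1 + β) * β * σ ^ (β - 1)))) • Matrix.vecMulVec (fun i => (x - 0).ofLp i)
        (fun i => (x - 0).ofLp i) - (2 * (s * (1 + (1 + β) * σ ^ β)) + 2 * κ) • 1 := by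
      module
    rw [← hσ, e1]
    refine le_trans ?_ hb
    rw [sum_sq_eq, sub_zero]
    have h9 : 1 / 2 ≤ ‖x‖ ^ 2 := by nlinarith
    have hσr : t ^ (β - 1) / 3 ≤ σ ^ (β - 1) := by
      have h1 : (3 * t) ^ (β - 1) ≤ σ ^ (β - 1) :=
        Real.rpow_le_rpow_of_nonpos hσ0 hσt (by linarith)
      have h2 : (3:ℝ) ^ (-1 : ℝ) ≤ 3 ^ (β - 1) :=
        Real.rpow_le_rpow_of_exponent_le (by norm_num) (by linarith)
      rw [Real.rpow_neg_one] at h2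
      rw [Real.mul_rpow (by norm_num) ht.le] at h1
      have : 0 ≤ t ^ (β - 1) := by positivity
      nlinarith
    set T := t ^ (β - 1) with hT
    have hT0 : 0 < T := by positivity
    have hk2 : κ * (n * Lam) = lam * β * s * T / 6 := by rw [hκ]; field_simp
    have h10 : lam * (4 * (s * ((1 + β) * β * σ ^ (β - 1)))) * ‖x‖ ^ 2 ≥ 2 * lam * s * β * (T / 3) := by
      calc 2 * lam * s * β * (T / 3) = lam * (4 * (s * (1 * β * (T / 3)))) * (1 / 2) := by ring
        _ ≤ lam * (4 * (s * ((1 + β) * β * σ ^ (β - 1)))) * ‖x‖ ^ 2 := by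
          gcongr; linarith
    have h11 : 2 * (s * (1 + (1 + β) * σ ^ β)) ≤ 6 * s := by
      have : (1 + β) * σ ^ β ≤ 2 := by nlinarith
      nlinarith
    have h12 : 2 * (s * (1 + (1 + β) * σ ^ β)) * (n * Lam) ≤ 6 * s * (n * Lam) := by gcongr
    have h13 : s * (18 * n * Lam) ≤ s * (lam * β * T) := by gcongr
    nlinarith
  · rw [fderiv_fun_add (hc1.differentiableAt (by norm_num)) (hc2.differentiableAt (by norm_num)),
      radial_fderiv (hgc.differentiableAt (by norm_num)), quad_fderiv, (gs_deriv s β e hρ).deriv, ← hσ]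
    refine (norm_add_le _ _).trans ?_
    rw [norm_smul, norm_smul, innerSL_apply_norm, innerSL_apply_norm, Real.norm_eq_abs, Real.norm_eq_abs]
    have h11 : |2 * -(s * (1 + (1 + β) * σ ^ β))| ≤ 6 * s := by
      rw [mul_neg, abs_neg, abs_of_nonneg (by positivity)]
      have : (1 + β) * σ ^ β ≤ 2 := by nlinarith
      nlinarith
    have h14 : |2 * -κ| = 2 * κ := by rw [mul_neg, abs_neg, abs_of_nonneg (by positivity)]
    have h15 : κ * t ≤ s := by
      have e2 : κ * t = lam * β / (6 * n * Lam) * s * t ^ β := by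
        rw [hκ, Real.rpow_sub_one ht.ne']; field_simp
      rw [e2]
      have h16 : t ^ β ≤ 1 := Real.rpow_le_one ht.le (by linarith) hβ.le
      have h17 : lam * β / (6 * n * Lam) ≤ 1 := by
        rw [div_le_one (by positivity)]
        have : lam * β ≤ Lam * 1 := by gcongr; linarith
        nlinarith
      calc _ ≤ 1 * s * 1 := by gcongr
        _ = s := by ring
    rw [h14, sub_zero]
    calc _ ≤ 6 * s * 1 + 2 * κ * (t / 2) := by gcongr
      _ ≤ 7 * s := by linarith

set_option maxHeartbeats 1000000 in
theorem hopf (hn : 1 ≤ n) (hlam : 0 < lam) (hL : lam ≤ Lam) (K1 α d0 : ℝ)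
    (hα : 0 < α) (hα1 : α ≤ 1) (hK : 0 ≤ K1) (hd0 : 0 < d0) (hd0' : d0 ≤ 1 / 4) :
    ∃ r1 : ℝ, 0 < r1 ∧ r1 ≤ 1 / 8 ∧ ∀ (b h u : EE n → ℝ) (s m : ℝ),
      Sup n lam Lam K1 α b h u → 0 < s →
      (∀ (x : EE n) (r : ℝ), 0 < r → r ≤ 1 → (∀ z ∈ Metric.ball x r, 1 - d0 < ‖z‖ ∧ ‖z‖ < 1) →
        NB n h (Metric.ball x r) (s * r ^ α)) →
      8 * r1 * s ≤ m → (∀ x, ‖x‖ ≤ 1 - r1 → m ≤ u x) →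
      ∀ x, ‖x‖ < 1 → 1 - ‖x‖ < r1 → s * (1 - ‖x‖) ≤ u x := by
  set β := α / 2 with hβ
  have hβ0 : 0 < β := by positivity
  have hβ1 : β ≤ 1 / 2 := by linarith
  have hLam : 0 < Lam := by linarith
  have hom : 0 < om n := om_pos
  have hn' : (1:ℝ) ≤ n := by exact_mod_cast hn
  have hn0 : (0:ℝ) < n := by linarith
  set cκ := lam * β / (6 * n * Lam) with hcκ
  have hcκ0 : 0 < cκ := by positivity
  -- smallness
  obtain ⟨ra, hra0, hra⟩ := small_rpow (K1 := 18 * n * Lam) (α := 1 - β) (m := lam * β) (by linarith)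
    (by positivity) (by positivity)
  obtain ⟨rb, hrb0, hrb⟩ := small_rpow (K1 := 16 / (lam * om n) * (1 + 7 * K1)) (α := β)
    (m := cκ / 2) hβ0 (by positivity) (by positivity)
  obtain ⟨rc, hrc0, hrc⟩ := small_rpow (K1 := K1) (α := α) (m := lam * om n / 2) hα
    (by positivity) (by positivity)
  refine ⟨min (min ra rb) (min rc (d0 / 2)), by positivity,
    (min_le_right _ _).trans ((min_le_right _ _).trans (by linarith)), ?_⟩
  set r1 := min (min ra rb) (min rc (d0 / 2)) with hr1
  have h1a : r1 ≤ ra := (min_le_left _ _).trans (min_le_left _ _)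
  have h1b : r1 ≤ rb := (min_le_left _ _).trans (min_le_right _ _)
  have h1c : r1 ≤ rc := (min_le_right _ _).trans (min_le_left _ _)
  have h1d : r1 ≤ d0 / 2 := (min_le_right _ _).trans (min_le_right _ _)
  have hr10 : 0 < r1 := by rw [hr1]; positivity
  clear_value r1
  intro b h u s m hS hs hh hm hum x0 hx01 hx0r
  by_contra hcon
  push Not at hcon
  -- bounds on the barrier
  have hΨ : ∀ z : EE n, ‖z‖ < 1 → (1 - ‖z‖) ≤ (1 - ‖z‖ ^ 2) + (1 - ‖z‖ ^ 2) ^ (1 + β) ∧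
      (1 - ‖z‖ ^ 2) + (1 - ‖z‖ ^ 2) ^ (1 + β) ≤ 4 * (1 - ‖z‖) := by
    intro z hz
    have hz0 := norm_nonneg z
    have hσ0 : 0 < 1 - ‖z‖ ^ 2 := by nlinarith
    have hp : 0 ≤ (1 - ‖z‖ ^ 2) ^ (1 + β) := by positivity
    have hp1 : (1 - ‖z‖ ^ 2) ^ (1 + β) ≤ 1 - ‖z‖ ^ 2 := by
      calc (1 - ‖z‖ ^ 2) ^ (1 + β) ≤ (1 - ‖z‖ ^ 2) ^ (1:ℝ) :=
            Real.rpow_le_rpow_of_exponent_ge hσ0 (by nlinarith) (by linarith)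
        _ = _ := Real.rpow_one _
    constructor <;> nlinarith
  set φ : EE n → ℝ := fun z => u z - gs s β 0 (‖z - 0‖ ^ 2) with hφ
  have hφlow : ∀ z : EE n, ‖z‖ < 1 → -(4 * s * (1 - ‖z‖)) ≤ φ z := by
    intro z hz
    have h1 := (hΨ z hz).2
    have h2 := hS.u0 z (by simpa using hz)
    simp only [hφ, gs, sub_zero, add_zero]
    nlinarith
  have hφpos : ∀ z : EE n, r1 ≤ 1 - ‖z‖ → 1 - ‖z‖ ≤ 2 * r1 → 0 ≤ φ z := by
    intro z hz1 hz2
    have h1 := (hΨ z (by linarith)).2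
    have h2 := hum z (by linarith)
    simp only [hφ, gs, sub_zero, add_zero]
    nlinarith
  have hφx0 : φ x0 < 0 := by
    have h1 := (hΨ x0 hx01).1
    simp only [hφ, gs, sub_zero, add_zero]
    nlinarith
  have hφc : ∀ z : EE n, ‖z‖ < 1 → ContDiffAt ℝ 2 φ z := by
    intro z hz
    refine (hS.uC.contDiffAt (Metric.isOpen_ball.mem_nhds (by simpa using hz))).sub ?_
    exact radial_contDiffAt (gs_contDiffAt s β 0 (by rw [sub_zero]; nlinarith [norm_nonneg z]))
  -- minimum point
  obtain ⟨xs, hxs1, hxsr, hxsm, hxsn⟩ : ∃ xs : EE n, ‖xs‖ < 1 ∧ 1 - ‖xs‖ < r1 ∧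
      (∀ z : EE n, ‖z‖ < 1 → 1 - ‖z‖ ≤ 2 * r1 → φ xs ≤ φ z) ∧ φ xs < 0 := by
    set t1 := min (1 - ‖x0‖) (-φ x0 / (8 * s)) with ht1
    have ht10 : 0 < t1 := lt_min (by linarith) (div_pos (by linarith) (by positivity))
    have hcomp : IsCompact (Metric.closedBall (0 : EE n) (1 - t1) ∩ {z | 1 - ‖z‖ ≤ 2 * r1}) :=
      (isCompact_closedBall _ _).inter_right (isClosed_le (by fun_prop) (by fun_prop))
    obtain ⟨xs, hxs, hmin⟩ := hcomp.exists_isMinOn (f := φ) ⟨x0, by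
        rw [Set.mem_inter_iff, mem_closedBall_zero_iff]
        have := min_le_left (1 - ‖x0‖) (-φ x0 / (8 * s))
        refine ⟨by linarith, ?_⟩
        simp only [Set.mem_ofPred_eq]; linarith⟩ (fun z hz => by
        have h1 : ‖z‖ ≤ 1 - t1 := by simpa using hz.1
        exact (hφc z (by linarith)).continuousAt.continuousWithinAt)
    have hx0s : φ xs ≤ φ x0 := hmin (by
        rw [Set.mem_inter_iff, mem_closedBall_zero_iff]
        have := min_le_left (1 - ‖x0‖) (-φ x0 / (8 * s))
        refine ⟨by linarith, ?_⟩
        simp only [Set.mem_ofPred_eq]; linarith)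
    have hxsn : ‖xs‖ ≤ 1 - t1 := by simpa using hxs.1
    refine ⟨xs, by linarith, ?_, ?_, by linarith⟩
    · by_contra hc
      push Not at hc
      have := hφpos xs hc hxs.2
      linarith
    · intro z hz1 hz2
      by_cases hzt : ‖z‖ ≤ 1 - t1
      · exact hmin ⟨by simpa using hzt, hz2⟩
      · push Not at hzt
        have h1 := hφlow z hz1
        have h2 : 4 * s * (1 - ‖z‖) ≤ 4 * s * (-φ x0 / (8 * s)) := by
          gcongr
          have := min_le_right (1 - ‖x0‖) (-φ x0 / (8 * s))
          linarith
        have h3 : 4 * s * (-φ x0 / (8 * s)) = -φ x0 / 2 := by field_simp; ring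
        linarith
  set t := 1 - ‖xs‖ with ht
  have ht0 : 0 < t := by linarith
  have htt : t * t ^ (β - 1) = t ^ β := by rw [Real.rpow_sub_one ht0.ne']; field_simp
  have htb : 18 * n * Lam ≤ lam * β * t ^ (β - 1) := by
    have h1 := hra t ht0 (by linarith)
    have h2 : t ^ (1 - β) * t ^ (β - 1) = 1 := by
      rw [← Real.rpow_add ht0]; simp
    have h3 : 0 < t ^ (β - 1) := by positivity
    calc 18 * n * Lam = 18 * n * Lam * t ^ (1 - β) * t ^ (β - 1) := by rw [mul_assoc _ (t ^ (1 - β)), h2, mul_one]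
      _ ≤ lam * β * t ^ (β - 1) := by gcongr
  set κ := cκ * s * t ^ (β - 1) with hκ
  have hκ0 : 0 < κ := by positivity
  set e := φ xs + κ * t ^ 2 / 4 with he
  set v : EE n → ℝ := fun y => gs s β e (‖y - 0‖ ^ 2) + (-κ) * ‖y - xs‖ ^ 2 with hv
  have hvφ : ∀ z, u z - v z = φ z - φ xs + κ * ‖z - xs‖ ^ 2 - κ * t ^ 2 / 4 := by
    intro z; simp only [hv, hφ, gs, he]; ring
  have hball : ∀ z ∈ Metric.closedBall xs (t / 2), t / 2 ≤ 1 - ‖z‖ ∧ 1 - ‖z‖ ≤ 3 / 2 * t ∧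
      ‖z - xs‖ ≤ t / 2 := by
    intro z hz
    rw [mem_closedBall_iff_norm] at hz
    have h1 := norm_sub_norm_le z xs
    have h2 := norm_sub_norm_le xs z
    rw [norm_sub_rev] at h2
    exact ⟨by linarith, by linarith, hz⟩
  have hbb : ∀ z ∈ Metric.closedBall xs (t / 2), _ := fun z hz =>
    barrier_bounds (e := e) hn hlam hL hβ0 hβ1 hs ht0 (by linarith) (hball z hz).1 (hball z hz).2.1
      (hball z hz).2.2 hκ htb
  have hsub : Metric.closedBall xs (t / 2) ⊆ Metric.ball 0 1 := by
    intro z hz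
    have := (hball z hz).1
    rw [mem_ball_zero_iff]; linarith
  have hNBb : NB n b (Metric.ball xs (t / 2)) (K1 * t ^ α) :=
    (hS.bNr hα hK (by positivity) (by linarith) le_rfl)
  have hNBh : NB n h (Metric.ball xs (t / 2)) (s * t ^ α) := by
    refine (hh xs (t / 2) (by positivity) (by linarith) ?_).mono ?_
    · intro z hz
      obtain ⟨h1, h2, -⟩ := hball z (Metric.ball_subset_closedBall hz)
      exact ⟨by linarith, by linarith⟩
    · gcongr; linarith
  have hNB : NB n (fun z => h z + 7 * s * b z) (Metric.ball xs (t / 2))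
      (s * t ^ α + 7 * s * (K1 * t ^ α)) :=
    NB.add hn hNBh (hNBb.const_mul (by positivity)) hS.hm (hS.bm.const_mul _) (by positivity)
      (by positivity)
  have hwC : ContDiffOn ℝ 2 (fun z => u z - v z) (Metric.ball 0 1) := by
    intro z hz
    have hz' : ‖z‖ < 1 := by simpa using hz
    refine ContDiffAt.contDiffWithinAt ?_
    refine (hS.uC.contDiffAt (Metric.isOpen_ball.mem_nhds hz)).sub ?_
    exact (radial_contDiffAt (gs_contDiffAt s β e (by rw [sub_zero]; nlinarith [norm_nonneg z]))).add
      (quad_contDiff (-κ) xs z)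
  have habp := ABP (w := fun z => u z - v z) hn hlam Metric.isOpen_ball hwC (by positivity : 0 < t / 2)
    hsub (by
      intro z hz
      have hzc := Metric.sphere_subset_closedBall hz
      rw [mem_sphere_iff_norm] at hz
      simp only [hvφ]
      obtain ⟨h1, h2, -⟩ := hball z hzc
      have := hxsm z (by linarith) (by linarith)
      rw [hz]; nlinarith)
    (by
      intro z hz _
      have hzc := Metric.ball_subset_closedBall hz
      obtain ⟨h1, h2, h3⟩ := hbb z hzc
      refine SS_sub (c := 0) (hS.uC.contDiffAt (Metric.isOpen_ball.mem_nhds (hsub hzc))) h1 (hS.b0 z)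
        (hS.ss z (hsub hzc)) h2 ?_
      have : b z * ‖fderiv ℝ v z‖ ≤ b z * (7 * s) := mul_le_mul_of_nonneg_left h3 (hS.b0 z)
      show h z + b z * ‖fderiv ℝ v z‖ - 0 ≤ h z + 7 * s * b z
      linarith)
    hS.b0 hS.bm (hS.hm.add (hS.bm.const_mul _)) (hNBb.mono (hrc t ht0 (by linarith))) hNB
    (by positivity) xs (Metric.mem_closedBall_self (by positivity))
  rw [hvφ] at habp
  simp only [sub_self, norm_zero] at habp
  have hta : t ^ α = t ^ β * t ^ β := by
    rw [← Real.rpow_add ht0]; congr 1; rw [hβ]; ring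
  have hfin := hrb t ht0 (by linarith)
  have hTb : 0 < t ^ β := by positivity
  have e1 : κ * t ^ 2 = cκ * s * (t * t ^ β) := by rw [← htt, hκ]; ring
  have e2 : 8 / (lam * om n) * (t / 2) * (s * t ^ α + 7 * s * (K1 * t ^ α))
      = (16 / (lam * om n) * (1 + 7 * K1) * t ^ β) * (s * (t * t ^ β)) / 4 := by
    rw [hta]; ring
  have hpos : 0 < s * (t * t ^ β) := by positivity
  have h3 : (16 / (lam * om n) * (1 + 7 * K1) * t ^ β) * (s * (t * t ^ β)) ≤ cκ / 2 * (s * (t * t ^ β)) :=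
    mul_le_mul_of_nonneg_right hfin hpos.le
  rw [e2, e1] at habp
  nlinarith

end QSMP

namespace QSMP

variable {n : ℕ} {lam Lam : ℝ}

lemma NB_of_Lp (hn : 1 ≤ n) {g : EE n → ℝ} (hgm : Measurable g) (hg0 : ∀ x, 0 ≤ g x)
    {q H m : ℝ} (hq : (n : ℝ) ≤ q) {E : Set (EE n)} (hm : 0 ≤ m)
    (hE : volume E ≤ ENNReal.ofReal m ^ n) (hH : 0 ≤ H) (hL : LpNormE n q g E ≤ ENNReal.ofReal H) :
    NB n g E (H * m ^ (1 - n / q)) := by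
  have hn0 : (0:ℝ) < n := by exact_mod_cast hn
  have hq0 : 0 < q := by linarith
  have h1 := eLpNorm'_le_eLpNorm'_mul_rpow_measure_univ (μ := volume.restrict E) (f := g) hn0 hq
    hgm.aestronglyMeasurable
  have e1 : eLpNorm' g q (volume.restrict E) = LpNormE n q g E := by
    unfold eLpNorm' LpNormE
    congr 1
    refine lintegral_congr fun x => ?_
    rw [Real.enorm_eq_ofReal_abs, ENNReal.ofReal_rpow_of_nonneg (abs_nonneg _) hq0.le]
  have e2 : eLpNorm' g n (volume.restrict E) = (∫⁻ x in E, ENNReal.ofReal (g x) ^ n) ^ (1 / (n:ℝ)) := by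
    unfold eLpNorm'
    congr 1
    refine lintegral_congr fun x => ?_
    rw [Real.enorm_eq_ofReal_abs, abs_of_nonneg (hg0 x), ENNReal.rpow_natCast]
  rw [e1, e2, Measure.restrict_apply_univ] at h1
  have hexp : 0 ≤ 1 / (n:ℝ) - 1 / q := by
    have := one_div_le_one_div_of_le hn0 hq
    linarith
  have hexp2 : (n:ℝ) * (1 / (n:ℝ) - 1 / q) = 1 - n / q := by field_simp
  have hexp3 : 0 ≤ 1 - n / q := by rw [← hexp2]; positivity
  have h2 : (∫⁻ x in E, ENNReal.ofReal (g x) ^ n) ^ (1 / (n:ℝ)) ≤ ENNReal.ofReal (H * m ^ (1 - n / q)) := by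
    refine h1.trans ?_
    rw [ENNReal.ofReal_mul hH, ← ENNReal.ofReal_rpow_of_nonneg hm hexp3]
    refine mul_le_mul' hL ?_
    refine (ENNReal.rpow_le_rpow hE hexp).trans ?_
    rw [← ENNReal.rpow_natCast, ← ENNReal.rpow_mul, hexp2]
  unfold NB
  have h3 := ENNReal.rpow_le_rpow h2 hn0.le
  rw [← ENNReal.rpow_mul, one_div_mul_cancel hn0.ne', ENNReal.rpow_one, ENNReal.rpow_natCast] at h3
  exact h3

lemma LpNormE_mono {q : ℝ} (hq : 0 < q) {g g' : EE n → ℝ} {E E' : Set (EE n)}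
    (hE : MeasurableSet E') (h : ∀ x, |E.indicator g x| ≤ |E'.indicator g' x|) (hEm : MeasurableSet E) :
    LpNormE n q g E ≤ LpNormE n q g' E' := by
  unfold LpNormE
  refine ENNReal.rpow_le_rpow ?_ (by positivity)
  rw [← lintegral_indicator hE, ← lintegral_indicator hEm]
  refine lintegral_mono fun x => ?_
  have := h x
  by_cases hx : x ∈ E
  · by_cases hx' : x ∈ E'
    · simp only [hx, hx', Set.indicator_of_mem] at this ⊢
      gcongr
    · simp only [hx, hx', Set.indicator_of_mem, not_false_eq_true, Set.indicator_of_notMem] at this ⊢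
      have h0 : |g x| = 0 := le_antisymm (by simpa using this) (abs_nonneg _)
      rw [h0, Real.zero_rpow hq.ne']; simp
  · simp [hx]

lemma meas_ind {f : EE n → ℝ} {E : Set (EE n)} (hE : IsOpen E) (hf : ContinuousOn f E) :
    Measurable (E.indicator f) := by
  classical
  rw [← Set.piecewise_eq_indicator]
  exact ContinuousOn.measurable_piecewise hf continuousOn_const hE.measurableSet

lemma layer {L μ C1 C2 V : ℝ} (hL : 1 < L) (hμ : 0 < μ) (hμ1 : μ < 1) (hC1 : 0 < C1) (hC2 : 0 < C2)
    (hV : 0 < V) : ∃ ε C3 : ℝ, 0 < ε ∧ 0 < C3 ∧ ∀ (g : EE n → ℝ) (E : Set (EE n)) (τ : ℝ),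
      Measurable g → MeasurableSet E → (∀ x, 0 ≤ g x) → 0 < τ → volume E ≤ ENNReal.ofReal V →
      (∀ k : ℕ, volume {x ∈ E | C1 * τ * L ^ k < g x} ≤ ENNReal.ofReal (C2 * μ ^ k)) →
      ∫⁻ x in E, ENNReal.ofReal (g x ^ ε) ≤ ENNReal.ofReal (C3 * τ ^ ε) := by
  set ν := Real.sqrt μ with hν
  have hν0 : 0 < ν := Real.sqrt_pos.2 hμ
  have hν1 : ν < 1 := by rw [hν]; exact (Real.sqrt_lt' one_pos).2 (by simpa using hμ1)
  have hνμ : ν * ν = μ := Real.mul_self_sqrt hμ.le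
  have hlogL : 0 < Real.log L := Real.log_pos hL
  set ε := -Real.log ν / Real.log L with hε
  have hε0 : 0 < ε := div_pos (by have := Real.log_neg hν0 hν1; linarith) hlogL
  have hL0 : 0 < L := by linarith
  have hLε : L ^ ε = ν⁻¹ := by
    rw [Real.rpow_def_of_pos hL0, hε, mul_div_cancel₀ _ hlogL.ne', Real.exp_neg, Real.exp_log hν0]
  refine ⟨ε, C1 ^ ε * (V + ν⁻¹ * C2 * (1 - ν)⁻¹), hε0, by
    have : 0 < (1 - ν)⁻¹ := inv_pos.2 (by linarith)
    positivity, ?_⟩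
  intro g E τ hgm hEm hg0 hτ hVE hk
  have hCτ : 0 < C1 * τ := by positivity
  set F : ℕ → EE n → ℝ≥0∞ := fun k =>
    Set.indicator {x | C1 * τ * L ^ k < g x} (fun _ => ENNReal.ofReal ((C1 * τ) ^ ε * ν⁻¹ ^ (k + 1))) with hF
  have hpt : ∀ x, ENNReal.ofReal (g x ^ ε) ≤ ENNReal.ofReal ((C1 * τ) ^ ε) + ∑' k, F k x := by
    intro x
    have hex : ∃ j : ℕ, g x ≤ C1 * τ * L ^ j := by
      obtain ⟨j, hj⟩ := pow_unbounded_of_one_lt (g x / (C1 * τ)) hL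
      refine ⟨j, ?_⟩
      rw [div_lt_iff₀ hCτ] at hj
      linarith
    classical
    have hspec := Nat.find_spec hex
    rcases hj : Nat.find hex with _ | k
    · rw [hj, pow_zero, mul_one] at hspec
      refine le_trans ?_ le_self_add
      gcongr
      exact hg0 x
    · rw [hj] at hspec
      have hlt : C1 * τ * L ^ k < g x := by
        have := Nat.find_min hex (m := k) (by omega)
        exact not_le.1 this
      refine le_trans ?_ le_add_self
      refine le_trans ?_ (ENNReal.le_tsum k)
      simp only [hF]
      rw [Set.indicator_of_mem (by exact hlt)]
      apply ENNReal.ofReal_le_ofReal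
      calc g x ^ ε ≤ (C1 * τ * L ^ (k + 1)) ^ ε := by
            gcongr; exact hg0 x
        _ = (C1 * τ) ^ ε * ν⁻¹ ^ (k + 1) := by
            rw [Real.mul_rpow hCτ.le (by positivity), ← hLε, ← Real.rpow_natCast, ← Real.rpow_natCast,
              ← Real.rpow_mul hL0.le, ← Real.rpow_mul hL0.le, mul_comm ε]
  have hsm : ∀ k : ℕ, MeasurableSet {x | C1 * τ * L ^ k < g x} := fun k =>
    measurableSet_lt measurable_const hgm
  have hFint : ∀ k, ∫⁻ x in E, F k x ≤ ENNReal.ofReal ((C1 * τ) ^ ε * (ν⁻¹ * C2) * ν ^ k) := by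
    intro k
    simp only [hF]
    rw [lintegral_indicator_const (hsm k), Measure.restrict_apply (hsm k)]
    have e : {x | C1 * τ * L ^ k < g x} ∩ E = {x ∈ E | C1 * τ * L ^ k < g x} := by
      ext x; simp [and_comm]
    rw [e]
    refine (mul_le_mul' le_rfl (hk k)).trans ?_
    rw [← ENNReal.ofReal_mul (by positivity)]
    apply ENNReal.ofReal_le_ofReal
    rw [← hνμ, mul_pow, pow_succ, inv_pow]
    apply le_of_eq
    field_simp
  calc ∫⁻ x in E, ENNReal.ofReal (g x ^ ε)
      ≤ ∫⁻ x in E, (ENNReal.ofReal ((C1 * τ) ^ ε) + ∑' k, F k x) := lintegral_mono fun x => hpt x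
    _ = ENNReal.ofReal ((C1 * τ) ^ ε) * volume E + ∑' k, ∫⁻ x in E, F k x := by
        rw [lintegral_add_left measurable_const, lintegral_const, Measure.restrict_apply_univ,
          lintegral_tsum fun k => (measurable_const.indicator (hsm k)).aemeasurable]
    _ ≤ ENNReal.ofReal ((C1 * τ) ^ ε) * ENNReal.ofReal V
        + ∑' k, ENNReal.ofReal ((C1 * τ) ^ ε * (ν⁻¹ * C2) * ν ^ k) := by
        gcongr with k
        exact hFint k
    _ = ENNReal.ofReal ((C1 * τ) ^ ε * V) + ENNReal.ofReal ((C1 * τ) ^ ε * (ν⁻¹ * C2) * (1 - ν)⁻¹) := by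
        rw [← ENNReal.ofReal_mul (by positivity)]
        congr 1
        rw [← ENNReal.ofReal_tsum_of_nonneg (fun k => by positivity)
          ((summable_geometric_of_lt_one hν0.le hν1).mul_left _), tsum_mul_left,
          tsum_geometric_of_lt_one hν0.le hν1]
    _ = ENNReal.ofReal (C1 ^ ε * (V + ν⁻¹ * C2 * (1 - ν)⁻¹) * τ ^ ε) := by
        have : 0 < (1 - ν)⁻¹ := inv_pos.2 (by linarith)
        rw [← ENNReal.ofReal_add (by positivity) (by positivity), Real.mul_rpow hC1.le hτ.le]
        congr 1; ring

lemma shell (hn : 1 ≤ n) {δ : ℝ} (hδ : 0 < δ) (hδ1 : δ < 1) :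
    volume (Metric.ball (0 : EE n) 1 \ Metric.closedBall 0 (1 - δ)) ≤ ENNReal.ofReal (om n ^ n * n * δ) := by
  have hom : 0 < om n := om_pos
  have hsub : Metric.closedBall (0 : EE n) (1 - δ) ⊆ Metric.ball 0 1 :=
    Metric.closedBall_subset_ball (by linarith)
  rw [measure_sdiff hsub Metric.isClosed_closedBall.measurableSet.nullMeasurableSet
    measure_closedBall_lt_top.ne, vol_ball hn _ zero_le_one, vol_closedBall hn _ (by linarith),
    ← ENNReal.ofReal_pow (by positivity), ← ENNReal.ofReal_pow (mul_nonneg hom.le (by linarith)),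
    ← ENNReal.ofReal_sub _ (pow_nonneg (mul_nonneg hom.le (by linarith)) _)]
  apply ENNReal.ofReal_le_ofReal
  have h1 := one_add_mul_le_pow (a := -δ) (by linarith) n
  rw [mul_one, mul_pow, show 1 - δ = 1 + -δ by ring]
  have : 0 < om n ^ n := by positivity
  nlinarith

lemma cheb {g : EE n → ℝ} {E : Set (EE n)} {H t : ℝ} (hgm : Measurable g) (h : NB n g E H)
    (hH : 0 ≤ H) (ht : 0 < t) :
    volume (E ∩ {x | t < g x}) ≤ ENNReal.ofReal ((H / t) ^ n) := by
  have h1 := mul_meas_ge_le_lintegral (μ := volume.restrict E) (f := fun x => ENNReal.ofReal (g x) ^ n)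
    (by fun_prop) (ENNReal.ofReal t ^ n)
  have h2 : volume (E ∩ {x | t < g x}) ≤
      (volume.restrict E) {x | ENNReal.ofReal t ^ n ≤ ENNReal.ofReal (g x) ^ n} := by
    rw [Measure.restrict_apply (measurableSet_le measurable_const (by fun_prop))]
    refine measure_mono fun x hx => ⟨?_, hx.1⟩
    have : t < g x := hx.2
    show ENNReal.ofReal t ^ n ≤ ENNReal.ofReal (g x) ^ n
    gcongr
  have h3 : ENNReal.ofReal t ^ n * volume (E ∩ {x | t < g x}) ≤ ENNReal.ofReal H ^ n :=
    (mul_le_mul' le_rfl h2).trans (h1.trans h)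
  have ht0 : ENNReal.ofReal t ^ n ≠ 0 := by apply pow_ne_zero; simpa using ht
  rw [div_pow, ENNReal.ofReal_div_of_pos (by positivity), ENNReal.ofReal_pow hH, ENNReal.ofReal_pow ht.le,
    ENNReal.le_div_iff_mul_le (Or.inl ht0) (Or.inl (by finiteness)), mul_comm]
  exact h3

end QSMP

namespace QSMP

variable {n : ℕ} {lam Lam : ℝ}

theorem distrib (hn : 1 ≤ n) (hlam : 0 < lam) (hL : lam ≤ Lam) (K1 α r0 CP Ch : ℝ) (γ : ℕ)
    (hα : 0 < α) (hK : 0 ≤ K1) (hr0 : 0 < r0) (hCP : 0 < CP) (hCh : 0 < Ch) :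
    ∃ L C1 C2 μ : ℝ, 1 < L ∧ 0 < C1 ∧ 0 < C2 ∧ 0 < μ ∧ μ < 1 ∧
    ∀ (b h u f : EE n → ℝ) (τ : ℝ), Sup n lam Lam K1 α b h u → 0 < τ →
      NB n h (Metric.ball 0 1) (Ch * τ) → PP n u r0 CP τ γ →
      (∀ x ∈ Metric.ball (0 : EE n) 1, SS n lam Lam b f u x) → ∀ k : ℕ,
      volume {x ∈ Metric.ball (0 : EE n) 1 | C1 * τ * L ^ k < -f x} ≤ ENNReal.ofReal (C2 * μ ^ k) := by
  obtain ⟨M, A, μ, C, δs, hM, hA, hμ, hμ1, hC, hδs, hδs1, H⟩ :=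
    iteration (n := n) hn hlam hL K1 α r0 CP Ch γ hα hK hr0 hCP hCh
  have hLam : 0 < Lam := by linarith
  have hom : 0 < om n := om_pos
  have hn0 : (0:ℝ) < n := by exact_mod_cast hn
  have hM0 : 0 < M := by linarith
  have hA0 : 0 < A := by linarith
  set L := 2 * M / μ ^ (γ + 2) with hLdef
  have hμp : μ ^ (γ + 2) ≤ 1 := pow_le_one₀ hμ.le hμ1.le
  have hL1 : 1 < L := by
    rw [hLdef, lt_div_iff₀ (by positivity)]; linarith
  refine ⟨L, (n * Lam + 1) * (A / δs ^ (γ + 2)), C + K1 ^ n + om n ^ n * n * δs, max μ (1 / 2), hL1,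
    by positivity, by positivity, lt_max_of_lt_left hμ, max_lt hμ1 (by norm_num), ?_⟩
  intro b h u f τ hS hτ hh hP hf k
  set μ' := max μ (1 / 2) with hμ'
  have hμμ' : μ ≤ μ' := le_max_left _ _
  have hhμ' : 1 / 2 ≤ μ' := le_max_right _ _
  have hμ'0 : 0 < μ' := by linarith
  clear_value μ'
  have hμk1 : μ ^ k ≤ 1 := pow_le_one₀ hμ.le hμ1.le
  have hμk0 : 0 < μ ^ k := by positivity
  set δ := δs * μ ^ k with hδ
  have hδ0 : 0 < δ := by positivity
  have hδle : δ ≤ δs := by nlinarith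
  obtain ⟨h1, h2⟩ := H b h u τ hS hτ hh hP δ hδ0 hδle k
  set a := A * τ * M ^ k / δ ^ (γ + 2) with ha
  have ha0 : 0 < a := by positivity
  have haL : (n * Lam + 1) * a ≤ (n * Lam + 1) * (A / δs ^ (γ + 2)) * τ * L ^ k := by
    have e : a = A / δs ^ (γ + 2) * τ * (M / μ ^ (γ + 2)) ^ k := by
      rw [ha, hδ, mul_pow, div_pow, ← pow_mul, ← pow_mul, mul_comm k]; field_simp
    have hLM : M / μ ^ (γ + 2) ≤ L := by rw [hLdef]; gcongr; linarith
    rw [e]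
    calc _ ≤ (n * Lam + 1) * (A / δs ^ (γ + 2) * τ * L ^ k) := by gcongr
      _ = _ := by ring
  have hsub : {x ∈ Metric.ball (0 : EE n) 1 | (n * Lam + 1) * (A / δs ^ (γ + 2)) * τ * L ^ k < -f x} ⊆
      DD n u δ a ∪ (Metric.ball 0 1 ∩ {x | 2 ^ k < b x}) ∪
        (Metric.ball (0 : EE n) 1 \ Metric.closedBall 0 (1 - δ)) := by
    rintro x ⟨hx, hfx⟩
    by_contra hc
    simp only [Set.mem_union, not_or] at hc
    obtain ⟨⟨hc1, hc2⟩, hc3⟩ := hc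
    have hxB : x ∈ Metric.closedBall (0 : EE n) (1 - δ) := by
      by_contra hh; exact hc3 ⟨hx, hh⟩
    have hxT : x ∈ Tch n u (Metric.closedBall 0 (1 - δ / 2)) a := by
      by_contra hh; exact hc1 ⟨hxB, hh⟩
    have hbx : b x ≤ 2 ^ k := by
      by_contra hh; push Not at hh; exact hc2 ⟨hx, hh⟩
    rw [mem_closedBall_zero_iff] at hxB
    have hg := h2 x hxT (by linarith)
    have hnb : Metric.closedBall (0 : EE n) (1 - δ / 2) ∈ nhds x :=
      Filter.mem_of_superset (Metric.isOpen_ball.mem_nhds (x := x) (by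
        rw [mem_ball_zero_iff]; linarith : x ∈ Metric.ball (0 : EE n) (1 - δ / 2)))
        Metric.ball_subset_closedBall
    have hpsd := Tch_psd hxT hnb (hS.uC.contDiffAt (Metric.isOpen_ball.mem_nhds hx))
    have htr := PL.trace (hf x hx) ha0.le hpsd
    have htr0 : 0 ≤ (hess n u x + a • 1).trace := hpsd.trace_nonneg
    have h3 : b x * ‖fderiv ℝ u x‖ ≤ 2 ^ k * (a / 2 ^ k) :=
      mul_le_mul hbx hg (norm_nonneg _) (by positivity)
    have h4 : (2:ℝ) ^ k * (a / 2 ^ k) = a := mul_div_cancel₀ _ (by positivity)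
    have h5 : 0 ≤ lam * (hess n u x + a • 1).trace := by positivity
    nlinarith
  have hbn : NB n b (Metric.ball 0 1) K1 := by simpa using hS.bN 0 1 one_pos
  have hch := cheb hS.bm hbn hK (by positivity : (0:ℝ) < 2 ^ k)
  have hsh := shell (n := n) hn hδ0 (by linarith)
  refine (measure_mono hsub).trans ((measure_union_le _ _).trans
    ((add_le_add ((measure_union_le _ _).trans (add_le_add h1 hch)) hsh).trans ?_))
  rw [← ENNReal.ofReal_add (by positivity) (by positivity),
    ← ENNReal.ofReal_add (by positivity) (by positivity)]
  apply ENNReal.ofReal_le_ofReal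
  rw [add_mul, add_mul]
  have hpow : μ ^ k ≤ μ' ^ k := pow_le_pow_left₀ hμ.le hμμ' k
  refine add_le_add (add_le_add ?_ ?_) ?_
  · gcongr
  · rw [div_pow, div_eq_mul_inv]
    gcongr
    calc (((2:ℝ) ^ k) ^ n)⁻¹ = ((1 / 2) ^ k) ^ n := by rw [div_pow, one_pow, div_pow, one_pow, one_div]
      _ ≤ (1 / 2) ^ k :=
        pow_le_of_le_one (by positivity) (pow_le_one₀ (by norm_num) (by norm_num)) (by omega)
      _ ≤ μ' ^ k := pow_le_pow_left₀ (by norm_num) hhμ' k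
  · rw [hδ, ← mul_assoc]
    gcongr

set_option maxHeartbeats 1000000 in
theorem main_aux (hn : 2 ≤ n) (hlam : 0 < lam) (hLam : lam ≤ Lam)
    (p q d0 K : ℝ) (hq : (n : ℝ) < q) (hp : (n : ℝ) ≤ p)
    (hd0 : 0 < d0) (hd0' : d0 ≤ 1 / 4) (hK : 0 < K) :
    ∃ ε C3 C : ℝ, 0 < ε ∧ 0 < C3 ∧ 0 < C ∧
      ∀ b f u : EE n → ℝ,
        ContinuousOn b (Metric.ball 0 1) →
        ContinuousOn f (Metric.ball 0 1) →
        (∀ x ∈ Metric.ball (0 : EE n) 1, 0 ≤ b x) →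
        LpNormE n q b (Metric.ball 0 1) ≤ ENNReal.ofReal K →
        ContDiffOn ℝ 2 u (Metric.ball 0 1) →
        (∀ x ∈ Metric.ball (0 : EE n) 1, 0 ≤ u x) →
        (∀ x ∈ Metric.ball (0 : EE n) 1,
          pucciMinus n lam Lam (hess n u x) - b x * gradNorm n u x ≤ f x) →
        ∀ (τ Hp Hq : ℝ) (x0 : EE n), 0 < τ → 0 ≤ Hp → 0 ≤ Hq → ‖x0‖ < 1 → u x0 < τ * (1 - ‖x0‖) →
          LpNormE n p (fun x => max (f x) 0) (Metric.ball 0 1) ≤ ENNReal.ofReal Hp →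
          LpNormE n q (fun x => max (f x) 0)
                    {x ∈ Metric.ball (0 : EE n) 1 | 1 - ‖x‖ < d0} ≤ ENNReal.ofReal Hq →
          C * (Hp + Hq) ≤ τ →
          ∫⁻ x in Metric.ball (0 : EE n) 1,
              ENNReal.ofReal ((max (-f x) 0) ^ ε) ≤ ENNReal.ofReal (C3 * τ ^ ε) := by
  have hn1 : 1 ≤ n := by omega
  have hn0 : (0:ℝ) < n := by exact_mod_cast hn1
  have hom : 0 < om n := om_pos
  have hq0 : 0 < q := by linarith
  have hp0 : 0 < p := by linarith
  set α := 1 - n / q with hα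
  have hα0 : 0 < α := by
    have : (n:ℝ) / q < 1 := (div_lt_one hq0).2 hq
    linarith
  have hα1 : α ≤ 1 := by
    have : 0 ≤ (n:ℝ) / q := by positivity
    linarith
  set K1 := K * om n ^ α with hK1
  have hK10 : 0 ≤ K1 := by positivity
  obtain ⟨r1, hr1, hr18, hopf⟩ := hopf (n := n) hn1 hlam hLam K1 α d0 hα0 hα1 hK10 hd0 hd0'
  obtain ⟨δ, hδ, γ, hsmall⟩ := smallpt (n := n) hn1 hlam hLam
  obtain ⟨δ1, hδ1, hδ1'⟩ := small_rpow hα0 hK10 hδ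
  set r0 := min (min (δ1 / 40) (r1 / 80)) (1 / 140) with hr0
  have hr00 : 0 < r0 := by rw [hr0]; positivity
  have hr0a : r0 ≤ δ1 / 40 := (min_le_left _ _).trans (min_le_left _ _)
  have hr0b : r0 ≤ r1 / 80 := (min_le_left _ _).trans (min_le_right _ _)
  have hr0c : r0 ≤ 1 / 140 := min_le_right _ _
  clear_value r0
  obtain ⟨CP, hCP, hsmall⟩ := hsmall r0 1 1 hr00 hr0c one_pos one_pos
  obtain ⟨L, C1, C2, μ, hL1, hC1, hC2, hμ, hμ1, hdist⟩ :=
    distrib (n := n) hn1 hlam hLam K1 α r0 CP 1 γ hα0 hK10 hr00 hCP one_pos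
  obtain ⟨ε, C3, hε, hC3, hlayer⟩ := layer (n := n) hL1 hμ hμ1 hC1 hC2 (V := om n ^ n) (by positivity)
  refine ⟨ε, C3, om n ^ α + om n ^ (1 - n / p), hε, hC3, by positivity, ?_⟩
  intro b f u hb hf hb0 hbK hu hu0 hpde τ Hp Hq x0 hτ hHp hHq hx0 hux0 hfp hfq hC
  set B := Metric.ball (0 : EE n) 1 with hB
  have hBo : IsOpen B := Metric.isOpen_ball
  set b' := B.indicator b with hb'
  set f' := B.indicator f with hf'
  set h' := B.indicator (fun x => max (f x) 0) with hh'
  have hb'm : Measurable b' := meas_ind hBo hb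
  have hf'm : Measurable f' := meas_ind hBo hf
  have hh'm : Measurable h' := meas_ind hBo (hf.sup continuousOn_const)
  have hb'0 : ∀ x, 0 ≤ b' x := fun x => Set.indicator_nonneg hb0 x
  have hh'0 : ∀ x, 0 ≤ h' x := fun x => Set.indicator_nonneg (fun x _ => le_max_right _ _) x
  have hvol : ∀ (x : EE n) (r : ℝ), 0 < r → volume (Metric.ball x r) ≤ ENNReal.ofReal (om n * r) ^ n :=
    fun x r hr => (vol_ball hn1 x hr.le).le
  have hbN : ∀ (x : EE n) (r : ℝ), 0 < r → NB n b' (Metric.ball x r) (K1 * r ^ α) := by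
    intro x r hr
    have h1 := NB_of_Lp (q := q) hn1 hb'm hb'0 hq.le (by positivity) (hvol x r hr) hK.le
      ((LpNormE_mono hq0 hBo.measurableSet (fun z => by
        by_cases hz : z ∈ Metric.ball x r <;> simp [hz, hb']) Metric.isOpen_ball.measurableSet).trans hbK)
    rw [← hα, Real.mul_rpow hom.le hr.le, ← mul_assoc] at h1
    exact h1
  have hssf : ∀ x ∈ B, SS n lam Lam b' f' u x := by
    intro x hx
    refine PL_of_pucci hLam ?_
    have := hpde x hx
    simp only [hb', hf', Set.indicator_of_mem hx]
    unfold gradNorm at this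
    linarith
  have hS : Sup n lam Lam K1 α b' h' u := by
    refine ⟨hb'm, hh'm, hb'0, hh'0, hbN, hu, hu0, ?_⟩
    intro x hx
    refine PL.mono (hssf x hx) ?_
    simp only [hf', hh', Set.indicator_of_mem hx]
    gcongr
    exact le_max_left _ _
  have hNB1 : NB n h' B (1 * τ) := by
    have h1 := NB_of_Lp (q := p) hn1 hh'm hh'0 hp (by positivity) (hvol 0 1 one_pos) hHp
      ((LpNormE_mono hp0 hBo.measurableSet (fun z => by
        by_cases hz : z ∈ Metric.ball (0 : EE n) 1 <;> simp [hz, hh', hB]) Metric.isOpen_ball.measurableSet).trans hfp)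
    refine h1.mono ?_
    have h2 : 0 ≤ om n ^ α * (Hp + Hq) := by positivity
    have h3 : 0 ≤ om n ^ (1 - n / p) * Hq := by positivity
    rw [mul_one]
    nlinarith
  have hSm : MeasurableSet {x ∈ B | 1 - ‖x‖ < d0} :=
    hBo.measurableSet.inter (measurableSet_lt (measurable_const.sub measurable_norm) measurable_const)
  have hNB2 : ∀ (x : EE n) (r : ℝ), 0 < r → r ≤ 1 →
      (∀ z ∈ Metric.ball x r, 1 - d0 < ‖z‖ ∧ ‖z‖ < 1) → NB n h' (Metric.ball x r) (τ * r ^ α) := by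
    intro x r hr _ hsub
    have h1 := NB_of_Lp (q := q) hn1 hh'm hh'0 hq.le (by positivity) (hvol x r hr) hHq
      ((LpNormE_mono hq0 hSm (fun z => by
        by_cases hz : z ∈ Metric.ball x r
        · have h1 := hsub z hz
          have h2 : z ∈ B := by rw [hB, mem_ball_zero_iff]; exact h1.2
          have h3 : z ∈ {x ∈ B | 1 - ‖x‖ < d0} := ⟨h2, by linarith⟩
          rw [Set.indicator_of_mem hz, Set.indicator_of_mem h3, hh', Set.indicator_of_mem h2]
        · rw [Set.indicator_of_notMem hz, abs_zero]; positivity) Metric.isOpen_ball.measurableSet).trans hfq)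
    refine h1.mono ?_
    rw [← hα, Real.mul_rpow hom.le hr.le, ← mul_assoc]
    gcongr
    have h2 : 0 ≤ om n ^ α * Hp := by positivity
    have h3 : 0 ≤ om n ^ (1 - n / p) * (Hp + Hq) := by positivity
    nlinarith
  -- a point with small value, away from the boundary
  obtain ⟨x1, hx1, hux1⟩ : ∃ x1 : EE n, ‖x1‖ ≤ 1 - r1 ∧ u x1 ≤ τ := by
    by_cases hx0r : ‖x0‖ ≤ 1 - r1
    · refine ⟨x0, hx0r, hux0.le.trans ?_⟩
      have := norm_nonneg x0
      nlinarith
    · by_contra hc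
      push Not at hc hx0r
      have := hopf b' h' u τ τ hS hτ hNB2 (by nlinarith) (fun x hx => (hc x hx).le) x0 hx0
        (by linarith)
      linarith
  have hPP : PP n u r0 CP τ γ :=
    hsmall K1 α τ b' h' u hα0 hK10 hS (hδ1' _ (by positivity) (by linarith)) hτ hNB1
      ⟨x1, by linarith, by linarith⟩
  have hdist' := hdist b' h' u f' τ hS hτ hNB1 hPP hssf
  have hlay := hlayer (fun x => max (-f' x) 0) B τ (by fun_prop) hBo.measurableSet
    (fun x => le_max_right _ _) hτ (by
      rw [hB, vol_ball hn1 _ zero_le_one, mul_one, ENNReal.ofReal_pow hom.le]) (fun k => by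
      refine le_trans (measure_mono ?_) (hdist' k)
      rintro x ⟨hx, hx2⟩
      refine ⟨hx, ?_⟩
      have hpos : 0 < C1 * τ * L ^ k := by positivity
      rcases lt_max_iff.1 hx2 with h | h
      · exact h
      · linarith)
  refine le_trans (le_of_eq ?_) hlay
  refine setLIntegral_congr_fun hBo.measurableSet fun x hx => ?_
  simp only [hf', Set.indicator_of_mem hx]

end QSMP

/-- Quantitative strong maximum principle with right-hand side, in the unit ball. -/
theorem quantitative_strong_maximum_principle_with_rhs
    (n : ℕ) (hn : 2 ≤ n) (lam Lam : ℝ) (hlam : 0 < lam) (hLam : lam ≤ Lam)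
    (p q d0 K : ℝ) (hq : (n : ℝ) < q) (hp : (n : ℝ) ≤ p) (hpq : p ≤ q)
    (hd0 : 0 < d0) (hd0' : d0 ≤ 1 / 4) (hK : 0 < K) :
    ∃ ε c C : ℝ, 0 < ε ∧ 0 < c ∧ 0 < C ∧
      ∀ b f u : EuclideanSpace ℝ (Fin n) → ℝ,
        ContinuousOn b (Metric.ball 0 1) →
        ContinuousOn f (Metric.ball 0 1) →
        (∀ x ∈ Metric.ball (0 : EuclideanSpace ℝ (Fin n)) 1, 0 ≤ b x) →
        LpNormE n q b (Metric.ball 0 1) ≤ ENNReal.ofReal K →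
        ContDiffOn ℝ 2 u (Metric.ball 0 1) →
        (∀ x ∈ Metric.ball (0 : EuclideanSpace ℝ (Fin n)) 1, 0 ≤ u x) →
        (∀ x ∈ Metric.ball (0 : EuclideanSpace ℝ (Fin n)) 1,
          pucciMinus n lam Lam (hess n u x) - b x * gradNorm n u x ≤ f x) →
        ENNReal.ofReal c *
            (∫⁻ x in Metric.ball (0 : EuclideanSpace ℝ (Fin n)) 1,
              ENNReal.ofReal ((max (-f x) 0) ^ ε)) ^ (1 / ε)
          ≤ ENNReal.ofReal
              (⨅ x : Metric.ball (0 : EuclideanSpace ℝ (Fin n)) 1, u x.1 / (1 - ‖x.1‖))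
            + ENNReal.ofReal C *
              (LpNormE n p (fun x => max (f x) 0) (Metric.ball 0 1)
                + LpNormE n q (fun x => max (f x) 0)
                    {x ∈ Metric.ball (0 : EuclideanSpace ℝ (Fin n)) 1 | 1 - ‖x‖ < d0}) := by
  obtain ⟨ε, C3, C, hε, hC3, hC, H⟩ :=
    QSMP.main_aux (n := n) hn hlam hLam p q d0 K hq hp hd0 hd0' hK
  refine ⟨ε, (C3 ^ (1 / ε))⁻¹, C, hε, by positivity, hC, ?_⟩
  intro b f u hb hf hb0 hbK hu hu0 hpde
  set I := ⨅ x : Metric.ball (0 : EuclideanSpace ℝ (Fin n)) 1, u x.1 / (1 - ‖x.1‖) with hI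
  set P := LpNormE n p (fun x => max (f x) 0) (Metric.ball 0 1) with hP
  set Q := LpNormE n q (fun x => max (f x) 0)
    {x ∈ Metric.ball (0 : EuclideanSpace ℝ (Fin n)) 1 | 1 - ‖x‖ < d0} with hQ
  have hne : Nonempty (Metric.ball (0 : EuclideanSpace ℝ (Fin n)) 1) :=
    ⟨⟨0, Metric.mem_ball_self one_pos⟩⟩
  have hI0 : 0 ≤ I := by
    refine le_ciInf fun x => ?_
    have := mem_ball_zero_iff.1 x.2
    exact div_nonneg (hu0 _ x.2) (by linarith)
  by_cases hfin : P + Q = ⊤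
  · rw [hfin, ENNReal.mul_top (by simpa using hC)]; simp
  have hPf : P ≠ ⊤ := fun h => hfin (by simp [h])
  have hQf : Q ≠ ⊤ := fun h => hfin (by simp [h])
  have hRHS : ENNReal.ofReal I + ENNReal.ofReal C * (P + Q)
      = ENNReal.ofReal (I + C * (P.toReal + Q.toReal)) := by
    rw [ENNReal.ofReal_add hI0 (by positivity), ENNReal.ofReal_mul hC.le,
      ENNReal.ofReal_add ENNReal.toReal_nonneg ENNReal.toReal_nonneg, ENNReal.ofReal_toReal hPf,
      ENNReal.ofReal_toReal hQf]
  rw [hRHS]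
  refine ENNReal.le_of_forall_pos_le_add fun η hη _ => ?_
  have hη' : (0:ℝ) < η := hη
  set τ := I + C * (P.toReal + Q.toReal) + η with hτ
  have hPQ : 0 ≤ C * (P.toReal + Q.toReal) := by positivity
  have hτ0 : 0 < τ := by linarith
  obtain ⟨x0, hx0⟩ := exists_lt_of_ciInf_lt (show I < τ by linarith)
  have hx0n := mem_ball_zero_iff.1 x0.2
  rw [div_lt_iff₀ (by linarith)] at hx0
  have h1 := H b f u hb hf hb0 hbK hu hu0 hpde τ P.toReal Q.toReal x0.1 hτ0 ENNReal.toReal_nonneg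
    ENNReal.toReal_nonneg hx0n hx0 (by rw [ENNReal.ofReal_toReal hPf])
    (by rw [ENNReal.ofReal_toReal hQf]) (by linarith)
  have h2 := ENNReal.rpow_le_rpow h1 (by positivity : 0 ≤ 1 / ε)
  rw [ENNReal.ofReal_rpow_of_nonneg (by positivity) (by positivity),
    Real.mul_rpow hC3.le (by positivity), ← Real.rpow_mul hτ0.le, mul_one_div_cancel hε.ne',
    Real.rpow_one] at h2
  calc _ ≤ ENNReal.ofReal (C3 ^ (1 / ε))⁻¹ * ENNReal.ofReal (C3 ^ (1 / ε) * τ) := mul_le_mul' le_rfl h2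
    _ = ENNReal.ofReal τ := by
        rw [← ENNReal.ofReal_mul (by positivity), inv_mul_cancel_left₀ (by positivity)]
    _ = _ := by
        rw [hτ, ENNReal.ofReal_add (by positivity) hη'.le, ENNReal.ofReal_coe_nnreal]
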